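/- Let h ≥ 2 be an integer and let N_h(x) denote the set of h-full ideals of O_K with norm at most x. Then for every γ ∈ ℝ, lim_{x → ∞} (1/|N_h(x)|) · |{m ∈ N_h(x) : N(m) ≥ 3, (ω(m) − log log N(m)) / √(log log N(m)) ≤ γ}| = Φ(γ). -/

import Mathlib

open Filter MeasureTheory Topology
open scoped BigOperators

noncomputable section

variable (K : Type) [Field K] [NumberField K]

/-- The standard Gaussian distribution function Φ. -/
def gaussPhi (γ : ℝ) : ℝ :=
  (Real.sqrt (2 * Real.pi))⁻¹ * ∫ u in Set.Iic γ, Real.exp (-u ^ 2 / 2)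

/-- Number of distinct prime ideal divisors of an ideal. -/
def omegaI (m : Ideal (NumberField.RingOfIntegers K)) : ℕ :=
  Nat.card {p : Ideal (NumberField.RingOfIntegers K) // p.IsPrime ∧ p ∣ m}

/-- `m` is an `h`-full ideal: every prime ideal dividing `m` divides it to order at least `h`. -/
def IsHFull (h : ℕ) (m : Ideal (NumberField.RingOfIntegers K)) : Prop :=
  m ≠ 0 ∧ ∀ p : Ideal (NumberField.RingOfIntegers K), p.IsPrime → p ∣ m → p ^ h ∣ m

section PartOne

open NumberField

variable {K} in
/-- The real-valued norm of an ideal. -/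
abbrev nr (I : Ideal (𝓞 K)) : ℝ := (Ideal.absNorm I : ℝ)

lemma finite_idl (x : ℝ) : {I : Ideal (𝓞 K) | I ≠ ⊥ ∧ nr I ≤ x}.Finite := by
  refine (Ideal.finite_setOfPred_absNorm_le ⌊x⌋₊).subset ?_
  rintro I ⟨h0, h⟩
  exact Nat.le_floor h

/-- Nonzero ideals of norm at most `x`. -/
def idl (x : ℝ) : Finset (Ideal (𝓞 K)) := (finite_idl K x).toFinset

variable {K} in
@[simp] lemma mem_idl {x : ℝ} {I : Ideal (𝓞 K)} : I ∈ idl K x ↔ I ≠ ⊥ ∧ nr I ≤ x := by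
  simp [idl]

open Classical in
/-- Nonzero prime ideals of norm at most `x`. -/
def prm (x : ℝ) : Finset (Ideal (𝓞 K)) := (idl K x).filter (fun p => p.IsPrime)

variable {K} in
lemma mem_prm {x : ℝ} {p : Ideal (𝓞 K)} : p ∈ prm K x ↔ p ≠ ⊥ ∧ nr p ≤ x ∧ p.IsPrime := by
  simp [prm, and_assoc]

variable {K} in
lemma nr_pos {I : Ideal (𝓞 K)} (h : I ≠ ⊥) : 0 < nr I := by
  have := Ideal.absNorm_ne_zero_of_nonZeroDivisors ⟨I, mem_nonZeroDivisors_of_ne_zero h⟩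
  exact_mod_cast Nat.pos_of_ne_zero this

variable {K} in
lemma one_le_nr {I : Ideal (𝓞 K)} (h : I ≠ ⊥) : 1 ≤ nr I := by
  have := nr_pos h
  exact_mod_cast (Nat.cast_pos.1 this : 0 < Ideal.absNorm I)

variable {K} in
lemma two_le_nr {p : Ideal (𝓞 K)} (h : p ≠ ⊥) (hp : p.IsPrime) : 2 ≤ nr p := by
  have h1 := nr_pos h
  have h2 : Ideal.absNorm p ≠ 1 := by
    rw [Ne, Ideal.absNorm_eq_one_iff]; exact hp.ne_top
  have h3 : 0 < Ideal.absNorm p := Nat.cast_pos.1 h1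
  have : 2 ≤ Ideal.absNorm p := by omega
  exact_mod_cast this

lemma card_idl_eq (x : ℝ) : (idl K x).card =
    Nat.card {I : nonZeroDivisors (Ideal (𝓞 K)) // (Ideal.absNorm (I : Ideal (𝓞 K)) : ℝ) ≤ x} := by
  rw [← Fintype.card_coe, ← Nat.card_eq_fintype_card]
  refine Nat.card_congr ⟨fun I => ⟨⟨I.1, mem_nonZeroDivisors_of_ne_zero (mem_idl.1 I.2).1⟩,
    (mem_idl.1 I.2).2⟩, fun I => ⟨I.1.1, mem_idl.2 ⟨nonZeroDivisors.ne_zero I.1.2, I.2⟩⟩,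
    fun I => rfl, fun I => rfl⟩

lemma tendsto_card_idl : ∃ ρ : ℝ, 0 < ρ ∧
    Tendsto (fun x : ℝ => ((idl K x).card : ℝ) / x) atTop (𝓝 ρ) := by
  refine ⟨_, dedekindZeta_residue_pos K, ?_⟩
  rw [dedekindZeta_residue_def]
  refine (NumberField.Ideal.tendsto_norm_le_div_atTop₀ K).congr fun x => ?_
  rw [card_idl_eq]

lemma card_idl_bounds : ∃ c C : ℝ, 0 < c ∧ 0 < C ∧ ∀ x : ℝ, 1 ≤ x →
    c * x ≤ (idl K x).card ∧ ((idl K x).card : ℝ) ≤ C * x := by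
  obtain ⟨ρ, hρ, h⟩ := tendsto_card_idl K
  have h1 := h.eventually (Ioo_mem_nhds (show ρ / 2 < ρ by linarith) (show ρ < 2 * ρ by linarith))
  obtain ⟨X, hX⟩ := eventually_atTop.1 h1
  have mono : ∀ x y : ℝ, x ≤ y → (idl K x).card ≤ (idl K y).card := fun x y hxy =>
    Finset.card_le_card fun I hI => by
      rw [mem_idl] at *; exact ⟨hI.1, hI.2.trans hxy⟩
  set Y := max X 1
  have hY1 : 1 ≤ Y := le_max_right _ _
  have hone : ∀ x : ℝ, 1 ≤ x → 1 ≤ (idl K x).card := fun x hx => by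
    refine Finset.card_pos.2 ⟨⊤, ?_⟩
    rw [mem_idl]
    refine ⟨top_ne_bot, ?_⟩
    simpa [nr] using hx
  refine ⟨min (ρ / 2) (1 / Y), 2 * ρ + (idl K Y).card, by positivity, by positivity, fun x hx => ?_⟩
  have hx0 : 0 < x := by linarith
  rcases le_total Y x with hYx | hYx
  · have := hX x ((le_max_left _ _).trans hYx)
    rw [lt_div_iff₀ hx0, div_lt_iff₀ hx0] at this
    refine ⟨le_trans ?_ this.1.le, this.2.le.trans ?_⟩
    · gcongr; exact min_le_left _ _
    · gcongr; simp
  · constructor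
    · calc _ ≤ 1 / Y * Y := by gcongr; exact min_le_right _ _
        _ = 1 := by field_simp
        _ ≤ _ := by exact_mod_cast hone x hx
    · calc ((idl K x).card : ℝ) ≤ (idl K Y).card := by exact_mod_cast mono _ _ hYx
        _ ≤ (idl K Y).card * x := le_mul_of_one_le_right (by positivity) hx
        _ ≤ _ := by gcongr; linarith

end PartOne

section PartTwo

open NumberField

lemma sum_nr_rpow_le : ∃ C : ℝ, 0 < C ∧ ∀ s : ℝ, 1 < s → s ≤ 2 →
    ∀ F : Finset (Ideal (𝓞 K)), (∀ I ∈ F, I ≠ ⊥) → ∑ I ∈ F, nr I ^ (-s) ≤ C / (s - 1) := by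
  obtain ⟨c, C, hc, hC, hA⟩ := card_idl_bounds K
  refine ⟨6 * C, by positivity, fun s hs1 hs2 F hF => ?_⟩
  set k : Ideal (𝓞 K) → ℕ := fun I => Nat.log 2 (Ideal.absNorm I) with hk
  obtain ⟨M, hM⟩ : ∃ M, ∀ I ∈ F, k I < M := by
    refine ⟨F.sup k + 1, fun I hI => Nat.lt_succ_of_le (Finset.le_sup hI)⟩
  set q : ℝ := 2 ^ (1 - s) with hq
  have hq0 : 0 < q := by positivity
  have hq1 : 1 - q ≥ (s - 1) / 3 := by
    set u := s - 1 with hu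
    have hu0 : 0 < u := by simp [hu]; linarith
    have h1 : 1 + u / 2 ≤ 2 ^ u := by
      rw [Real.rpow_def_of_pos (by norm_num)]
      have := Real.add_one_le_exp (Real.log 2 * u)
      have := Real.log_two_gt_d9
      nlinarith
    have h2 : q = (2 ^ u)⁻¹ := by rw [hq, ← Real.rpow_neg (by norm_num)]; congr 1; simp [hu]
    have h3 : q ≤ (1 + u / 2)⁻¹ := by rw [h2]; gcongr
    have h4 : (1 + u / 2)⁻¹ ≤ 1 - u / 3 := by
      rw [inv_le_iff_one_le_mul₀ (by positivity)]
      nlinarith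
    linarith
  calc ∑ I ∈ F, nr I ^ (-s) = ∑ j ∈ Finset.range M, ∑ I ∈ F with k I = j, nr I ^ (-s) := by
        rw [Finset.sum_fiberwise_of_maps_to]
        intro I hI; simpa using hM I hI
    _ ≤ ∑ j ∈ Finset.range M, 2 * C * q ^ j := by
        refine Finset.sum_le_sum fun j _ => ?_
        have h1 : ∀ I ∈ F.filter (fun I => k I = j), nr I ^ (-s) ≤ ((2 : ℝ) ^ j) ^ (-s) := by
          intro I hI
          rw [Finset.mem_filter] at hI
          have hn : Ideal.absNorm I ≠ 0 := by
            have := nr_pos (hF I hI.1); exact_mod_cast this.ne'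
          have : 2 ^ j ≤ Ideal.absNorm I := by rw [← hI.2]; exact Nat.pow_log_le_self 2 hn
          have : (2 : ℝ) ^ j ≤ nr I := by exact_mod_cast this
          exact Real.rpow_le_rpow_of_nonpos (by positivity) this (by linarith)
        have h2 : ((F.filter (fun I => k I = j)).card : ℝ) ≤ C * 2 ^ (j + 1) := by
          refine le_trans ?_ (hA (2 ^ (j + 1)) (one_le_pow₀ (by norm_num))).2
          norm_cast
          refine Finset.card_le_card fun I hI => ?_
          rw [Finset.mem_filter] at hI
          rw [mem_idl]
          refine ⟨hF I hI.1, ?_⟩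
          have : Ideal.absNorm I < 2 ^ (j + 1) := by
            rw [← hI.2]; exact Nat.lt_pow_succ_log_self (by norm_num) _
          exact_mod_cast this.le
        calc _ ≤ ((F.filter (fun I => k I = j)).card : ℝ) * ((2 : ℝ) ^ j) ^ (-s) := by
              rw [← nsmul_eq_mul]; exact Finset.sum_le_card_nsmul _ _ _ h1
          _ ≤ C * 2 ^ (j + 1) * ((2 : ℝ) ^ j) ^ (-s) := by gcongr
          _ = 2 * C * q ^ j := by
              rw [hq, ← Real.rpow_natCast, ← Real.rpow_natCast, ← Real.rpow_mul (by norm_num),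
                ← Real.rpow_natCast, ← Real.rpow_mul (by norm_num)]
              have : (2 : ℝ) ^ ((1 - s) * j) = 2 ^ (j : ℝ) * 2 ^ ((j : ℝ) * -s) := by
                rw [← Real.rpow_add (by norm_num)]; ring_nf
              rw [this]
              push_cast
              rw [Real.rpow_add (by norm_num)]
              simp; ring
    _ ≤ 2 * C * (1 - q)⁻¹ := by
        rw [← Finset.mul_sum]
        gcongr
        have hlt : q < 1 := by linarith
        rw [← tsum_geometric_of_lt_one hq0.le hlt]
        exact (summable_geometric_of_lt_one hq0.le hlt).sum_le_tsum _ (fun _ _ => by positivity)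
    _ ≤ 2 * C * ((s - 1) / 3)⁻¹ := by
        have : 0 < (s - 1) / 3 := by linarith
        gcongr
    _ = 6 * C / (s - 1) := by field_simp; norm_num

lemma sum_prime_sq_le : ∃ C : ℝ, 0 < C ∧ ∀ F : Finset (Ideal (𝓞 K)), (∀ I ∈ F, I ≠ ⊥) →
    ∑ I ∈ F, (nr I ^ 2)⁻¹ ≤ C := by
  obtain ⟨C, hC, h⟩ := sum_nr_rpow_le K
  refine ⟨C, hC, fun F hF => ?_⟩
  have := h 2 (by norm_num) le_rfl F hF
  norm_num at this
  convert this using 2 with I hI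

variable {K}

lemma prod_dvd_of_primes {T : Finset (Ideal (𝓞 K))} {m : Ideal (𝓞 K)}
    (hT : ∀ p ∈ T, p ≠ ⊥ ∧ p.IsPrime) (h : ∀ p ∈ T, p ∣ m) : ∏ p ∈ T, p ∣ m :=
  Finset.prod_primes_dvd m (fun p hp => (Ideal.prime_iff_isPrime (hT p hp).1).2 (hT p hp).2) h

lemma nr_prod (T : Finset (Ideal (𝓞 K))) : nr (∏ p ∈ T, p) = ∏ p ∈ T, nr p := by
  simp [nr]

lemma nr_mul (a b : Ideal (𝓞 K)) : nr (a * b) = nr a * nr b := by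
  simp [nr]

lemma nr_le_of_dvd {a b : Ideal (𝓞 K)} (h : a ∣ b) (hb : b ≠ ⊥) : nr a ≤ nr b := by
  obtain ⟨c, rfl⟩ := h
  rw [nr_mul]
  have : c ≠ ⊥ := fun h => hb (by rw [h]; simp)
  exact le_mul_of_one_le_right (by positivity) (one_le_nr this)

lemma ne_bot_of_dvd {a b : Ideal (𝓞 K)} (h : a ∣ b) (hb : b ≠ ⊥) : a ≠ ⊥ := by
  rintro rfl; exact hb (zero_dvd_iff.1 h)

lemma prod_ne_bot {T : Finset (Ideal (𝓞 K))} (hT : ∀ p ∈ T, p ≠ ⊥ ∧ p.IsPrime) :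
    ∏ p ∈ T, p ≠ ⊥ := Finset.prod_ne_zero_iff.2 fun p hp => (hT p hp).1

lemma prime_dvd_prod {T : Finset (Ideal (𝓞 K))} (hT : ∀ p ∈ T, p ≠ ⊥ ∧ p.IsPrime)
    {q : Ideal (𝓞 K)} (hq : q ≠ ⊥ ∧ q.IsPrime) (h : q ∣ ∏ p ∈ T, p) : q ∈ T := by
  have hq' := (Ideal.prime_iff_isPrime hq.1).2 hq.2
  obtain ⟨p, hp, hpq⟩ := (Prime.dvd_finsetProd_iff hq' _).1 h
  have hp' := (Ideal.prime_iff_isPrime (hT p hp).1).2 (hT p hp).2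
  have : q = p := associated_iff_eq.1 ((hq'.dvd_prime_iff_associated hp').1 hpq)
  rwa [this]

lemma prod_primes_inj {T S : Finset (Ideal (𝓞 K))} (hT : ∀ p ∈ T, p ≠ ⊥ ∧ p.IsPrime)
    (hS : ∀ p ∈ S, p ≠ ⊥ ∧ p.IsPrime) (h : ∏ p ∈ T, p = ∏ p ∈ S, p) : T = S := by
  ext q
  constructor
  · intro hq
    exact prime_dvd_prod hS (hT q hq) (h ▸ Finset.dvd_prod_of_mem _ hq)
  · intro hq
    exact prime_dvd_prod hT (hS q hq) (h ▸ Finset.dvd_prod_of_mem _ hq)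

lemma prm_prop {x : ℝ} : ∀ p ∈ prm K x, p ≠ ⊥ ∧ p.IsPrime := fun p hp =>
  ⟨(mem_prm.1 hp).1, (mem_prm.1 hp).2.2⟩

variable (K)

open Classical in
lemma card_dvd_idl {d : Ideal (𝓞 K)} (hd : d ≠ ⊥) (x : ℝ) :
    (idl K (x / nr d)).card ≤ ((idl K x).filter (fun m => d ∣ m)).card := by
  refine Finset.card_le_card_of_injOn (fun a => d * a) ?_ ?_
  · intro a ha
    simp only [Finset.mem_coe, mem_idl, Finset.mem_filter] at ha ⊢
    refine ⟨⟨mul_ne_zero hd ha.1, ?_⟩, dvd_mul_right _ _⟩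
    rw [nr_mul, mul_comm, ← le_div_iff₀ (nr_pos hd)]
    exact ha.2
  · intro a _ b _ h
    exact mul_left_cancel₀ hd h

lemma chebyshev_log : ∃ C : ℝ, 0 < C ∧ ∀ x : ℝ, 2 ≤ x →
    ∑ p ∈ prm K x, Real.log (nr p) / nr p ≤ C * Real.log x := by
  classical
  obtain ⟨c, C, hc, hC, hA⟩ := card_idl_bounds K
  refine ⟨C / c, by positivity, fun x hx => ?_⟩
  have hx0 : 0 < x := by linarith
  have key : ∑ p ∈ prm K x, Real.log (nr p) * (c * (x / nr p)) ≤ C * x * Real.log x := by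
    calc _ ≤ ∑ p ∈ prm K x, Real.log (nr p) * ((idl K x).filter (fun m => p ∣ m)).card := by
          refine Finset.sum_le_sum fun p hp => ?_
          have hp' := mem_prm.1 hp
          have := one_le_nr hp'.1
          have hl := Real.log_nonneg this
          gcongr
          refine (hA (x / nr p) ?_).1.trans ?_
          · rw [one_le_div (by linarith)]; exact hp'.2.1
          · exact_mod_cast card_dvd_idl K hp'.1 x
      _ = ∑ m ∈ idl K x, ∑ p ∈ prm K x with p ∣ m, Real.log (nr p) := by
          simp_rw [Finset.card_filter, Nat.cast_sum, Finset.mul_sum]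
          rw [Finset.sum_comm]
          refine Finset.sum_congr rfl fun m hm => ?_
          rw [Finset.sum_filter]
          refine Finset.sum_congr rfl fun p hp => ?_
          split_ifs <;> simp
      _ ≤ ∑ m ∈ idl K x, Real.log x := by
          refine Finset.sum_le_sum fun m hm => ?_
          rw [mem_idl] at hm
          have h1 : ∀ p ∈ (prm K x).filter (fun p => p ∣ m), p ≠ ⊥ ∧ p.IsPrime := fun p hp =>
            prm_prop p (Finset.mem_filter.1 hp).1
          rw [← Real.log_prod (fun p hp => (nr_pos (h1 p hp).1).ne'), ← nr_prod]
          refine Real.log_le_log (nr_pos (prod_ne_bot h1)) ?_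
          refine (nr_le_of_dvd (prod_dvd_of_primes h1 fun p hp => (Finset.mem_filter.1 hp).2) hm.1).trans hm.2
      _ ≤ C * x * Real.log x := by
          rw [Finset.sum_const, nsmul_eq_mul]
          have := Real.log_nonneg (show (1 : ℝ) ≤ x by linarith)
          gcongr
          exact (hA x (by linarith)).2
  have e : ∑ p ∈ prm K x, Real.log (nr p) * (c * (x / nr p)) =
      (c * x) * ∑ p ∈ prm K x, Real.log (nr p) / nr p := by
    rw [Finset.mul_sum]; refine Finset.sum_congr rfl fun p _ => ?_; ring
  rw [e] at key
  have hcx : 0 < c * x := by positivity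
  rw [← le_div_iff₀' hcx] at key
  refine key.trans_eq ?_
  field_simp

/-- Sum of reciprocals of norms of primes. -/
def recSum (x : ℝ) : ℝ := ∑ p ∈ prm K x, (nr p)⁻¹

lemma prod_one_add_primes (x : ℝ) (f : ℝ → ℝ) (hf : ∀ T : Finset (Ideal (𝓞 K)),
    f (nr (∏ p ∈ T, p)) = ∏ p ∈ T, f (nr p)) :
    ∏ p ∈ prm K x, (1 + f (nr p)) = ∑ T ∈ (prm K x).powerset, f (nr (∏ p ∈ T, p)) := by
  classical
  rw [Finset.prod_one_add]
  exact Finset.sum_congr rfl fun T _ => (hf T).symm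

lemma mertens_upper : ∃ C : ℝ, ∀ x : ℝ, 3 ≤ x → recSum K x ≤ Real.log (Real.log x) + C := by
  classical
  obtain ⟨C₁, hC₁, h₁⟩ := sum_nr_rpow_le K
  obtain ⟨C₂, hC₂, h₂⟩ := sum_prime_sq_le K
  obtain ⟨C₃, hC₃, h₃⟩ := chebyshev_log K
  refine ⟨Real.log C₁ + C₂ + C₃, fun x hx => ?_⟩
  have hlx : 1 ≤ Real.log x := by
    rw [Real.le_log_iff_exp_le (by linarith)]
    linarith [Real.exp_one_lt_d9]
  set s : ℝ := 1 + 1 / Real.log x with hs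
  have hs1 : 1 < s := by rw [hs]; have : 0 < 1 / Real.log x := by positivity
                         linarith
  have hs2 : s ≤ 2 := by
    have : 1 / Real.log x ≤ 1 := by rw [div_le_one (by linarith)]; exact hlx
    linarith
  have hprod : ∏ p ∈ prm K x, (1 + nr p ^ (-s)) ≤ C₁ * Real.log x := by
    rw [prod_one_add_primes K x (fun y => y ^ (-s)) (fun T => by
      rw [nr_prod]; rw [Real.finsetProd_rpow]; intros; positivity)]
    have := h₁ s hs1 hs2 ((prm K x).powerset.image (fun T => ∏ p ∈ T, p)) (by
      intro I hI
      obtain ⟨T, hT, rfl⟩ := Finset.mem_image.1 hI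
      exact prod_ne_bot fun p hp => prm_prop p (Finset.mem_powerset.1 hT hp))
    rw [Finset.sum_image] at this
    · refine this.trans_eq ?_
      rw [hs]; simp
    · intro T hT S hS h
      exact prod_primes_inj (fun p hp => prm_prop p (Finset.mem_powerset.1 hT hp))
        (fun p hp => prm_prop p (Finset.mem_powerset.1 hS hp)) h
  have hlog : ∑ p ∈ prm K x, nr p ^ (-s) ≤ Real.log C₁ + Real.log (Real.log x) + C₂ := by
    have h4 : ∑ p ∈ prm K x, Real.log (1 + nr p ^ (-s)) ≤ Real.log C₁ + Real.log (Real.log x) := by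
      rw [← Real.log_prod (fun p hp => by positivity),
        ← Real.log_mul (by positivity) (by positivity)]
      exact Real.log_le_log (Finset.prod_pos fun p hp => by positivity) hprod
    have h5 : ∑ p ∈ prm K x, nr p ^ (-s) ≤
        ∑ p ∈ prm K x, (Real.log (1 + nr p ^ (-s)) + (nr p ^ 2)⁻¹) := by
      refine Finset.sum_le_sum fun p hp => ?_
      have hp1 := one_le_nr (prm_prop p hp).1
      set u := nr p ^ (-s) with hu
      have hu0 : 0 < u := by have := nr_pos (prm_prop p hp).1; positivity
      have hle : u ^ 2 ≤ (nr p ^ 2)⁻¹ := by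
        rw [← inv_pow]
        gcongr
        rw [← Real.rpow_neg_one]
        exact Real.rpow_le_rpow_of_exponent_le hp1 (by linarith)
      have := Real.one_sub_inv_le_log_of_pos (show 0 < 1 + u by positivity)
      have h6 : u - u ^ 2 ≤ 1 - (1 + u)⁻¹ := by
        have : 1 - (1 + u)⁻¹ = u / (1 + u) := by field_simp; ring
        rw [this, le_div_iff₀ (by positivity)]
        nlinarith [pow_pos hu0 3]
      linarith
    rw [Finset.sum_add_distrib] at h5
    have := h₂ (prm K x) (fun p hp => (prm_prop p hp).1)
    linarith
  have hdiff : ∑ p ∈ prm K x, ((nr p)⁻¹ - nr p ^ (-s)) ≤ C₃ := by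
    have h4 : ∑ p ∈ prm K x, ((nr p)⁻¹ - nr p ^ (-s)) ≤
        ∑ p ∈ prm K x, (Real.log (nr p) / nr p) * (Real.log x)⁻¹ := by
      refine Finset.sum_le_sum fun p hp => ?_
      have hp0 := nr_pos (prm_prop p hp).1
      have e : nr p ^ (-s) = (nr p)⁻¹ * Real.exp (-(Real.log (nr p) / Real.log x)) := by
        rw [← Real.rpow_neg_one, Real.rpow_def_of_pos hp0, Real.rpow_def_of_pos hp0, ← Real.exp_add,
          hs]
        congr 1; ring
      rw [e]
      have := Real.add_one_le_exp (-(Real.log (nr p) / Real.log x))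
      calc _ = (nr p)⁻¹ * (1 - Real.exp (-(Real.log (nr p) / Real.log x))) := by ring
        _ ≤ (nr p)⁻¹ * (Real.log (nr p) / Real.log x) := by gcongr; linarith
        _ = _ := by ring
    rw [← Finset.sum_mul] at h4
    refine h4.trans ?_
    rw [← div_eq_mul_inv, div_le_iff₀ (by linarith)]
    exact h₃ x (by linarith)
  rw [Finset.sum_sub_distrib] at hdiff
  unfold recSum
  linarith

variable {K} in
lemma exists_sq_decomp (m : Ideal (𝓞 K)) (hm : m ≠ ⊥) : ∃ (T : Finset (Ideal (𝓞 K)))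
    (k : Ideal (𝓞 K)), (∀ p ∈ T, p ≠ ⊥ ∧ p.IsPrime) ∧ m = (∏ p ∈ T, p) * k ^ 2 := by
  classical
  induction m using UniqueFactorizationMonoid.induction_on_prime with
  | h₁ => exact absurd rfl hm
  | h₂ x hx =>
    refine ⟨∅, 1, by simp, ?_⟩
    rw [Ideal.isUnit_iff] at hx; rw [hx]; simp [Ideal.one_eq_top]; rw [← Ideal.one_eq_top, one_pow]
  | h₃ a p ha hp ih =>
    obtain ⟨T, k, hT, rfl⟩ := ih ha
    have hp' : p ≠ ⊥ ∧ p.IsPrime := ⟨hp.ne_zero, (Ideal.prime_iff_isPrime hp.ne_zero).1 hp⟩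
    by_cases hpT : p ∈ T
    · refine ⟨T.erase p, p * k, fun q hq => hT q (Finset.mem_of_mem_erase hq), ?_⟩
      rw [← Finset.mul_prod_erase T _ hpT]; ring
    · refine ⟨insert p T, k, ?_, ?_⟩
      · intro q hq
        rcases Finset.mem_insert.1 hq with rfl | hq
        · exact hp'
        · exact hT q hq
      · rw [Finset.prod_insert hpT]; ring

lemma harmonic_idl : ∃ c : ℝ, 0 < c ∧ ∀ x : ℝ, 1 ≤ x →
    c * (Real.log x - 1) ≤ ∑ m ∈ idl K x, (nr m)⁻¹ := by
  obtain ⟨c, C, hc, hC, hA⟩ := card_idl_bounds K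
  refine ⟨c, hc, fun x hx => ?_⟩
  set M := ⌊x⌋₊ + 1 with hM
  have hxM : x < M := by rw [hM]; push_cast; exact Nat.lt_floor_add_one x
  have tele : ∀ n : ℕ, 1 ≤ n → n ≤ M → ∑ k ∈ Finset.Ico n M, ((k : ℝ) * (k + 1))⁻¹ ≤ (n : ℝ)⁻¹ := by
    intro n hn hnM
    have : ∀ M' : ℕ, n ≤ M' → ∑ k ∈ Finset.Ico n M', ((k : ℝ) * (k + 1))⁻¹ = (n : ℝ)⁻¹ - (M' : ℝ)⁻¹ := by
      intro M' hM'
      induction M', hM' using Nat.le_induction with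
      | base => simp
      | succ j hj ih =>
        rw [Finset.sum_Ico_succ_top hj, ih]
        have : (0 : ℝ) < j := by exact_mod_cast lt_of_lt_of_le hn hj
        push_cast
        field_simp
        ring
    rw [this M hnM]
    have : (0 : ℝ) ≤ (M : ℝ)⁻¹ := by positivity
    linarith
  have hidl : ∀ k ∈ Finset.Ico 1 M, ∀ m : Ideal (𝓞 K), m ∈ idl K k → m ∈ idl K x := by
    intro k hk m hm
    rw [mem_idl] at *
    rw [Finset.mem_Ico] at hk
    refine ⟨hm.1, hm.2.trans ?_⟩
    have : k ≤ ⌊x⌋₊ := by omega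
    exact (Nat.cast_le.2 this).trans (Nat.floor_le (by linarith))
  calc c * (Real.log x - 1) ≤ c * ∑ k ∈ Finset.Ico 1 M, ((k : ℝ) + 1)⁻¹ := by
        gcongr
        have h1 := log_add_one_le_harmonic M
        have h2 : Real.log x ≤ Real.log (M + 1 : ℕ) := by
          refine Real.log_le_log (by linarith) ?_
          push_cast; linarith
        have h3 : ((harmonic M : ℚ) : ℝ) = 1 + ∑ k ∈ Finset.Ico 1 M, ((k : ℝ) + 1)⁻¹ := by
          rw [harmonic]
          push_cast
          rw [Finset.range_eq_Ico, Finset.sum_eq_sum_Ico_succ_bot (by omega)]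
          simp
        linarith
    _ = ∑ k ∈ Finset.Ico 1 M, c * k * ((k : ℝ) * (k + 1))⁻¹ := by
        rw [Finset.mul_sum]
        refine Finset.sum_congr rfl fun k hk => ?_
        have : (0 : ℝ) < k := by exact_mod_cast (Finset.mem_Ico.1 hk).1
        field_simp
    _ ≤ ∑ k ∈ Finset.Ico 1 M, ∑ m ∈ idl K k, ((k : ℝ) * (k + 1))⁻¹ := by
        refine Finset.sum_le_sum fun k hk => ?_
        rw [Finset.sum_const, nsmul_eq_mul]
        gcongr
        exact (hA k (by exact_mod_cast (Finset.mem_Ico.1 hk).1)).1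
    _ = ∑ m ∈ idl K x, ∑ k ∈ Finset.Ico (Ideal.absNorm m) M, ((k : ℝ) * (k + 1))⁻¹ := by
        refine Finset.sum_comm' ?_
        intro k m
        constructor
        · rintro ⟨hk, hm⟩
          refine ⟨?_, hidl k hk m hm⟩
          rw [mem_idl] at hm
          rw [Finset.mem_Ico] at *
          exact ⟨by exact_mod_cast hm.2, hk.2⟩
        · rintro ⟨hk, hm⟩
          rw [mem_idl] at *
          rw [Finset.mem_Ico] at *
          have := one_le_nr hm.1
          refine ⟨⟨?_, hk.2⟩, hm.1, by exact_mod_cast hk.1⟩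
          have h' : 1 ≤ Ideal.absNorm m := by exact_mod_cast this
          exact h'.trans hk.1
    _ ≤ ∑ m ∈ idl K x, (nr m)⁻¹ := by
        refine Finset.sum_le_sum fun m hm => ?_
        rw [mem_idl] at hm
        refine tele _ ?_ ?_
        · exact_mod_cast one_le_nr hm.1
        · have : nr m ≤ M := hm.2.trans hxM.le
          exact_mod_cast this

lemma mertens_lower : ∃ C : ℝ, ∀ x : ℝ, 3 ≤ x → Real.log (Real.log x) - C ≤ recSum K x := by
  classical
  obtain ⟨c, hc, h₁⟩ := harmonic_idl K
  obtain ⟨C₂, hC₂, h₂⟩ := sum_prime_sq_le K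
  refine ⟨max (Real.log 2) (Real.log (2 * C₂ / c)), fun x hx => ?_⟩
  have hnn : 0 ≤ recSum K x := Finset.sum_nonneg fun p _ => by positivity
  have hlx : 1 ≤ Real.log x := by
    rw [Real.le_log_iff_exp_le (by linarith)]
    linarith [Real.exp_one_lt_d9]
  rcases le_total (Real.log x) 2 with h2 | h2
  · have : Real.log (Real.log x) ≤ Real.log 2 := Real.log_le_log (by linarith) h2
    linarith [le_max_left (Real.log 2) (Real.log (2 * C₂ / c))]
  have key : ∑ m ∈ idl K x, (nr m)⁻¹ ≤ Real.exp (recSum K x) * C₂ := by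
    choose! T k hT hTk using fun (m : Ideal (𝓞 K)) (hm : m ≠ ⊥) => exists_sq_decomp m hm
    set g : Finset (Ideal (𝓞 K)) × Ideal (𝓞 K) → ℝ := fun z => (nr (∏ p ∈ z.1, p))⁻¹ * (nr z.2 ^ 2)⁻¹
      with hg
    have e1 : ∑ m ∈ idl K x, (nr m)⁻¹ = ∑ m ∈ idl K x, g (T m, k m) := by
      refine Finset.sum_congr rfl fun m hm => ?_
      have := hTk m (mem_idl.1 hm).1
      conv_lhs => rw [this]
      rw [nr_mul, hg, mul_inv]
      simp [nr]
    rw [e1, ← Finset.sum_image (f := g) (g := fun m => (T m, k m)) (s := idl K x)]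
    · calc _ ≤ ∑ z ∈ (prm K x).powerset ×ˢ idl K x, g z := by
            refine Finset.sum_le_sum_of_subset_of_nonneg ?_ (fun z _ _ => by positivity)
            intro z hz
            obtain ⟨m, hm, rfl⟩ := Finset.mem_image.1 hz
            rw [mem_idl] at hm
            have e := hTk m hm.1
            rw [Finset.mem_product, Finset.mem_powerset, mem_idl]
            refine ⟨fun p hp => ?_, ?_⟩
            · have hd : p ∣ m := by
                rw [e]; exact (Finset.dvd_prod_of_mem _ hp).mul_right _
              rw [mem_prm]
              exact ⟨(hT m hm.1 p hp).1, (nr_le_of_dvd hd hm.1).trans hm.2, (hT m hm.1 p hp).2⟩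
            · have hd : k m ∣ m := by
                conv_rhs => rw [e]
                exact (dvd_pow_self _ two_ne_zero).mul_left _
              exact ⟨ne_bot_of_dvd hd hm.1, (nr_le_of_dvd hd hm.1).trans hm.2⟩
        _ = (∑ S ∈ (prm K x).powerset, (nr (∏ p ∈ S, p))⁻¹) * ∑ k ∈ idl K x, (nr k ^ 2)⁻¹ := by
            rw [Finset.sum_mul_sum, Finset.sum_product]
        _ ≤ Real.exp (recSum K x) * C₂ := by
            gcongr
            · rw [← prod_one_add_primes K x (fun y => y⁻¹) (fun T => by rw [nr_prod]; simp),
                recSum, Real.exp_sum]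
              refine Finset.prod_le_prod (fun p _ => by positivity) fun p _ => ?_
              rw [add_comm]; exact Real.add_one_le_exp _
            · exact h₂ _ fun I hI => (mem_idl.1 hI).1
    · intro a ha b hb hab
      simp only [Prod.mk.injEq] at hab
      rw [hTk a (mem_idl.1 ha).1, hTk b (mem_idl.1 hb).1, hab.1, hab.2]
  have h3 := h₁ x (by linarith)
  have h4 : c / 2 * Real.log x ≤ Real.exp (recSum K x) * C₂ := by nlinarith
  have h5 : Real.log x ≤ Real.exp (recSum K x) * (2 * C₂ / c) := by
    have : Real.log x = (2 / c) * (c / 2 * Real.log x) := by field_simp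
    rw [this]
    calc _ ≤ (2 / c) * (Real.exp (recSum K x) * C₂) := by gcongr
      _ = _ := by ring
  have h6 := Real.log_le_log (by linarith) h5
  rw [Real.log_mul (by positivity) (by positivity), Real.log_exp] at h6
  linarith [le_max_right (Real.log 2) (Real.log (2 * C₂ / c))]

lemma mertens : ∃ C : ℝ, 0 < C ∧ ∀ x : ℝ, 3 ≤ x → |recSum K x - Real.log (Real.log x)| ≤ C := by
  obtain ⟨C₁, h₁⟩ := mertens_upper K
  obtain ⟨C₂, h₂⟩ := mertens_lower K
  refine ⟨max (max C₁ C₂) 1, by positivity, fun x hx => ?_⟩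
  have := h₁ x hx
  have := h₂ x hx
  rw [abs_le]
  have a1 : C₁ ≤ max (max C₁ C₂) 1 := (le_max_left _ _).trans (le_max_left _ _)
  have a2 : C₂ ≤ max (max C₁ C₂) 1 := (le_max_right _ _).trans (le_max_left _ _)
  constructor <;> linarith

end PartTwo

section PartThree

open NumberField

lemma sum_powersetCard_insert {α R : Type*} [DecidableEq α] [CommRing R] {q : α} {P : Finset α}
    (hq : q ∉ P) (x : α → R) (j : ℕ) :
    ∑ S ∈ Finset.powersetCard (j + 1) (insert q P), ∏ p ∈ S, x p =
      ∑ S ∈ Finset.powersetCard (j + 1) P, ∏ p ∈ S, x p +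
        x q * ∑ S ∈ Finset.powersetCard j P, ∏ p ∈ S, x p := by
  have hsub : ∀ S ∈ Finset.powersetCard j P, q ∉ S := fun S hS h =>
    hq ((Finset.mem_powersetCard.1 hS).1 h)
  rw [Finset.powersetCard_succ_insert hq, Finset.sum_union, Finset.sum_image, Finset.mul_sum]
  · congr 1
    exact Finset.sum_congr rfl fun S hS => Finset.prod_insert (hsub S hS)
  · intro S hS T hT h
    have := congrArg (fun A => A.erase q) h
    simpa [Finset.erase_insert (hsub S hS), Finset.erase_insert (hsub T hT)] using this
  · rw [Finset.disjoint_left]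
    intro S hS h
    obtain ⟨T, _, rfl⟩ := Finset.mem_image.1 h
    exact hq ((Finset.mem_powersetCard.1 hS).1 (Finset.mem_insert_self _ _))

lemma prod_trunc {α : Type*} [DecidableEq α] (P : Finset α) (x : α → ℂ) :
    (∀ p ∈ P, ‖1 + x p‖ ≤ 1) → ∀ J : ℕ,
    ‖∏ p ∈ P, (1 + x p) - ∑ j ∈ Finset.range J, ∑ S ∈ Finset.powersetCard j P, ∏ p ∈ S, x p‖ ≤
      ∑ S ∈ Finset.powersetCard J P, ∏ p ∈ S, ‖x p‖ := by
  induction P using Finset.induction_on with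
  | empty =>
    intro _ J
    cases J with
    | zero => simp
    | succ J =>
      rw [Finset.sum_range_succ']
      have h0 : ∀ k, Finset.powersetCard (k + 1) (∅ : Finset α) = ∅ := fun k =>
        Finset.powersetCard_eq_empty.2 (by simp)
      simp [h0]
  | insert q P hq ih =>
    intro hx J
    have ih' := ih (fun p hp => hx p (Finset.mem_insert_of_mem hp))
    cases J with
    | zero =>
      simp only [Finset.range_zero, Finset.sum_empty, sub_zero, Finset.powersetCard_zero,
        Finset.sum_singleton, Finset.prod_empty]
      rw [norm_prod]
      exact Finset.prod_le_one (fun _ _ => norm_nonneg _) hx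
    | succ J =>
      have e : ∑ j ∈ Finset.range (J + 1), ∑ S ∈ Finset.powersetCard j (insert q P), ∏ p ∈ S, x p =
          ∑ j ∈ Finset.range (J + 1), ∑ S ∈ Finset.powersetCard j P, ∏ p ∈ S, x p +
          x q * ∑ j ∈ Finset.range J, ∑ S ∈ Finset.powersetCard j P, ∏ p ∈ S, x p := by
        rw [Finset.sum_range_succ', Finset.sum_range_succ' (n := J)]
        simp_rw [sum_powersetCard_insert hq]
        rw [Finset.sum_add_distrib, Finset.mul_sum]
        simp only [Finset.powersetCard_zero, Finset.sum_singleton, Finset.prod_empty]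
        ring
      rw [e, Finset.prod_insert hq, sum_powersetCard_insert hq (fun p => ‖x p‖)]
      have e2 : (1 + x q) * ∏ p ∈ P, (1 + x p) -
          (∑ j ∈ Finset.range (J + 1), ∑ S ∈ Finset.powersetCard j P, ∏ p ∈ S, x p +
          x q * ∑ j ∈ Finset.range J, ∑ S ∈ Finset.powersetCard j P, ∏ p ∈ S, x p) =
          (∏ p ∈ P, (1 + x p) -
            ∑ j ∈ Finset.range (J + 1), ∑ S ∈ Finset.powersetCard j P, ∏ p ∈ S, x p) +
          x q * (∏ p ∈ P, (1 + x p) -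
            ∑ j ∈ Finset.range J, ∑ S ∈ Finset.powersetCard j P, ∏ p ∈ S, x p) := by ring
      rw [e2]
      refine (norm_add_le _ _).trans ?_
      rw [norm_mul]
      gcongr
      · exact ih' (J + 1)
      · exact ih' J

lemma norm_prod_sub_prod_le_sum {α : Type*} (P : Finset α) (u v : α → ℂ)
    (hu : ∀ p ∈ P, ‖u p‖ ≤ 1) (hv : ∀ p ∈ P, ‖v p‖ ≤ 1) :
    ‖∏ p ∈ P, u p - ∏ p ∈ P, v p‖ ≤ ∑ p ∈ P, ‖u p - v p‖ := by
  classical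
  induction P using Finset.induction_on with
  | empty => simp
  | insert q P hq ih =>
    have ih' := ih (fun p hp => hu p (Finset.mem_insert_of_mem hp))
      (fun p hp => hv p (Finset.mem_insert_of_mem hp))
    rw [Finset.prod_insert hq, Finset.prod_insert hq, Finset.sum_insert hq]
    have e : u q * ∏ p ∈ P, u p - v q * ∏ p ∈ P, v p =
      (u q - v q) * ∏ p ∈ P, u p + v q * (∏ p ∈ P, u p - ∏ p ∈ P, v p) := by ring
    rw [e]
    refine (norm_add_le _ _).trans ?_
    rw [norm_mul, norm_mul]
    have h1 : ‖∏ p ∈ P, u p‖ ≤ 1 := by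
      rw [norm_prod]
      exact Finset.prod_le_one (fun _ _ => norm_nonneg _)
        (fun p hp => hu p (Finset.mem_insert_of_mem hp))
    have h2 := hv q (Finset.mem_insert_self _ _)
    have := mul_le_mul h2 ih' (norm_nonneg _) (by norm_num)
    have := mul_le_mul_of_nonneg_left h1 (norm_nonneg (u q - v q))
    linarith

lemma esymm_le_exp {α : Type*} [DecidableEq α] (P : Finset α) (y : α → ℝ) (hy : ∀ p, 0 ≤ y p)
    (J : ℕ) : ∑ S ∈ Finset.powersetCard J P, ∏ p ∈ S, y p ≤
      Real.exp (-J + Real.exp 1 * ∑ p ∈ P, y p) := by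
  have h1 : Real.exp J * ∑ S ∈ Finset.powersetCard J P, ∏ p ∈ S, y p ≤
      Real.exp (Real.exp 1 * ∑ p ∈ P, y p) := by
    calc _ = ∑ S ∈ Finset.powersetCard J P, ∏ p ∈ S, (Real.exp 1 * y p) := by
          rw [Finset.mul_sum]
          refine Finset.sum_congr rfl fun S hS => ?_
          rw [Finset.prod_mul_distrib, Finset.prod_const, (Finset.mem_powersetCard.1 hS).2,
            ← Real.exp_nat_mul]
          simp
      _ ≤ ∑ S ∈ P.powerset, ∏ p ∈ S, (Real.exp 1 * y p) := by
          refine Finset.sum_le_sum_of_subset_of_nonneg ?_ ?_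
          · intro S hS
            exact Finset.mem_powerset.2 (Finset.mem_powersetCard.1 hS).1
          · intro S _ _
            exact Finset.prod_nonneg fun p _ => mul_nonneg (Real.exp_pos _).le (hy p)
      _ = ∏ p ∈ P, (1 + Real.exp 1 * y p) := by rw [Finset.prod_one_add]
      _ ≤ ∏ p ∈ P, Real.exp (Real.exp 1 * y p) := by
          refine Finset.prod_le_prod ?_ ?_
          · intro p _
            have := mul_nonneg (Real.exp_pos 1).le (hy p)
            linarith
          · intro p _
            have := Real.add_one_le_exp (Real.exp 1 * y p)
            linarith
      _ = _ := by rw [← Real.exp_sum, Finset.mul_sum]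
  rw [Real.exp_add, Real.exp_neg]
  rwa [← le_inv_mul_iff₀ (Real.exp_pos _)] at h1

/-- The number `exp(iτ) - 1`. -/
def wτ (τ : ℝ) : ℂ := Complex.exp (Complex.I * τ) - 1

lemma wτ_norm_le (τ : ℝ) : ‖wτ τ‖ ≤ |τ| := Real.norm_exp_I_mul_ofReal_sub_one_le

lemma norm_expI (τ : ℝ) : ‖Complex.exp (Complex.I * τ)‖ = 1 := by
  rw [mul_comm]; exact Complex.norm_exp_ofReal_mul_I τ

lemma wτ_re (τ : ℝ) : (wτ τ).re ≤ 0 := by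
  have h : (Complex.exp (Complex.I * τ)).re ≤ ‖Complex.exp (Complex.I * τ)‖ := Complex.re_le_norm _
  rw [norm_expI] at h
  simp only [wτ, Complex.sub_re, Complex.one_re]
  linarith

lemma one_add_wτ_mul (τ a : ℝ) (h0 : 0 ≤ a) (h1 : a ≤ 1) : ‖1 + wτ τ * a‖ ≤ 1 := by
  have e : 1 + wτ τ * a = ((1 - a : ℝ) : ℂ) + (a : ℂ) * Complex.exp (Complex.I * τ) := by
    simp [wτ]; ring
  rw [e]
  refine (norm_add_le _ _).trans ?_
  rw [norm_mul, norm_expI, Complex.norm_real, Complex.norm_real, Real.norm_of_nonneg h0,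
    Real.norm_of_nonneg (by linarith)]
  linarith

lemma wτ_expand (τ : ℝ) (h : |τ| ≤ 1) :
    ‖wτ τ - Complex.I * τ + (τ : ℂ) ^ 2 / 2‖ ≤ |τ| ^ 3 := by
  have hn : ‖Complex.I * (τ : ℂ)‖ = |τ| := by simp
  have := Complex.exp_bound (x := Complex.I * τ) (by rw [hn]; exact h) (n := 3) (by norm_num)
  rw [hn] at this
  have e : wτ τ - Complex.I * τ + (τ : ℂ) ^ 2 / 2 = Complex.exp (Complex.I * τ) -
      ∑ m ∈ Finset.range 3, (Complex.I * τ) ^ m / (m.factorial : ℂ) := by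
    simp only [wτ, Finset.sum_range_succ, Finset.sum_range_zero, mul_pow, Complex.I_sq]
    simp [Nat.factorial]
    ring
  rw [e]
  refine this.trans ?_
  have : 0 ≤ |τ| ^ 3 := by positivity
  refine mul_le_of_le_one_right this ?_
  norm_num [Nat.factorial]

open Classical in
/-- Core estimate. -/
lemma core_est {V : Type*} (Ω : Finset V) (I : V → Ideal (𝓞 K)) (P : Finset (Ideal (𝓞 K)))
    (hP : ∀ p ∈ P, p ≠ ⊥ ∧ p.IsPrime) (τ ε ℓ : ℝ) (hε : 0 ≤ ε) (J : ℕ)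
    (hsm : ∀ S ⊆ P, S.card ≤ J → nr (∏ p ∈ S, p) ≤ ℓ)
    (H1 : ∀ d : Ideal (𝓞 K), d ≠ ⊥ → nr d ≤ ℓ →
      |((Ω.filter fun v => d ∣ I v).card : ℝ) - Ω.card / nr d| ≤ ε * Ω.card) :
    ‖∑ v ∈ Ω, Complex.exp (Complex.I * (τ * ((P.filter fun p => p ∣ I v).card : ℝ) : ℝ)) -
      Ω.card * ∏ p ∈ P, (1 + wτ τ * ((nr p)⁻¹ : ℝ))‖ ≤
    Ω.card * ((J + 1) * (1 + 2 * P.card) ^ J * ε +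
      2 * Real.exp (-J + Real.exp 1 * (|τ| * ∑ p ∈ P, (nr p)⁻¹))) := by
  set w := wτ τ with hw
  have hw2 : ‖w‖ ≤ 2 := by
    rw [hw, wτ]
    refine (norm_sub_le _ _).trans ?_
    rw [norm_expI]; norm_num
  have hwτ : ‖w‖ ≤ |τ| := wτ_norm_le τ
  set x : V → Ideal (𝓞 K) → ℂ := fun v p => if p ∣ I v then w else 0 with hx
  set y : Ideal (𝓞 K) → ℂ := fun p => w * ((nr p)⁻¹ : ℝ) with hy
  set n : ℝ := ((Ω.card : ℕ) : ℝ) with hn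
  -- exponential as product
  have hexp : ∀ v, Complex.exp (Complex.I * (τ * ((P.filter fun p => p ∣ I v).card : ℝ) : ℝ)) =
      ∏ p ∈ P, (1 + x v p) := by
    intro v
    have : ∀ p, 1 + x v p = if p ∣ I v then Complex.exp (Complex.I * τ) else 1 := by
      intro p
      simp only [hx]
      split_ifs
      · simp [hw, wτ]
      · simp
    simp_rw [this]
    rw [← Finset.prod_filter, Finset.prod_const, ← Complex.exp_nat_mul]
    congr 1; push_cast; ring
  simp_rw [hexp]
  -- products over S
  have hxS : ∀ v, ∀ S ⊆ P, ∏ p ∈ S, x v p = if (∏ p ∈ S, p) ∣ I v then w ^ S.card else 0 := by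
    intro v S hS
    split_ifs with hd
    · rw [← Finset.prod_const]
      refine Finset.prod_congr rfl fun p hp => ?_
      simp only [hx]
      rw [if_pos ((Finset.dvd_prod_of_mem _ hp).trans hd)]
    · have : ∃ p ∈ S, ¬ p ∣ I v := by
        by_contra! hcon
        exact hd (prod_dvd_of_primes (fun p hp => hP p (hS hp)) hcon)
      obtain ⟨p, hp, hpd⟩ := this
      exact Finset.prod_eq_zero hp (by simp [hx, hpd])
  have hyS : ∀ S, ∏ p ∈ S, y p = w ^ S.card * ((nr (∏ p ∈ S, p))⁻¹ : ℝ) := by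
    intro S
    simp only [hy]
    rw [Finset.prod_mul_distrib, Finset.prod_const, nr_prod, ← Finset.prod_inv_distrib]
    push_cast; rfl
  have hcnt : ∀ S ⊆ P, S.card ≤ J →
      |((Ω.filter fun v => (∏ p ∈ S, p) ∣ I v).card : ℝ) - n * (nr (∏ p ∈ S, p))⁻¹| ≤ ε * n := by
    intro S hS hc
    rw [← div_eq_mul_inv]
    exact H1 _ (prod_ne_bot fun p hp => hP p (hS hp)) (hsm S hS hc)
  have hpow : ∀ j ≤ J, ‖w‖ ^ j * (P.card.choose j : ℝ) ≤ (1 + 2 * P.card) ^ J := by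
    intro j hj
    calc ‖w‖ ^ j * (P.card.choose j : ℝ) ≤ 2 ^ j * (P.card : ℝ) ^ j := by
          gcongr
          exact_mod_cast Nat.choose_le_pow _ _
      _ = (2 * P.card) ^ j := by rw [mul_pow]
      _ ≤ (1 + 2 * P.card) ^ j := by gcongr; linarith
      _ ≤ (1 + 2 * P.card) ^ J := by
          refine pow_le_pow_right₀ ?_ hj
          have : (0 : ℝ) ≤ P.card := by positivity
          linarith
  -- main difference
  set Tx : V → ℂ := fun v => ∑ j ∈ Finset.range J, ∑ S ∈ Finset.powersetCard j P, ∏ p ∈ S, x v p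
    with hTx
  set Ty : ℂ := ∑ j ∈ Finset.range J, ∑ S ∈ Finset.powersetCard j P, ∏ p ∈ S, y p with hTy
  have hx1 : ∀ v, ‖∏ p ∈ P, (1 + x v p) - Tx v‖ ≤
      ∑ S ∈ Finset.powersetCard J P, ∏ p ∈ S, ‖x v p‖ := by
    intro v
    refine prod_trunc P (x v) (fun p _ => ?_) J
    simp only [hx]
    split_ifs
    · simpa using one_add_wτ_mul τ 1 (by norm_num) le_rfl
    · simp
  have hy1 : ‖∏ p ∈ P, (1 + y p) - Ty‖ ≤ ∑ S ∈ Finset.powersetCard J P, ∏ p ∈ S, ‖y p‖ := by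
    refine prod_trunc P y (fun p hp => ?_) J
    refine one_add_wτ_mul τ _ (by positivity) ?_
    exact inv_le_one_of_one_le₀ (one_le_nr (hP p hp).1)
  have hmid : ‖∑ v ∈ Ω, Tx v - n * Ty‖ ≤ n * (J * (1 + 2 * P.card) ^ J * ε) := by
    have e : ∑ v ∈ Ω, Tx v - n * Ty = ∑ j ∈ Finset.range J, ∑ S ∈ Finset.powersetCard j P,
        w ^ S.card * ((((Ω.filter fun v => (∏ p ∈ S, p) ∣ I v).card : ℝ) -
          n * (nr (∏ p ∈ S, p))⁻¹ : ℝ) : ℂ) := by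
      simp only [hTx, hTy]
      rw [Finset.sum_comm, Finset.mul_sum, ← Finset.sum_sub_distrib]
      refine Finset.sum_congr rfl fun j hj => ?_
      rw [Finset.sum_comm, Finset.mul_sum, ← Finset.sum_sub_distrib]
      refine Finset.sum_congr rfl fun S hS => ?_
      rw [hyS, Finset.sum_congr rfl fun v _ => hxS v S (Finset.mem_powersetCard.1 hS).1,
        ← Finset.sum_filter, Finset.sum_const, nsmul_eq_mul]
      push_cast
      ring
    rw [e]
    refine (norm_sum_le _ _).trans ?_
    calc _ ≤ ∑ j ∈ Finset.range J, (1 + 2 * P.card) ^ J * (ε * n) := by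
          refine Finset.sum_le_sum fun j hj => ?_
          rw [Finset.mem_range] at hj
          refine (norm_sum_le _ _).trans ?_
          calc _ ≤ ∑ S ∈ Finset.powersetCard j P, ‖w‖ ^ j * (ε * n) := by
                refine Finset.sum_le_sum fun S hS => ?_
                obtain ⟨h1, h2⟩ := Finset.mem_powersetCard.1 hS
                rw [norm_mul, norm_pow, h2, Complex.norm_real, Real.norm_eq_abs]
                gcongr
                exact hcnt S h1 (by omega)
            _ = (‖w‖ ^ j * (P.card.choose j : ℝ)) * (ε * n) := by
                rw [Finset.sum_const, Finset.card_powersetCard, nsmul_eq_mul]; ring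
            _ ≤ _ := by gcongr; exact hpow j hj.le
      _ = _ := by rw [Finset.sum_const, Finset.card_range, nsmul_eq_mul]; ring
  have hexpJ : ∑ S ∈ Finset.powersetCard J P, ∏ p ∈ S, ‖y p‖ ≤
      Real.exp (-J + Real.exp 1 * (|τ| * ∑ p ∈ P, (nr p)⁻¹)) := by
    refine (esymm_le_exp P (fun p => ‖y p‖) (fun p => norm_nonneg _) J).trans ?_
    have : ∑ p ∈ P, ‖y p‖ ≤ |τ| * ∑ p ∈ P, (nr p)⁻¹ := by
      rw [Finset.mul_sum]
      refine Finset.sum_le_sum fun p hp => ?_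
      simp only [hy]
      rw [norm_mul, Complex.norm_real, Real.norm_of_nonneg (by positivity)]
      gcongr
    gcongr
  have hxJ : ∑ v ∈ Ω, ∑ S ∈ Finset.powersetCard J P, ∏ p ∈ S, ‖x v p‖ ≤
      n * ((1 + 2 * P.card) ^ J * ε) + n * ∑ S ∈ Finset.powersetCard J P, ∏ p ∈ S, ‖y p‖ := by
    rw [Finset.sum_comm]
    calc _ ≤ ∑ S ∈ Finset.powersetCard J P, (‖w‖ ^ J * (ε * n) + n * ∏ p ∈ S, ‖y p‖) := by
          refine Finset.sum_le_sum fun S hS => ?_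
          obtain ⟨h1, h2⟩ := Finset.mem_powersetCard.1 hS
          have e1 : ∑ v ∈ Ω, ∏ p ∈ S, ‖x v p‖ =
              ‖w‖ ^ J * ((Ω.filter fun v => (∏ p ∈ S, p) ∣ I v).card : ℝ) := by
            rw [Finset.card_filter, Nat.cast_sum, Finset.mul_sum]
            refine Finset.sum_congr rfl fun v _ => ?_
            rw [← norm_prod, hxS v S h1, h2]
            split_ifs <;> simp
          have e2 : ∏ p ∈ S, ‖y p‖ = ‖w‖ ^ J * (nr (∏ p ∈ S, p))⁻¹ := by
            rw [← norm_prod, hyS, norm_mul, norm_pow, h2, Complex.norm_real,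
              Real.norm_of_nonneg (by positivity)]
          rw [e1, e2]
          have := (abs_le.1 (hcnt S h1 h2.le)).2
          have h0 : 0 ≤ ‖w‖ ^ J := by positivity
          nlinarith
      _ = (‖w‖ ^ J * (P.card.choose J : ℝ)) * (ε * n) +
          n * ∑ S ∈ Finset.powersetCard J P, ∏ p ∈ S, ‖y p‖ := by
          rw [Finset.sum_add_distrib, Finset.sum_const, Finset.card_powersetCard, nsmul_eq_mul,
            Finset.mul_sum]; ring
      _ ≤ _ := by
          have := hpow J le_rfl
          have h0 : 0 ≤ ε * n := by positivity
          nlinarith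
  have e : ∑ v ∈ Ω, ∏ p ∈ P, (1 + x v p) - n * ∏ p ∈ P, (1 + y p) =
      ∑ v ∈ Ω, (∏ p ∈ P, (1 + x v p) - Tx v) + (∑ v ∈ Ω, Tx v - n * Ty) -
        n * (∏ p ∈ P, (1 + y p) - Ty) := by
    rw [Finset.sum_sub_distrib]; ring
  have e' : ((Ω.card : ℕ) : ℂ) = ((n : ℝ) : ℂ) := by simp [hn]
  rw [e', e]
  refine (norm_sub_le _ _).trans ?_
  refine (add_le_add (norm_add_le _ _) le_rfl).trans ?_
  have a1 : ‖∑ v ∈ Ω, (∏ p ∈ P, (1 + x v p) - Tx v)‖ ≤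
      ∑ v ∈ Ω, ∑ S ∈ Finset.powersetCard J P, ∏ p ∈ S, ‖x v p‖ :=
    (norm_sum_le _ _).trans (Finset.sum_le_sum fun v _ => hx1 v)
  have a2 : ‖(n : ℂ) * (∏ p ∈ P, (1 + y p) - Ty)‖ ≤
      n * ∑ S ∈ Finset.powersetCard J P, ∏ p ∈ S, ‖y p‖ := by
    rw [norm_mul, Complex.norm_real, Real.norm_of_nonneg (by positivity)]
    gcongr
  have a3 : n * ∑ S ∈ Finset.powersetCard J P, ∏ p ∈ S, ‖y p‖ ≤
      n * Real.exp (-J + Real.exp 1 * (|τ| * ∑ p ∈ P, (nr p)⁻¹)) := by gcongr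
  nlinarith

end PartThree


section PartFour

open NumberField

open Classical in
lemma omegaI_eq {m : Ideal (𝓞 K)} (hm : m ≠ ⊥) {x : ℝ} (hx : nr m ≤ x) :
    omegaI K m = ((prm K x).filter fun p => p ∣ m).card := by
  unfold omegaI
  refine Nat.subtype_card _ fun p => ?_
  rw [Finset.mem_filter, mem_prm]
  constructor
  · rintro ⟨⟨_, _, h⟩, h'⟩
    exact ⟨h, h'⟩
  · rintro ⟨h, h'⟩
    exact ⟨⟨ne_bot_of_dvd h' hm, (nr_le_of_dvd h' hm).trans hx, h⟩, h'⟩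

lemma prod_exp_approx : ∃ C : ℝ, 0 < C ∧ ∀ (P : Finset (Ideal (𝓞 K))) (_ : ∀ p ∈ P, p ≠ ⊥ ∧ p.IsPrime)
    (τ : ℝ) (_ : |τ| ≤ 1),
    ‖∏ p ∈ P, (1 + wτ τ * ((nr p)⁻¹ : ℝ)) - Complex.exp (wτ τ * ((∑ p ∈ P, (nr p)⁻¹ : ℝ) : ℂ))‖ ≤
      C * τ ^ 2 := by
  obtain ⟨C, hC, h⟩ := sum_prime_sq_le K
  refine ⟨C, hC, fun P hP τ hτ => ?_⟩
  push_cast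
  rw [Finset.mul_sum, Complex.exp_sum]
  refine (norm_prod_sub_prod_le_sum P _ _ ?_ ?_).trans ?_
  · intro p hp
    have := one_add_wτ_mul τ (nr p)⁻¹ (by positivity) (inv_le_one_of_one_le₀ (one_le_nr (hP p hp).1))
    push_cast at this
    exact this
  · intro p hp
    rw [Complex.norm_exp, Real.exp_le_one_iff]
    have : (wτ τ * ((Ideal.absNorm p : ℂ))⁻¹).re = (wτ τ).re * (nr p)⁻¹ := by
      rw [← Complex.re_mul_ofReal]; push_cast; rfl
    push_cast
    rw [this]
    exact mul_nonpos_of_nonpos_of_nonneg (wτ_re τ) (by positivity)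
  · calc _ ≤ ∑ p ∈ P, τ ^ 2 * (nr p ^ 2)⁻¹ := by
          refine Finset.sum_le_sum fun p hp => ?_
          have hn : ‖wτ τ * ((nr p : ℂ))⁻¹‖ = ‖wτ τ‖ * (nr p)⁻¹ := by
            rw [norm_mul, norm_inv, Complex.norm_real, Real.norm_of_nonneg (by positivity)]
          have hle : ‖wτ τ * ((nr p : ℂ))⁻¹‖ ≤ |τ| * (nr p)⁻¹ := by
            rw [hn]; gcongr; exact wτ_norm_le τ
          have h1 : (nr p)⁻¹ ≤ 1 := inv_le_one_of_one_le₀ (one_le_nr (hP p hp).1)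
          have hle1 : ‖wτ τ * ((nr p : ℂ))⁻¹‖ ≤ 1 := by
            refine hle.trans (mul_le_one₀ hτ (by positivity) h1)
          have := Complex.norm_exp_sub_one_sub_id_le hle1
          rw [norm_sub_rev]
          have e : ∀ a : ℂ, Complex.exp a - (1 + a) = Complex.exp a - 1 - a := fun a => by ring
          push_cast at *
          rw [e]
          refine this.trans ?_
          calc _ ≤ (|τ| * (nr p)⁻¹) ^ 2 := by gcongr
            _ = _ := by rw [mul_pow, sq_abs, inv_pow]
      _ ≤ _ := by
          rw [← Finset.mul_sum, mul_comm]
          gcongr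
          exact h P fun p hp => (hP p hp).1

lemma norm_expI_sub_le (a b : ℝ) :
    ‖Complex.exp (Complex.I * a) - Complex.exp (Complex.I * b)‖ ≤ |a - b| := by
  have e : Complex.exp (Complex.I * a) - Complex.exp (Complex.I * b) =
      Complex.exp (Complex.I * b) * (Complex.exp (Complex.I * (a - b : ℝ)) - 1) := by
    rw [mul_sub, ← Complex.exp_add]; push_cast; ring_nf
  rw [e, norm_mul, norm_expI, one_mul]
  exact Real.norm_exp_I_mul_ofReal_sub_one_le

open Classical in
/-- the number of prime divisors bigger than `z`, on average -/
lemma tail_est {V : Type*} (Ω : Finset V) (I : V → Ideal (𝓞 K)) (M : ℕ) (ε ℓ z C' : ℝ)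
    (hε : 0 ≤ ε) (hℓ : 1 < ℓ) (hz : z ≤ ℓ) (hC' : ((idl K ℓ).card : ℝ) ≤ C' * ℓ)
    (hI : ∀ v ∈ Ω, I v ≠ ⊥ ∧ nr (I v) ≤ ℓ ^ M)
    (H1 : ∀ d : Ideal (𝓞 K), d ≠ ⊥ → nr d ≤ ℓ →
      |((Ω.filter fun v => d ∣ I v).card : ℝ) - Ω.card / nr d| ≤ ε * Ω.card) :
    ∑ v ∈ Ω, |(omegaI K (I v) : ℝ) - (((prm K z).filter fun p => p ∣ I v).card : ℝ)| ≤
      Ω.card * (recSum K ℓ - recSum K z + C' * ℓ * ε + M) := by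
  have hsub : prm K z ⊆ prm K ℓ := fun p hp => by
    rw [mem_prm] at *; exact ⟨hp.1, hp.2.1.trans hz, hp.2.2⟩
  have key : ∀ v ∈ Ω, |(omegaI K (I v) : ℝ) - (((prm K z).filter fun p => p ∣ I v).card : ℝ)| ≤
      ∑ p ∈ prm K ℓ \ prm K z, (if p ∣ I v then (1 : ℝ) else 0) + M := by
    intro v hv
    obtain ⟨h0, hM⟩ := hI v hv
    set x := max (nr (I v)) ℓ with hx
    have hsub2 : prm K ℓ ⊆ prm K x := fun p hp => by
      rw [mem_prm] at *; exact ⟨hp.1, hp.2.1.trans (le_max_right _ _), hp.2.2⟩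
    rw [omegaI_eq K h0 (le_max_left _ _ : nr (I v) ≤ x)]
    set F := (prm K x).filter fun p => p ∣ I v with hF
    set A := (prm K z).filter fun p => p ∣ I v with hA
    set B := (prm K ℓ \ prm K z).filter fun p => p ∣ I v with hB
    set D := (prm K x \ prm K ℓ).filter fun p => p ∣ I v with hD
    have hFu : F = A ∪ (B ∪ D) := by
      ext p
      simp only [hF, hA, hB, hD, Finset.mem_filter, Finset.mem_union, Finset.mem_sdiff]
      have := @hsub p
      have := @hsub2 p
      tauto
    have hAF : A ⊆ F := by rw [hFu]; exact Finset.subset_union_left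
    have hcard : F.card ≤ A.card + (B.card + D.card) := by
      rw [hFu]
      exact (Finset.card_union_le _ _).trans (add_le_add le_rfl (Finset.card_union_le _ _))
    have hDM : D.card ≤ M := by
      have hDp : ∀ p ∈ D, p ≠ ⊥ ∧ p.IsPrime := fun p hp =>
        prm_prop p (Finset.mem_sdiff.1 (Finset.mem_filter.1 hp).1).1
      have h1 : ℓ ^ D.card ≤ ℓ ^ M := by
        calc ℓ ^ D.card = ∏ p ∈ D, ℓ := by rw [Finset.prod_const]
          _ ≤ ∏ p ∈ D, nr p := by
              refine Finset.prod_le_prod (fun _ _ => by linarith) fun p hp => ?_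
              have hp' := Finset.mem_sdiff.1 (Finset.mem_filter.1 hp).1
              by_contra hlt
              push Not at hlt
              exact hp'.2 (mem_prm.2 ⟨(hDp p hp).1, hlt.le, (hDp p hp).2⟩)
          _ = nr (∏ p ∈ D, p) := (nr_prod D).symm
          _ ≤ nr (I v) := nr_le_of_dvd (prod_dvd_of_primes hDp fun p hp => (Finset.mem_filter.1 hp).2) h0
          _ ≤ ℓ ^ M := hM
      exact (pow_le_pow_iff_right₀ hℓ).1 h1
    have hle : A.card ≤ F.card := Finset.card_le_card hAF
    have hBs : ∑ p ∈ prm K ℓ \ prm K z, (if p ∣ I v then (1 : ℝ) else 0) = B.card := by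
      rw [hB, Finset.card_filter]; push_cast; rfl
    rw [hBs, abs_of_nonneg (by rw [sub_nonneg]; exact_mod_cast hle)]
    have : (F.card : ℝ) ≤ A.card + (B.card + M) := by
      exact_mod_cast hcard.trans (by omega)
    linarith
  refine (Finset.sum_le_sum key).trans ?_
  rw [Finset.sum_add_distrib, Finset.sum_const, nsmul_eq_mul, Finset.sum_comm]
  have h2 : ∀ p ∈ prm K ℓ \ prm K z, ∑ v ∈ Ω, (if p ∣ I v then (1 : ℝ) else 0) ≤
      Ω.card * ((nr p)⁻¹ + ε) := by
    intro p hp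
    have hp' := mem_prm.1 (Finset.mem_sdiff.1 hp).1
    have := (abs_le.1 (H1 p hp'.1 hp'.2.1)).2
    have e : ∑ v ∈ Ω, (if p ∣ I v then (1 : ℝ) else 0) = ((Ω.filter fun v => p ∣ I v).card : ℝ) := by
      rw [Finset.card_filter]; push_cast; rfl
    rw [e]
    rw [div_eq_mul_inv] at this
    linarith
  have h3 : recSum K ℓ - recSum K z = ∑ p ∈ prm K ℓ \ prm K z, (nr p)⁻¹ := by
    unfold recSum
    rw [← Finset.sum_sdiff hsub]; ring
  have h4 : ((prm K ℓ \ prm K z).card : ℝ) ≤ C' * ℓ := by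
    refine le_trans ?_ hC'
    exact_mod_cast Finset.card_le_card (Finset.sdiff_subset.trans (Finset.filter_subset _ _))
  have h5 : ∑ p ∈ prm K ℓ \ prm K z, ∑ v ∈ Ω, (if p ∣ I v then (1 : ℝ) else 0) ≤
      Ω.card * (recSum K ℓ - recSum K z + C' * ℓ * ε) := by
    refine (Finset.sum_le_sum h2).trans ?_
    rw [← Finset.mul_sum, Finset.sum_add_distrib, Finset.sum_const, nsmul_eq_mul, h3]
    gcongr
  have h6 : (Ω.card : ℝ) * (recSum K ℓ - recSum K z + C' * ℓ * ε + M) =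
    Ω.card * (recSum K ℓ - recSum K z + C' * ℓ * ε) + Ω.card * M := by ring
  rw [h6]
  linarith

/-- the error function -/
def errE (t B c : ℝ) (L : ℝ) : ℝ :=
  B * Real.exp ((L + 2) * c - Real.exp (L - B) / 2) +
  2 * Real.exp (-L + Real.exp 1 * (|t| / √L * (L + (B + Real.log (2 * L + 2))))) +
  B * (|t| / √L) ^ 2 + (|t| / √L) * (B + Real.log (2 * L + 2)) +
  2 * ((|t| / √L) ^ 3 * (L + (B + Real.log (2 * L + 2))) +
    (|t| / √L) * (B + Real.log (2 * L + 2)) + (|t| / √L) ^ 2 * (B + Real.log (2 * L + 2)))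

lemma g_div_sqrt (B : ℝ) : Tendsto (fun L : ℝ => (B + Real.log (2 * L + 2)) / √L) atTop (𝓝 0) := by
  have h1 : Tendsto (fun L : ℝ => Real.log (2 * L + 2) / √(2 * L + 2)) atTop (𝓝 0) := by
    have := (isLittleO_log_rpow_atTop (r := 1 / 2) (by norm_num)).tendsto_div_nhds_zero
    have h2 : Tendsto (fun L : ℝ => 2 * L + 2) atTop atTop :=
      tendsto_atTop_add_const_right _ _ (tendsto_id.const_mul_atTop (by norm_num))
    refine (this.comp h2).congr fun L => ?_
    simp [Real.sqrt_eq_rpow]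
  have h3 : Tendsto (fun L : ℝ => B / √L) atTop (𝓝 0) :=
    tendsto_const_nhds.div_atTop Real.tendsto_sqrt_atTop
  have h4 : Tendsto (fun L : ℝ => Real.log (2 * L + 2) / √L) atTop (𝓝 0) := by
    have h5 := h1.const_mul 2
    rw [mul_zero] at h5
    refine squeeze_zero' ?_ ?_ h5
    · filter_upwards [eventually_ge_atTop 1] with L hL
      have := Real.log_nonneg (show (1 : ℝ) ≤ 2 * L + 2 by linarith)
      positivity
    · filter_upwards [eventually_ge_atTop 1] with L hL
      have := Real.log_nonneg (show (1 : ℝ) ≤ 2 * L + 2 by linarith)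
      rw [div_eq_mul_inv, div_eq_mul_inv, mul_left_comm]
      gcongr
      rw [inv_le_comm₀ (by positivity) (by positivity), mul_inv, inv_inv]
      rw [inv_mul_le_iff₀ (by norm_num), Real.sqrt_le_left (by positivity)]
      rw [mul_pow, Real.sq_sqrt (by linarith)]
      linarith
  have := h3.add h4
  rw [add_zero] at this
  refine this.congr fun L => ?_
  ring

lemma errE_tendsto (t B c : ℝ) : Tendsto (errE t B c) atTop (𝓝 0) := by
  have hg := g_div_sqrt B
  set g : ℝ → ℝ := fun L => B + Real.log (2 * L + 2) with hgdef
  have hg' : Tendsto (fun L => g L / √L) atTop (𝓝 0) := hg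
  have hs : Tendsto (fun L : ℝ => |t| / √L) atTop (𝓝 0) :=
    tendsto_const_nhds.div_atTop Real.tendsto_sqrt_atTop
  have hsg : Tendsto (fun L : ℝ => (|t| / √L) * g L) atTop (𝓝 0) := by
    have := hg'.const_mul |t|
    rw [mul_zero] at this
    refine this.congr fun L => ?_
    ring
  have h1 : Tendsto (fun L => B * Real.exp ((L + 2) * c - Real.exp (L - B) / 2)) atTop (𝓝 0) := by
    have : Tendsto (fun L => (L + 2) * c - Real.exp (L - B) / 2) atTop atBot := by
      have e1 : Tendsto (fun y : ℝ => Real.exp y / y) atTop atTop := by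
        simpa using Real.tendsto_exp_div_pow_atTop 1
      have e2 : Tendsto (fun L : ℝ => L - B) atTop atTop := tendsto_atTop_add_const_right _ _ tendsto_id
      have e3 : Tendsto (fun y : ℝ => y * (c - (Real.exp y / y) / 2)) atTop atBot := by
        refine tendsto_id.atTop_mul_atBot₀ ?_
        have : Tendsto (fun y : ℝ => (Real.exp y / y) / 2) atTop atTop := e1.atTop_div_const (by norm_num)
        have := tendsto_atBot_add_const_left atTop c (tendsto_neg_atTop_atBot.comp this)
        refine this.congr fun y => ?_
        simp [sub_eq_add_neg]
      have e4 := tendsto_atBot_add_const_right atTop ((B + 2) * c) (e3.comp e2)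
      refine e4.congr' ?_
      filter_upwards [eventually_gt_atTop B] with L hL
      have : L - B ≠ 0 := by linarith
      simp only [Function.comp]
      field_simp
      ring
    have := (Real.tendsto_exp_atBot.comp this).const_mul B
    rw [mul_zero] at this
    exact this
  have h2 : Tendsto (fun L => 2 * Real.exp (-L + Real.exp 1 * (|t| / √L * (L + g L)))) atTop (𝓝 0) := by
    have : Tendsto (fun L => -L + Real.exp 1 * (|t| / √L * (L + g L))) atTop atBot := by
      have e1 : Tendsto (fun L : ℝ => L * (-1 + Real.exp 1 * (|t| / √L))) atTop atBot := by
        refine tendsto_id.atTop_mul_neg (C := -1) (by norm_num) ?_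
        have := (hs.const_mul (Real.exp 1)).const_add (-1)
        simpa using this
      have := e1.atBot_add (hsg.const_mul (Real.exp 1))
      refine this.congr fun L => ?_
      ring
    have := (Real.tendsto_exp_atBot.comp this).const_mul 2
    rw [mul_zero] at this
    exact this
  have h3 : Tendsto (fun L => B * (|t| / √L) ^ 2) atTop (𝓝 0) := by
    simpa using (hs.pow 2).const_mul B
  have h4 : Tendsto (fun L => (|t| / √L) ^ 3 * (L + g L)) atTop (𝓝 0) := by
    have e1 : Tendsto (fun L : ℝ => (|t| / √L) ^ 3 * L) atTop (𝓝 0) := by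
      have := hs.const_mul (t ^ 2)
      rw [mul_zero] at this
      refine this.congr' ?_
      filter_upwards [eventually_gt_atTop 0] with L hL
      have : √L ^ 2 = L := Real.sq_sqrt hL.le
      have h0 : 0 < √L := Real.sqrt_pos.2 hL
      rw [← sq_abs t]
      field_simp
      rw [this]
    have e2 := (hs.pow 2).mul hsg
    have := e1.add e2
    simp only [ne_eq, OfNat.ofNat_ne_zero, not_false_eq_true, zero_pow, mul_zero, add_zero] at this
    refine this.congr fun L => ?_
    ring
  have h5 : Tendsto (fun L => (|t| / √L) ^ 2 * g L) atTop (𝓝 0) := by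
    have := hs.mul hsg
    simp only [mul_zero] at this
    refine this.congr fun L => ?_
    ring
  have := (((h1.add h2).add h3).add hsg).add (((h4.add hsg).add h5).const_mul 2)
  simp only [mul_zero, add_zero] at this
  exact this

lemma exp_diff_le (u a : ℂ) (hu : u.re ≤ 0) (ha : a.re ≤ 0) :
    ‖Complex.exp u - Complex.exp a‖ ≤ 2 * ‖u - a‖ := by
  have hu1 : ‖Complex.exp u‖ ≤ 1 := by rw [Complex.norm_exp, Real.exp_le_one_iff]; exact hu
  have ha1 : ‖Complex.exp a‖ ≤ 1 := by rw [Complex.norm_exp, Real.exp_le_one_iff]; exact ha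
  rcases le_total ‖u - a‖ 1 with h | h
  · have e : Complex.exp u - Complex.exp a = Complex.exp a * (Complex.exp (u - a) - 1) := by
      rw [mul_sub, ← Complex.exp_add]; ring_nf
    rw [e, norm_mul]
    have := Complex.norm_exp_sub_one_le h
    calc _ ≤ 1 * (2 * ‖u - a‖) := by gcongr
      _ = _ := one_mul _
  · have := norm_sub_le (Complex.exp u) (Complex.exp a)
    linarith

set_option maxHeartbeats 1000000 in
open Classical in
theorem clt_uniform (C : ℝ) (hC0 : 0 ≤ C) (M : ℕ) (t : ℝ) : ∃ E : ℝ → ℝ, Tendsto E atTop (𝓝 0) ∧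
    ∃ L0 : ℝ, ∀ (V : Type) (Ω : Finset V) (I : V → Ideal (𝓞 K)) (ℓ L : ℝ), L0 ≤ L → 1 < ℓ →
    |L - Real.log (Real.log ℓ)| ≤ C → (∀ v ∈ Ω, I v ≠ ⊥ ∧ nr (I v) ≤ ℓ ^ M) →
    (∀ d : Ideal (𝓞 K), d ≠ ⊥ → nr d ≤ ℓ →
      |((Ω.filter fun v => d ∣ I v).card : ℝ) - Ω.card / nr d| ≤ C / ℓ * Ω.card) →
    ‖∑ v ∈ Ω, Complex.exp (Complex.I * ((t / √L) * ((omegaI K (I v) : ℝ) - L) : ℝ)) -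
      Ω.card * Complex.exp (-(t : ℂ) ^ 2 / 2)‖ ≤ E L * Ω.card := by
  obtain ⟨_, C', _, hC', hA⟩ := card_idl_bounds K
  obtain ⟨Cm, hCm, hmert⟩ := mertens K
  obtain ⟨C₂, hC₂, hprod⟩ := prod_exp_approx K
  set B : ℝ := C + 2 * Cm + C' * C + M + C₂ with hB
  have hC'C : 0 ≤ C' * C := by positivity
  have hM0 : (0 : ℝ) ≤ M := by positivity
  set c : ℝ := 1 + Real.log (1 + 2 * C') with hc
  have hlc : 0 ≤ Real.log (1 + 2 * C') := Real.log_nonneg (by linarith)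
  refine ⟨errE t B c, errE_tendsto t B c, ?_⟩
  have hev : ∀ᶠ L : ℝ in atTop, 1 ≤ L ∧ t ^ 2 ≤ L ∧ 4 * (L + 1) ≤ Real.exp (L - C) := by
    refine (eventually_ge_atTop 1).and ((eventually_ge_atTop _).and ?_)
    have h1 : Tendsto (fun y : ℝ => Real.exp y / y) atTop atTop := by
      simpa using Real.tendsto_exp_div_pow_atTop 1
    have e2 : Tendsto (fun L : ℝ => L - C) atTop atTop := tendsto_atTop_add_const_right _ _ tendsto_id
    filter_upwards [(h1.comp e2).eventually_ge_atTop 8, eventually_ge_atTop (2 * C + 1)] with L h2 h3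
    simp only [Function.comp] at h2
    rw [le_div_iff₀ (by linarith)] at h2
    linarith
  obtain ⟨L0, hL0⟩ := eventually_atTop.1 hev
  refine ⟨L0, fun V Ω I ℓ L hL hℓ hLC hI H1 => ?_⟩
  obtain ⟨hL1, hLt, hLe⟩ := hL0 L hL
  set lam := Real.log ℓ with hlam
  have hlam0 : 0 < lam := Real.log_pos hℓ
  have hlame : Real.exp (L - C) ≤ lam := by
    rw [← Real.le_log_iff_exp_le hlam0]
    linarith [(abs_le.1 hLC).2]
  set J := ⌈L⌉₊ with hJ
  have hJL : L ≤ J := Nat.le_ceil L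
  have hJL1 : (J : ℝ) ≤ L + 1 := (Nat.ceil_lt_add_one (by linarith)).le
  have hJ0 : (0 : ℝ) < J := by linarith
  set z := Real.exp (lam / (2 * J)) with hz
  have hlz : Real.log z = lam / (2 * J) := Real.log_exp _
  have hz2 : 2 ≤ lam / (2 * J) := by
    rw [le_div_iff₀ (by linarith)]
    linarith
  have hz3 : 3 ≤ z := by
    have := Real.add_one_le_exp (lam / (2 * J))
    linarith
  have hℓexp : ℓ = Real.exp lam := (Real.exp_log (by linarith)).symm
  have hzJ : z ^ J = Real.exp (lam / 2) := by
    rw [hz, ← Real.exp_nat_mul]; congr 1; field_simp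
  have hzℓ : z ≤ ℓ := by
    rw [hℓexp, hz]
    gcongr
    rw [div_le_iff₀ (by linarith)]
    nlinarith
  have hllz : Real.log (Real.log z) = Real.log lam - Real.log (2 * J) := by
    rw [hlz, Real.log_div hlam0.ne' (by positivity)]
  have hlog2J : Real.log (2 * J) ≤ Real.log (2 * L + 2) :=
    Real.log_le_log (by positivity) (by linarith)
  have hlog2J0 : 0 ≤ Real.log (2 * J) := Real.log_nonneg (by linarith)
  have hℓ3 : 3 ≤ ℓ := hz3.trans hzℓ
  have hmz := abs_le.1 (hmert z hz3)
  have hmℓ := abs_le.1 (hmert ℓ hℓ3)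
  rw [← hlam] at hmℓ
  clear hlam
  clear_value lam
  have hLC' := abs_le.1 hLC
  set S := recSum K z with hS
  set g := B + Real.log (2 * L + 2) with hg
  have hS0 : 0 ≤ S := Finset.sum_nonneg fun p _ => by positivity
  have hg0 : 0 ≤ g := by
    have : 0 ≤ B := by positivity
    linarith
  have hSL : |S - L| ≤ g := by
    rw [abs_le]
    rw [hllz] at hmz
    constructor <;> linarith
  have hsL : 0 < √L := Real.sqrt_pos.2 (by linarith)
  set τ := t / √L with hτ
  have hτabs : |τ| = |t| / √L := by rw [hτ, abs_div, abs_of_pos hsL]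
  have hτ1 : |τ| ≤ 1 := by
    rw [hτabs, div_le_one hsL]
    exact Real.le_sqrt_of_sq_le (by rwa [sq_abs])
  have hτsq : τ ^ 2 * L = t ^ 2 := by
    rw [hτ, div_pow, Real.sq_sqrt (by linarith)]; field_simp
  have hPcard : ((prm K z).card : ℝ) ≤ C' * z := by
    refine le_trans ?_ (hA z (by linarith)).2
    exact_mod_cast Finset.card_le_card (Finset.filter_subset _ _)
  set ε := C / ℓ with hε
  have hε0 : 0 ≤ ε := by positivity
  have hcore := core_est K Ω I (prm K z) prm_prop τ ε ℓ hε0 J (by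
    intro T hT hTc
    rw [nr_prod]
    calc ∏ p ∈ T, nr p ≤ ∏ p ∈ T, z := Finset.prod_le_prod (fun _ _ => by positivity)
          fun p hp => (mem_prm.1 (hT hp)).2.1
      _ = z ^ T.card := by rw [Finset.prod_const]
      _ ≤ z ^ J := pow_le_pow_right₀ (by linarith) hTc
      _ ≤ ℓ := by rw [hzJ, hℓexp]; gcongr; linarith) H1
  have htail := tail_est K Ω I M ε ℓ z C' hε0 hℓ hzℓ (hA ℓ (by linarith)).2 hI H1
  have hpr := hprod (prm K z) prm_prop τ hτ1
  set n : ℝ := ((Ω.card : ℕ) : ℝ) with hn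
  have hnC : ((Ω.card : ℕ) : ℂ) = ((n : ℝ) : ℂ) := by simp [hn]
  rw [hnC] at hcore ⊢
  have hn0 : 0 ≤ n := by rw [hn]; exact Nat.cast_nonneg _
  set A0 : V → ℂ := fun v => Complex.exp (Complex.I * (τ * (omegaI K (I v) : ℝ) : ℝ)) with hA0
  set A1 : V → ℂ := fun v =>
    Complex.exp (Complex.I * (τ * (((prm K z).filter fun p => p ∣ I v).card : ℝ) : ℝ)) with hA1
  set Q : ℂ := ∏ p ∈ prm K z, (1 + wτ τ * ((nr p)⁻¹ : ℝ)) with hQ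
  set u : ℂ := Complex.exp (Complex.I * (-(τ * L) : ℝ)) with hu
  have hu1 : ‖u‖ = 1 := norm_expI _
  have e1 : ∑ v ∈ Ω, Complex.exp (Complex.I * (τ * ((omegaI K (I v) : ℝ) - L) : ℝ)) =
      u * ∑ v ∈ Ω, A0 v := by
    rw [Finset.mul_sum]
    refine Finset.sum_congr rfl fun v _ => ?_
    rw [hu, hA0, ← Complex.exp_add]
    congr 1; push_cast; ring
  -- pieces
  have b1 : ‖∑ v ∈ Ω, A0 v - ∑ v ∈ Ω, A1 v‖ ≤ n * (|τ| * g) := by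
    rw [← Finset.sum_sub_distrib]
    refine (norm_sum_le _ _).trans ?_
    calc _ ≤ ∑ v ∈ Ω, |τ| * |(omegaI K (I v) : ℝ) -
            (((prm K z).filter fun p => p ∣ I v).card : ℝ)| := by
          refine Finset.sum_le_sum fun v _ => ?_
          rw [← abs_mul, mul_sub]
          exact norm_expI_sub_le _ _
      _ ≤ |τ| * (n * (recSum K ℓ - recSum K z + C' * ℓ * ε + M)) := by
          rw [← Finset.mul_sum]; gcongr
      _ ≤ |τ| * (n * g) := by
          gcongr
          have hℓ0 : ℓ ≠ 0 := by linarith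
          have : C' * ℓ * ε = C' * C := by rw [hε, mul_assoc, mul_div_cancel₀ _ hℓ0]
          rw [this]
          rw [hllz] at hmz
          linarith
      _ = _ := by ring
  have b2 : (J + 1) * (1 + 2 * ((prm K z).card : ℝ)) ^ J * ε ≤
      B * Real.exp ((L + 2) * c - Real.exp (L - B) / 2) := by
    have h1 : 1 + 2 * ((prm K z).card : ℝ) ≤ (1 + 2 * C') * z := by
      rw [add_mul]; linarith
    have h2 : (J : ℝ) + 1 ≤ Real.exp J := Real.add_one_le_exp _
    have h3 : (1 + 2 * C') ^ J = Real.exp (J * Real.log (1 + 2 * C')) := by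
      rw [Real.exp_nat_mul, Real.exp_log (by positivity)]
    calc _ ≤ Real.exp J * ((1 + 2 * C') * z) ^ J * ε := by gcongr
      _ = Real.exp J * (Real.exp (J * Real.log (1 + 2 * C')) * Real.exp (lam / 2)) *
          (C * Real.exp (-lam)) := by
          rw [mul_pow, hzJ, h3, hε, Real.exp_neg, ← hℓexp, div_eq_mul_inv C ℓ]
      _ = C * Real.exp (J * c - lam / 2) := by
          have : (J * c - lam / 2 : ℝ) = J + (J * Real.log (1 + 2 * C') + lam / 2) + -lam := by
            rw [hc]; ring
          rw [this, Real.exp_add, Real.exp_add, Real.exp_add]; ring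
      _ ≤ B * Real.exp ((L + 2) * c - Real.exp (L - B) / 2) := by
          have hCB : C ≤ B := by linarith
          have : Real.exp (L - B) ≤ lam := by
            refine le_trans ?_ hlame
            gcongr
          gcongr
          linarith
  have b3 : 2 * Real.exp (-J + Real.exp 1 * (|τ| * S)) ≤
      2 * Real.exp (-L + Real.exp 1 * (|t| / √L * (L + g))) := by
    rw [← hτabs]
    gcongr
    linarith [(abs_le.1 hSL).2]
  have b4 : ‖Q - Complex.exp (wτ τ * (S : ℂ))‖ ≤ B * (|t| / √L) ^ 2 := by
    refine hpr.trans ?_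
    rw [← hτabs, sq_abs]
    gcongr
    linarith
  have b5 : ‖u * Complex.exp (wτ τ * (S : ℂ)) - Complex.exp (-(t : ℂ) ^ 2 / 2)‖ ≤
      2 * ((|t| / √L) ^ 3 * (L + g) + (|t| / √L) * g + (|t| / √L) ^ 2 * g) := by
    rw [hu, ← Complex.exp_add]
    refine (exp_diff_le _ _ ?_ ?_).trans ?_
    · rw [Complex.add_re, Complex.re_mul_ofReal, Complex.re_mul_ofReal, Complex.I_re, zero_mul, zero_add]
      exact mul_nonpos_of_nonpos_of_nonneg (wτ_re τ) hS0
    · have : (-(t : ℂ) ^ 2 / 2) = ((-t ^ 2 / 2 : ℝ) : ℂ) := by push_cast; ring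
      rw [this, Complex.ofReal_re]
      nlinarith [sq_nonneg t]
    · have e : Complex.I * ((-(τ * L) : ℝ) : ℂ) + wτ τ * (S : ℂ) - -(t : ℂ) ^ 2 / 2 =
          (wτ τ - Complex.I * τ + (τ : ℂ) ^ 2 / 2) * (S : ℂ) + Complex.I * (τ : ℂ) * ((S - L : ℝ) : ℂ)
            - ((τ ^ 2 / 2 * (S - L) : ℝ) : ℂ) := by
        have : (t : ℂ) ^ 2 = (τ : ℂ) ^ 2 * L := by exact_mod_cast hτsq.symm
        rw [this]
        push_cast; ring
      rw [e]
      gcongr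
      refine (norm_sub_le _ _).trans (add_le_add ((norm_add_le _ _).trans (add_le_add ?_ ?_)) ?_)
      · rw [norm_mul, Complex.norm_real, Real.norm_of_nonneg hS0, ← hτabs]
        gcongr
        · exact wτ_expand τ hτ1
        · linarith [(abs_le.1 hSL).2]
      · rw [norm_mul, norm_mul, Complex.norm_I, one_mul, Complex.norm_real, Complex.norm_real,
          Real.norm_eq_abs, Real.norm_eq_abs, ← hτabs]
        gcongr
      · rw [Complex.norm_real, Real.norm_eq_abs, abs_mul, ← hτabs]
        gcongr
        rw [sq_abs, abs_of_nonneg (by positivity)]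
        nlinarith [sq_nonneg τ]
  rw [e1]
  have e2 : u * ∑ v ∈ Ω, A0 v - n * Complex.exp (-(t : ℂ) ^ 2 / 2) =
      u * (∑ v ∈ Ω, A0 v - ∑ v ∈ Ω, A1 v) + u * (∑ v ∈ Ω, A1 v - n * Q) +
      n * (u * (Q - Complex.exp (wτ τ * (S : ℂ)))) +
      n * (u * Complex.exp (wτ τ * (S : ℂ)) - Complex.exp (-(t : ℂ) ^ 2 / 2)) := by ring
  rw [e2]
  have nn : ‖(n : ℂ)‖ = n := by rw [Complex.norm_real, Real.norm_of_nonneg hn0]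
  have d1 : ‖u * (∑ v ∈ Ω, A0 v - ∑ v ∈ Ω, A1 v)‖ ≤ n * (|t| / √L * g) := by
    rw [norm_mul, hu1, one_mul, ← hτabs]; exact b1
  have d2 : ‖u * (∑ v ∈ Ω, A1 v - n * Q)‖ ≤ n * (B * Real.exp ((L + 2) * c - Real.exp (L - B) / 2) +
      2 * Real.exp (-L + Real.exp 1 * (|t| / √L * (L + g)))) := by
    rw [norm_mul, hu1, one_mul]
    exact hcore.trans (mul_le_mul_of_nonneg_left (add_le_add b2 b3) hn0)
  have d3 : ‖n * (u * (Q - Complex.exp (wτ τ * (S : ℂ))))‖ ≤ n * (B * (|t| / √L) ^ 2) := by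
    rw [norm_mul, norm_mul, hu1, one_mul, nn]
    exact mul_le_mul_of_nonneg_left b4 hn0
  have d4 : ‖n * (u * Complex.exp (wτ τ * (S : ℂ)) - Complex.exp (-(t : ℂ) ^ 2 / 2))‖ ≤
      n * (2 * ((|t| / √L) ^ 3 * (L + g) + (|t| / √L) * g + (|t| / √L) ^ 2 * g)) := by
    rw [norm_mul, nn]
    exact mul_le_mul_of_nonneg_left b5 hn0
  refine (norm_add_le _ _).trans ((add_le_add ((norm_add_le _ _).trans
    (add_le_add ((norm_add_le _ _).trans (add_le_add d1 d2)) d3)) d4).trans (le_of_eq ?_))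
  rw [errE, ← hg]
  ring

end PartFour


section PartFive

open NumberField

lemma abs_prod_sub_prod_le {ι : Type*} (s : Finset ι) (m x : ι → ℝ) (hx : ∀ i ∈ s, 0 ≤ x i)
    (h : ∀ i ∈ s, |m i - x i| ≤ 1) :
    |∏ i ∈ s, m i - ∏ i ∈ s, x i| ≤ ∏ i ∈ s, (x i + 1) - ∏ i ∈ s, x i := by
  classical
  induction s using Finset.induction_on with
  | empty => simp
  | insert q s hq ih =>
    have ih' := ih (fun i hi => hx i (Finset.mem_insert_of_mem hi))
      (fun i hi => h i (Finset.mem_insert_of_mem hi))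
    have hxq := hx q (Finset.mem_insert_self _ _)
    have hq1 := h q (Finset.mem_insert_self _ _)
    rw [Finset.prod_insert hq, Finset.prod_insert hq, Finset.prod_insert hq]
    have hX : 0 ≤ ∏ i ∈ s, x i := Finset.prod_nonneg fun i hi => hx i (Finset.mem_insert_of_mem hi)
    have e : m q * ∏ i ∈ s, m i - x q * ∏ i ∈ s, x i =
      m q * (∏ i ∈ s, m i - ∏ i ∈ s, x i) + (m q - x q) * ∏ i ∈ s, x i := by ring
    rw [e]
    refine (abs_add_le _ _).trans ?_
    rw [abs_mul, abs_mul, abs_of_nonneg hX]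
    have hm : |m q| ≤ x q + 1 := by
      have := abs_le.1 hq1
      rw [abs_le]; constructor <;> linarith
    have h1 := mul_le_mul hm ih' (abs_nonneg _) (by linarith)
    have h2 := mul_le_mul_of_nonneg_right hq1 hX
    linarith

lemma one_add_pow_sub_one_le (u : ℝ) (h0 : 0 ≤ u) (h1 : u ≤ 1) (n : ℕ) :
    (1 + u) ^ n - 1 ≤ 2 ^ n * u := by
  induction n with
  | zero => simp; exact h0
  | succ n ih =>
    have h2 : (1 : ℝ) ≤ 2 ^ n := one_le_pow₀ (by norm_num)
    rw [pow_succ, pow_succ]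
    have : (1 + u) ^ n ≤ 2 ^ n := by gcongr; linarith
    nlinarith

lemma count_residue (N : ℕ) [NeZero N] (a b : ℤ) (hab : a ≤ b) (c : ZMod N) :
    |(((Finset.Ico a b).filter fun k : ℤ => (k : ZMod N) = c).card : ℝ) - ((b - a : ℤ) : ℝ) / N| ≤ 1 := by
  have hN : (0 : ℤ) < N := by exact_mod_cast Nat.pos_of_ne_zero (NeZero.ne N)
  have h1 : ((Finset.Ico a b).filter fun k : ℤ => (k : ZMod N) = c) =
      (Finset.Ico a b).filter fun k : ℤ => k ≡ (c.val : ℤ) [ZMOD N] := by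
    refine Finset.filter_congr fun k _ => ?_
    rw [← ZMod.intCast_eq_intCast_iff]
    simp
  rw [h1]
  have h2 := Int.Ico_filter_modEq_card a b hN (c.val : ℤ)
  set m := ((Finset.Ico a b).filter fun k : ℤ => k ≡ (c.val : ℤ) [ZMOD N]).card with hm
  have hNr : (0 : ℚ) < N := by exact_mod_cast hN
  set p : ℚ := ((b : ℚ) - (c.val : ℤ)) / (N : ℤ) with hp
  set q : ℚ := ((a : ℚ) - (c.val : ℤ)) / (N : ℤ) with hq
  have hpq : p - q = ((b - a : ℤ) : ℚ) / N := by
    rw [hp, hq]; push_cast; ring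
  have c1 := Int.ceil_lt_add_one p
  have c2 := Int.le_ceil p
  have c3 := Int.ceil_lt_add_one q
  have c4 := Int.le_ceil q
  have hqp : ⌈q⌉ ≤ ⌈p⌉ := by
    refine Int.ceil_mono ?_
    have : (0 : ℚ) ≤ ((b - a : ℤ) : ℚ) / N := by
      have : (0 : ℚ) ≤ ((b - a : ℤ) : ℚ) := by exact_mod_cast sub_nonneg.2 hab
      positivity
    linarith
  have h3 : (m : ℚ) = ⌈p⌉ - ⌈q⌉ := by
    have : (m : ℤ) = ⌈p⌉ - ⌈q⌉ := by
      rw [h2, max_eq_left (sub_nonneg.2 hqp)]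
    exact_mod_cast this
  have h4 : |(m : ℚ) - ((b - a : ℤ) : ℚ) / N| ≤ 1 := by
    rw [← hpq, h3, abs_le]; constructor <;> linarith
  exact_mod_cast h4

open Classical in
lemma box_count {ι Q : Type*} [Fintype ι] [AddCommGroup Q] [Finite Q]
    (f : (ι → ℤ) →+ Q) (hf : Function.Surjective f) (a b : ι → ℤ) (ℓ : ℝ)
    (hℓ : (Nat.card Q : ℝ) ≤ ℓ) (hab : ∀ i, ℓ ≤ ((b i - a i : ℤ) : ℝ)) :
    |(((Fintype.piFinset fun i => Finset.Ico (a i) (b i)).filter fun v => f v = 0).card : ℝ) -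
      ((Fintype.piFinset fun i => Finset.Ico (a i) (b i)).card : ℝ) / Nat.card Q| ≤
      2 ^ Fintype.card ι / ℓ * ((Fintype.piFinset fun i => Finset.Ico (a i) (b i)).card : ℝ) := by
  set N := Nat.card Q with hN
  have hN0 : 0 < N := Nat.card_pos
  have : NeZero N := ⟨hN0.ne'⟩
  have hNr : (0 : ℝ) < N := by exact_mod_cast hN0
  have hℓ0 : 0 < ℓ := hNr.trans_le hℓ
  set n := Fintype.card ι with hn
  have hN1 : ∀ y : Q, N • y = 0 := fun y => by rw [hN]; exact card_nsmul_eq_zero'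
  -- the homomorphism mod N
  let g : ι → (ZMod N →+ Q) := fun i => ZMod.lift N ⟨zmultiplesHom Q (f (Pi.single i 1)), by
    simp [hN1]⟩
  let ψ : (ι → ZMod N) →+ Q := ∑ i, (g i).comp (Pi.evalAddMonoidHom _ i)
  have hψ : ∀ v : ι → ℤ, ψ (fun i => (v i : ZMod N)) = f v := by
    intro v
    have e1 : v = ∑ i, v i • (Pi.single i (1 : ℤ) : ι → ℤ) := by
      ext j
      simp [Finset.sum_apply, Pi.single_apply]
    conv_rhs => rw [e1, map_sum]
    simp only [ψ, AddMonoidHom.finsetSum_apply, AddMonoidHom.comp_apply, Pi.evalAddMonoidHom_apply]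
    refine Finset.sum_congr rfl fun i _ => ?_
    simp only [g, ZMod.lift_coe, zmultiplesHom_apply, map_zsmul]
  have hψs : Function.Surjective ψ := fun y => by
    obtain ⟨v, rfl⟩ := hf y
    exact ⟨_, hψ v⟩
  set Z := (Finset.univ : Finset (ι → ZMod N)).filter fun c => ψ c = 0 with hZ
  have hcardZ : Z.card * N = N ^ n := by
    have h1 := AddSubgroup.card_eq_card_quotient_mul_card_addSubgroup ψ.ker
    rw [Nat.card_congr (QuotientAddGroup.quotientKerEquivOfSurjective ψ hψs).toEquiv] at h1
    have h2 : Nat.card (ι → ZMod N) = N ^ n := by simp [hn]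
    have h3 : Nat.card ψ.ker = Z.card := by
      refine Nat.subtype_card Z fun c => ?_
      simp [hZ, AddMonoidHom.mem_ker]
    rw [h2, h3] at h1
    rw [h1, mul_comm]
  set box := Fintype.piFinset fun i => Finset.Ico (a i) (b i) with hbox
  set r : ι → ZMod N → ℝ := fun i c => (((Finset.Ico (a i) (b i)).filter fun k : ℤ => (k : ZMod N) = c).card : ℝ)
    with hr
  set x : ι → ℝ := fun i => ((b i - a i : ℤ) : ℝ) / N with hx
  have hba : ∀ i, a i ≤ b i := fun i => by
    have : (0 : ℝ) ≤ ((b i - a i : ℤ) : ℝ) := hℓ0.le.trans (hab i)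
    have : 0 ≤ b i - a i := by exact_mod_cast this
    linarith
  have hcount : (((box.filter fun v => f v = 0).card : ℕ) : ℝ) = ∑ c ∈ Z, ∏ i, r i (c i) := by
    have h1 : (box.filter fun v => f v = 0).card = ∑ c ∈ Z, (Fintype.piFinset fun i =>
        (Finset.Ico (a i) (b i)).filter fun k : ℤ => (k : ZMod N) = c i).card := by
      rw [Finset.card_eq_sum_card_fiberwise (f := fun v : ι → ℤ => (fun i => (v i : ZMod N))) (t := Z)]
      · refine Finset.sum_congr rfl fun c hc => ?_
        congr 1
        ext v
        simp only [Finset.mem_filter, hbox, Fintype.mem_piFinset]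
        constructor
        · rintro ⟨⟨h1, h2⟩, rfl⟩
          exact fun i => ⟨h1 i, rfl⟩
        · intro h
          have e : (fun i => (v i : ZMod N)) = c := funext fun i => (h i).2
          refine ⟨⟨fun i => (h i).1, ?_⟩, e⟩
          rw [← hψ, e]
          exact (Finset.mem_filter.1 hc).2
      · intro v hv
        simp only [hZ, Finset.coe_filter, Finset.mem_univ, true_and, Set.mem_ofPred_eq]
        rw [hψ]
        exact (Finset.mem_filter.1 hv).2
    rw [h1]
    push_cast
    refine Finset.sum_congr rfl fun c _ => ?_
    rw [Fintype.card_piFinset]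
    push_cast
    rfl
  have hcardbox : ((box.card : ℕ) : ℝ) = N ^ n * ∏ i, x i := by
    rw [hbox, Fintype.card_piFinset]
    simp only [hx]
    rw [Finset.prod_div_distrib, Finset.prod_const, Finset.card_univ, ← hn]
    rw [mul_div_cancel₀ _ (by positivity)]
    push_cast
    refine Finset.prod_congr rfl fun i _ => ?_
    rw [Int.card_Ico]
    have := Int.toNat_of_nonneg (sub_nonneg.2 (hba i))
    exact_mod_cast congrArg (fun z : ℤ => (z : ℝ)) this
  have hx0 : ∀ i, 0 ≤ x i := fun i => div_nonneg (hℓ0.le.trans (hab i)) hNr.le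
  have hX0 : 0 ≤ ∏ i, x i := Finset.prod_nonneg fun i _ => hx0 i
  have hterm : ∀ c : ι → ZMod N, |∏ i, r i (c i) - ∏ i, x i| ≤ (∏ i, x i) * (2 ^ n * (N / ℓ)) := by
    intro c
    refine (abs_prod_sub_prod_le _ _ _ (fun i _ => hx0 i) fun i _ => ?_).trans ?_
    · exact count_residue N (a i) (b i) (hba i) (c i)
    · have hu1 : (N : ℝ) / ℓ ≤ 1 := (div_le_one hℓ0).2 hℓ
      have h1 : ∏ i, (x i + 1) ≤ ∏ i, (x i * (1 + N / ℓ)) := by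
        refine Finset.prod_le_prod (fun i _ => by linarith [hx0 i]) fun i _ => ?_
        have : 1 ≤ x i * (N / ℓ) := by
          simp only [hx]
          rw [div_mul_div_comm, mul_comm (N : ℝ) ℓ, le_div_iff₀ (by positivity), one_mul]
          gcongr
          exact hab i
        linarith
      rw [Finset.prod_mul_distrib, Finset.prod_const, Finset.card_univ, ← hn] at h1
      have h2 := one_add_pow_sub_one_le (N / ℓ) (by positivity) hu1 n
      have := mul_le_mul_of_nonneg_left h2 hX0
      linarith
  have hZr : (Z.card : ℝ) * N = N ^ n := by exact_mod_cast hcardZ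
  have e1 : ((box.card : ℕ) : ℝ) / N = ∑ c ∈ Z, ∏ i, x i := by
    rw [Finset.sum_const, nsmul_eq_mul, hcardbox, ← hZr]; field_simp
  rw [hcount, e1, ← Finset.sum_sub_distrib]
  refine (Finset.abs_sum_le_sum_abs _ _).trans ((Finset.sum_le_sum fun c _ => hterm c).trans_eq ?_)
  rw [Finset.sum_const, nsmul_eq_mul, hcardbox, ← hZr]
  ring

end PartFive


section Part6
open Metric
open scoped Pointwise

lemma cubes_cover {ι : Type} [Fintype ι] (D : Set (ι → ℝ)) (hb : Bornology.IsBounded D)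
    (hf : volume (frontier D) = 0) (ε : ℝ) (hε : 0 < ε) :
    ∃ (T : Finset (ι → ℝ)) (r : (ι → ℝ) → ℝ), (∀ c ∈ T, 0 < r c ∧ closedBall c (r c) ⊆ D) ∧
      (T : Set (ι → ℝ)).PairwiseDisjoint (fun c => closedBall c (r c)) ∧
      volume.real D ≤ (∑ c ∈ T, (2 * r c) ^ Fintype.card ι) + ε := by
  classical
  have hR : ∀ x : ι → ℝ, ∃ R : ℝ, 0 < R ∧ (x ∈ interior D → closedBall x R ⊆ D) := by
    intro x
    by_cases hx : x ∈ interior D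
    · obtain ⟨R, hR, h⟩ := Metric.nhds_basis_closedBall.mem_iff.1 (mem_interior_iff_mem_nhds.1 hx)
      exact ⟨R, hR, fun _ => h⟩
    · exact ⟨1, one_pos, fun h => absurd h hx⟩
  choose R hR0 hR using hR
  obtain ⟨t, r, htc, hts, hr, hcov, hdisj⟩ :=
    Besicovitch.exists_disjoint_closedBall_covering_ae (volume : Measure (ι → ℝ))
      (fun _ => Set.Ioi 0) (interior D)
      (fun x _ δ hδ => ⟨δ / 2, by simp [hδ], by simp [hδ]⟩) R (fun x _ => hR0 x)
  have hsub : ∀ c ∈ t, closedBall c (r c) ⊆ D := fun c hc =>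
    (closedBall_subset_closedBall (hr c hc).2.2.le).trans (hR c (hts hc))
  have hDfin : volume D ≠ ⊤ := hb.measure_lt_top.ne
  have hle : volume D ≤ ∑' c : t, volume (closedBall (c : ι → ℝ) (r c)) := by
    have h1 : D ⊆ frontier D ∪ ((interior D \ ⋃ x ∈ t, closedBall x (r x)) ∪ ⋃ x ∈ t, closedBall x (r x)) := by
      intro x hx
      by_cases hi : x ∈ interior D
      · right
        by_cases h : x ∈ ⋃ x ∈ t, closedBall x (r x)
        · right; exact h
        · left; exact ⟨hi, h⟩
      · left; exact ⟨subset_closure hx, hi⟩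
    calc volume D ≤ _ := measure_mono h1
      _ ≤ volume (frontier D) + (volume (interior D \ ⋃ x ∈ t, closedBall x (r x)) + volume (⋃ x ∈ t, closedBall x (r x))) :=
        (measure_union_le _ _).trans (by gcongr; exact measure_union_le _ _)
      _ = volume (⋃ x ∈ t, closedBall x (r x)) := by rw [hf, hcov]; simp
      _ ≤ _ := measure_biUnion_le _ htc _
  have hle2 : ∑' c : t, volume (closedBall (c : ι → ℝ) (r c)) ≤ volume D := by
    rw [← measure_biUnion htc hdisj (fun x _ => measurableSet_closedBall)]
    exact measure_mono (Set.iUnion₂_subset hsub)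
  have hex : ∃ F : Finset t, volume D ≤ ∑ c ∈ F, volume (closedBall (c : ι → ℝ) (r c)) + ENNReal.ofReal ε := by
    have hs := ENNReal.summable.hasSum (f := fun c : t => volume (closedBall (c : ι → ℝ) (r c)))
    by_contra hcon
    push Not at hcon
    have := le_of_tendsto (hs.add_const (ENNReal.ofReal ε) : Tendsto _ _ _) (Eventually.of_forall fun F => (hcon F).le)
    have h3 : volume D + ENNReal.ofReal ε ≤ volume D := by
      refine le_trans ?_ this
      gcongr
    have : volume D < volume D + ENNReal.ofReal ε := ENNReal.lt_add_right hDfin (by simpa using hε)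
    exact absurd h3 (not_le.2 this)
  obtain ⟨F, hF⟩ := hex
  refine ⟨F.image Subtype.val, r, ?_, ?_, ?_⟩
  · intro c hc
    obtain ⟨c', -, rfl⟩ := Finset.mem_image.1 hc
    exact ⟨(hr _ c'.2).2.1, hsub _ c'.2⟩
  · refine hdisj.subset ?_
    intro c hc
    obtain ⟨c', -, rfl⟩ := Finset.mem_image.1 (Finset.mem_coe.1 hc)
    exact c'.2
  · rw [Finset.sum_image (fun a _ b _ h => Subtype.ext h)]
    have h1 : ∀ c : t, volume (closedBall (c : ι → ℝ) (r c)) = ENNReal.ofReal ((2 * r c) ^ Fintype.card ι) :=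
      fun c => Real.volume_pi_closedBall _ (hr _ c.2).2.1.le
    simp_rw [h1] at hF
    rw [← ENNReal.ofReal_sum_of_nonneg (fun c _ => pow_nonneg (mul_nonneg two_pos.le (hr _ c.2).2.1.le) _)] at hF
    have h0 : 0 ≤ ∑ c ∈ F, (2 * r c) ^ Fintype.card ι :=
      Finset.sum_nonneg (fun c _ => pow_nonneg (mul_nonneg two_pos.le (hr _ c.2).2.1.le) _)
    rw [← ENNReal.ofReal_add h0 hε.le] at hF
    have := ENNReal.toReal_mono ENNReal.ofReal_ne_top hF
    rwa [ENNReal.toReal_ofReal (by positivity)] at this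

/-- integer points in a scaled cube -/
def zbox {ι : Type} [Fintype ι] (c : ι → ℝ) (r s : ℝ) : Finset (ι → ℤ) :=
  open Classical in Fintype.piFinset fun i => Finset.Ico ⌈s * (c i - r)⌉ (⌊s * (c i + r)⌋ + 1)

lemma mem_zbox {ι : Type} [Fintype ι] {c : ι → ℝ} {r s : ℝ} (hr : 0 ≤ r) (hs : 0 < s) (v : ι → ℤ) :
    v ∈ zbox c r s ↔ (s⁻¹ • (fun i => (v i : ℝ))) ∈ closedBall c r := by
  classical
  rw [mem_closedBall, dist_pi_le_iff hr, zbox, Fintype.mem_piFinset]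
  refine forall_congr' fun i => ?_
  rw [Finset.mem_Ico, Int.lt_add_one_iff, Int.ceil_le, Int.le_floor, Real.dist_eq, abs_le]
  simp only [Pi.smul_apply, smul_eq_mul]
  have h1 : s⁻¹ * (v i : ℝ) = v i / s := by ring
  rw [h1, neg_le_sub_iff_le_add, sub_le_iff_le_add, div_le_iff₀ hs, ← sub_le_iff_le_add,
    le_div_iff₀ hs]
  constructor <;> rintro ⟨h, h'⟩ <;> constructor <;> nlinarith

lemma card_zbox_lower {ι : Type} [Fintype ι] {c : ι → ℝ} {r s : ℝ} (h : 1 ≤ 2 * r * s) :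
    (2 * r * s - 1) ^ Fintype.card ι ≤ ((zbox c r s).card : ℝ) := by
  classical
  rw [zbox, Fintype.card_piFinset, Nat.cast_prod, ← Finset.card_univ, ← Finset.prod_const]
  refine Finset.prod_le_prod (fun i _ => by linarith) fun i _ => ?_
  rw [Int.card_Ico]
  have h1 := Int.ceil_lt_add_one (s * (c i - r))
  have h2 := Int.lt_floor_add_one (s * (c i + r))
  have h3 : (((⌊s * (c i + r)⌋ + 1 - ⌈s * (c i - r)⌉ : ℤ)) : ℝ) ≤ (((⌊s * (c i + r)⌋ + 1 - ⌈s * (c i - r)⌉).toNat : ℤ) : ℝ) := by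
    exact_mod_cast Int.self_le_toNat _
  push_cast at h3
  nlinarith

lemma tendsto_count {ι : Type} [Fintype ι] (D : Set (ι → ℝ)) (hb : Bornology.IsBounded D)
    (hm : MeasurableSet D) (hf : volume (frontier D) = 0)
    (hmono : ∀ ⦃x y : ℝ⦄, 0 < x → x ≤ y → x • D ⊆ y • D) :
    Tendsto (fun s : ℝ => (Nat.card {v : ι → ℤ // (s⁻¹ • (fun i => (v i : ℝ))) ∈ D} : ℝ) / s ^ Fintype.card ι)
      atTop (𝓝 (volume.real D)) := by
  refine (tendsto_card_div_pow_atTop_volume' D hb hm hf hmono).congr' ?_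
  filter_upwards [eventually_gt_atTop 0] with s hs
  congr 2
  symm
  have hs' : s⁻¹ ≠ 0 := inv_ne_zero hs.ne'
  refine Nat.card_congr (Equiv.ofBijective (fun v => ⟨s⁻¹ • (fun i => (v.1 i : ℝ)), v.2, ?_⟩) ⟨?_, ?_⟩)
  · refine Set.smul_mem_smul_set ?_
    rw [SetLike.mem_coe, Module.Basis.mem_span_iff_repr_mem]
    intro i
    simp
  · intro v w hvw
    have h1 := congrArg Subtype.val hvw
    have h2 := smul_right_injective (ι → ℝ) hs' h1
    apply Subtype.ext
    funext i
    have := congrFun h2 i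
    exact_mod_cast this
  · rintro ⟨x, hxD, y, hy, hxy⟩
    rw [SetLike.mem_coe, Module.Basis.mem_span_iff_repr_mem] at hy
    simp only [Pi.basisFun_repr] at hy
    choose v hv using hy
    have hyv : y = fun i => (v i : ℝ) := by
      funext i; rw [← hv i]; simp
    subst hyv
    exact ⟨⟨v, by have h5 := hxD; rw [← hxy] at h5; exact h5⟩, Subtype.ext hxy⟩


lemma lattice_sum {ι : Type} [Fintype ι] (D : Set (ι → ℝ)) (hb : Bornology.IsBounded D)
    (hm : MeasurableSet D) (hf : volume (frontier D) = 0)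
    (hmono : ∀ ⦃x y : ℝ⦄, 0 < x → x ≤ y → x • D ⊆ y • D) (ε : ℝ) (hε : 0 < ε) :
    ∃ (T : Finset (ι → ℝ)) (r : (ι → ℝ) → ℝ), (∀ c ∈ T, 0 < r c) ∧ ∃ s0 > (0 : ℝ), ∀ s ≥ s0,
      ∀ S : Finset (ι → ℤ), (∀ v, v ∈ S ↔ (s⁻¹ • (fun i => (v i : ℝ))) ∈ D) →
        (∀ c ∈ T, zbox c (r c) s ⊆ S) ∧
        ∀ (g : (ι → ℤ) → ℂ) (z : ℂ) (E : ℝ), 0 ≤ E → (∀ v, ‖g v‖ ≤ 1) → ‖z‖ ≤ 1 →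
          (∀ c ∈ T, ‖∑ v ∈ zbox c (r c) s, g v - (zbox c (r c) s).card * z‖ ≤ E * (zbox c (r c) s).card) →
          ‖∑ v ∈ S, g v - S.card * z‖ ≤ (E * (volume.real D + 1) + 2 * ε) * s ^ Fintype.card ι := by
  classical
  obtain ⟨T, r, hr, hdisj, hvol⟩ := cubes_cover D hb hf (ε / 3) (by positivity)
  have hcount := tendsto_count D hb hm hf hmono
  set n := Fintype.card ι with hn
  set V := volume.real D
  -- cubes
  have hcub : ∀ᶠ s : ℝ in atTop, ∑ c ∈ T, (2 * r c) ^ n - ε / 3 ≤ ∑ c ∈ T, (2 * r c - s⁻¹) ^ n := by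
    have : Tendsto (fun s : ℝ => ∑ c ∈ T, (2 * r c - s⁻¹) ^ n) atTop (𝓝 (∑ c ∈ T, (2 * r c - 0) ^ n)) :=
      tendsto_finsetSum _ fun c _ => (tendsto_const_nhds.sub tendsto_inv_atTop_zero).pow n
    simp only [sub_zero] at this
    exact this.eventually_const_le (by linarith)
  have hrs : ∀ᶠ s : ℝ in atTop, ∀ c ∈ T, 1 ≤ 2 * r c * s := by
    rw [Finset.eventually_all]
    intro c hc
    exact (tendsto_id.const_mul_atTop (by have := (hr c hc).1; positivity : 0 < 2 * r c)).eventually_ge_atTop 1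
  have hup : ∀ᶠ s : ℝ in atTop, (Nat.card {v : ι → ℤ // (s⁻¹ • (fun i => (v i : ℝ))) ∈ D} : ℝ) / s ^ n ≤ V + min 1 (ε / 3) :=
    hcount.eventually_le_const (by have : 0 < min 1 (ε / 3) := by positivity
                                   linarith)
  obtain ⟨s0, hs0⟩ := eventually_atTop.1 (hcub.and (hrs.and (hup.and (eventually_gt_atTop 0))))
  refine ⟨T, r, fun c hc => (hr c hc).1, max s0 1, by positivity, fun s hs S hS => ?_⟩
  obtain ⟨h1, h2, h3, h4⟩ := hs0 s (le_trans (le_max_left _ _) hs)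
  have hsub : ∀ c ∈ T, zbox c (r c) s ⊆ S := by
    intro c hc v hv
    rw [hS]
    exact (hr c hc).2 ((mem_zbox (hr c hc).1.le h4 v).1 hv)
  refine ⟨hsub, fun g z E hE hg hz hbox => ?_⟩
  have hcard : Nat.card {v : ι → ℤ // (s⁻¹ • (fun i => (v i : ℝ))) ∈ D} = S.card := by
    rw [← Nat.card_eq_finsetCard]
    exact Nat.card_congr (Equiv.subtypeEquivRight fun v => (hS v).symm)
  rw [hcard, div_le_iff₀ (by positivity)] at h3
  set U : Finset (ι → ℤ) := T.biUnion fun c => zbox c (r c) s with hU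
  have hUd : (T : Set (ι → ℝ)).PairwiseDisjoint (fun c => zbox c (r c) s) := by
    intro c hc c' hc' hne
    rw [Function.onFun, Finset.disjoint_left]
    intro v hv hv'
    exact Set.disjoint_left.1 (hdisj hc hc' hne) ((mem_zbox (hr c hc).1.le h4 v).1 hv)
      ((mem_zbox (hr c' hc').1.le h4 v).1 hv')
  have hUS : U ⊆ S := Finset.biUnion_subset.2 hsub
  have hUcard : U.card = ∑ c ∈ T, (zbox c (r c) s).card := Finset.card_biUnion hUd
  have hUlow : (V - 2 * (ε / 3)) * s ^ n ≤ U.card := by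
    rw [hUcard]
    push_cast
    calc (V - 2 * (ε / 3)) * s ^ n ≤ (∑ c ∈ T, (2 * r c - s⁻¹) ^ n) * s ^ n := by
          gcongr; linarith
      _ = ∑ c ∈ T, (2 * r c * s - 1) ^ n := by
          rw [Finset.sum_mul]
          refine Finset.sum_congr rfl fun c _ => ?_
          rw [← mul_pow]; congr 1; field_simp
      _ ≤ _ := Finset.sum_le_sum fun c hc => card_zbox_lower (h2 c hc)
  have hdiff : ((S \ U).card : ℝ) ≤ ε * s ^ n := by
    rw [Finset.card_sdiff_of_subset hUS, Nat.cast_sub (Finset.card_le_card hUS)]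
    have : min 1 (ε / 3) ≤ ε / 3 := min_le_right _ _
    have := mul_le_mul_of_nonneg_right this (by positivity : 0 ≤ s ^ n)
    nlinarith
  have hsplit : ∑ v ∈ S, g v - S.card * z = (∑ c ∈ T, (∑ v ∈ zbox c (r c) s, g v - (zbox c (r c) s).card * z))
      + (∑ v ∈ S \ U, (g v - z)) := by
    have e1 : ∀ X : Finset (ι → ℤ), ∑ v ∈ X, g v - X.card * z = ∑ v ∈ X, (g v - z) := by
      intro X; rw [Finset.sum_sub_distrib]; simp
    simp_rw [e1]
    rw [← Finset.sum_biUnion hUd, add_comm, Finset.sum_sdiff hUS]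
  rw [hsplit]
  have hA : ‖∑ c ∈ T, (∑ v ∈ zbox c (r c) s, g v - (zbox c (r c) s).card * z)‖ ≤ E * ((V + 1) * s ^ n) := by
    calc _ ≤ ∑ c ∈ T, E * ((zbox c (r c) s).card : ℝ) := (norm_sum_le _ _).trans (Finset.sum_le_sum hbox)
      _ = E * U.card := by rw [hUcard, Nat.cast_sum, Finset.mul_sum]
      _ ≤ E * ((V + 1) * s ^ n) := by
          gcongr
          calc (U.card : ℝ) ≤ S.card := by exact_mod_cast Finset.card_le_card hUS
            _ ≤ _ := h3.trans (by gcongr; exact min_le_left _ _)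
  have hB : ‖∑ v ∈ S \ U, (g v - z)‖ ≤ 2 * (ε * s ^ n) := by
    calc _ ≤ ∑ v ∈ S \ U, (2 : ℝ) := (norm_sum_le _ _).trans (Finset.sum_le_sum fun v _ =>
            (norm_sub_le _ _).trans (by linarith [hg v]))
      _ = 2 * (S \ U).card := by rw [Finset.sum_const, nsmul_eq_mul, mul_comm]
      _ ≤ _ := by gcongr
  calc _ ≤ _ := norm_add_le _ _
    _ ≤ E * ((V + 1) * s ^ n) + 2 * (ε * s ^ n) := add_le_add hA hB
    _ = _ := by ring

end Part6

section Part7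
open NumberField NumberField.mixedEmbedding NumberField.mixedEmbedding.fundamentalCone
open scoped nonZeroDivisors Pointwise

lemma exists_param (J : (Ideal (𝓞 K))⁰) : ∃ (ι : Type) (_ : Fintype ι) (α : (ι → ℤ) →+ 𝓞 K)
    (φ : (ι → ℝ) ≃L[ℝ] mixedSpace K), Fintype.card ι = Module.finrank ℚ K ∧
    (∀ v, mixedEmbedding K (α v : K) = φ (fun i => (v i : ℝ))) ∧
    (∀ a, a ∈ J.1 ↔ ∃ v, α v = a) := by
  classical
  set I := FractionalIdeal.mk0 K J with hI
  let b := fractionalIdealLatticeBasis K I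
  have hmem : ∀ x : K, x ∈ (I : Set K) ↔ ∃ a ∈ J.1, algebraMap (𝓞 K) K a = x := by
    intro x
    rw [hI, FractionalIdeal.coe_mk0, SetLike.mem_coe, FractionalIdeal.mem_coeIdeal]
  have hb : ∀ i, ∃ a ∈ J.1, algebraMap (𝓞 K) K a = basisOfFractionalIdeal K I i := by
    intro i
    rw [← hmem, ← mem_span_basisOfFractionalIdeal]
    exact Submodule.subset_span ⟨i, rfl⟩
  choose a haJ ha using hb
  have hφ : ∀ v : Module.Free.ChooseBasisIndex ℤ I → ℤ, mixedEmbedding K ((∑ i, v i • a i : 𝓞 K) : K) = b.equivFun.symm (fun i => (v i : ℝ)) := by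
    intro v
    rw [Module.Basis.equivFun_symm_apply]
    simp only [map_sum, zsmul_eq_mul, map_mul, map_intCast, b, fractionalIdealLatticeBasis_apply]
    refine Finset.sum_congr rfl fun i _ => ?_
    rw [← ha i, ← zsmul_eq_mul, ← Int.cast_smul_eq_zsmul ℝ]
  refine ⟨Module.Free.ChooseBasisIndex ℤ I, inferInstance,
    { toFun := fun v => ∑ i, v i • a i
      map_zero' := by simp
      map_add' := fun v w => by simp [add_smul, Finset.sum_add_distrib] },
    b.equivFun.symm.toContinuousLinearEquiv, ?_, hφ, ?_⟩
  · rw [← mixedEmbedding.finrank, Module.finrank_eq_card_basis b]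
  · intro x
    constructor
    · intro hx
      have h1 : algebraMap (𝓞 K) K x ∈ (I : Set K) := (hmem _).2 ⟨x, hx, rfl⟩
      rw [← mem_span_basisOfFractionalIdeal, Submodule.mem_span_range_iff_exists_fun] at h1
      obtain ⟨c, hc⟩ := h1
      refine ⟨c, ?_⟩
      apply RingOfIntegers.coe_injective
      change algebraMap (𝓞 K) K (∑ i, c i • a i) = algebraMap (𝓞 K) K x
      rw [← hc]
      simp [ha]
    · rintro ⟨v, rfl⟩
      exact sum_mem fun i _ => zsmul_mem (haJ i) _

/-- the region in coordinates -/
lemma region {ι : Type} [Fintype ι] (φ : (ι → ℝ) ≃L[ℝ] mixedSpace K) :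
    Bornology.IsBounded (φ ⁻¹' normLeOne K) ∧ MeasurableSet (φ ⁻¹' normLeOne K) ∧
    volume (frontier (φ ⁻¹' normLeOne K)) = 0 ∧
    (∀ ⦃x y : ℝ⦄, 0 < x → x ≤ y → x • (φ ⁻¹' normLeOne K) ⊆ y • (φ ⁻¹' normLeOne K)) ∧
    ∀ s : ℝ, 0 < s → ∀ v, s⁻¹ • v ∈ φ ⁻¹' normLeOne K ↔
      (φ v ∈ fundamentalCone K ∧ mixedEmbedding.norm (φ v) ≤ s ^ Module.finrank ℚ K) := by
  classical
  have hmem : ∀ s : ℝ, 0 < s → ∀ v, s⁻¹ • v ∈ φ ⁻¹' normLeOne K ↔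
      (φ v ∈ fundamentalCone K ∧ mixedEmbedding.norm (φ v) ≤ s ^ Module.finrank ℚ K) := by
    intro s hs v
    rw [Set.mem_preimage, map_smul, mem_normLeOne, smul_mem_iff_mem (inv_ne_zero hs.ne'),
      mixedEmbedding.norm_smul, abs_of_pos (inv_pos.2 hs), inv_pow, inv_mul_le_iff₀ (by positivity),
      mul_one]
  refine ⟨φ.antilipschitz.isBounded_preimage (isBounded_normLeOne K),
    φ.continuous.measurable (measurableSet_normLeOne K), ?_, ?_, hmem⟩
  · rw [← φ.coe_toHomeomorph, ← Homeomorph.preimage_frontier, φ.coe_toHomeomorph]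
    have h0 := volume_frontier_normLeOne K
    have hac : (volume.map φ) ≪ (volume : Measure (mixedSpace K)) := by
      have : (Measure.map φ (volume : Measure (ι → ℝ))).IsAddHaarMeasure :=
        φ.isAddHaarMeasure_map volume
      exact Measure.absolutelyContinuous_isAddHaarMeasure _ _
    have := hac h0
    rwa [Measure.map_apply φ.continuous.measurable measurableSet_frontier] at this
  · intro x y hx hxy v hv
    have hy := hx.trans_le hxy
    rw [Set.mem_smul_set_iff_inv_smul_mem₀ hx.ne', hmem x hx] at hv
    rw [Set.mem_smul_set_iff_inv_smul_mem₀ hy.ne', hmem y hy]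
    exact ⟨hv.1, hv.2.trans (by gcongr)⟩


lemma quot_hom {A V : Type} [AddCommGroup A] [AddCommGroup V] (G H : AddSubgroup A) (α : V →+ A)
    (hα : ∀ a, a ∈ G ↔ ∃ v, α v = a) :
    ∃ (Q : Type) (_ : AddCommGroup Q) (f : V →+ Q), Function.Surjective f ∧
      Nat.card Q = H.relIndex G ∧ ∀ v, f v = 0 ↔ α v ∈ H := by
  let α' : V →+ G := α.codRestrict G (fun v => (hα _).2 ⟨v, rfl⟩)
  refine ⟨G ⧸ H.addSubgroupOf G, inferInstance, (QuotientAddGroup.mk' _).comp α', ?_, rfl, ?_⟩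
  · intro q
    obtain ⟨⟨x, hx⟩, rfl⟩ := QuotientAddGroup.mk'_surjective _ q
    obtain ⟨v, hv⟩ := (hα x).1 hx
    exact ⟨v, congrArg (QuotientAddGroup.mk' _) (Subtype.ext hv)⟩
  · intro v
    rw [AddMonoidHom.comp_apply, QuotientAddGroup.mk'_apply, QuotientAddGroup.eq_zero_iff,
      AddSubgroup.mem_addSubgroupOf]
    rfl

lemma dvd_box (J : (Ideal (𝓞 K))⁰) {ι : Type} [Fintype ι] (α : (ι → ℤ) →+ 𝓞 K)
    (hα : ∀ a, a ∈ J.1 ↔ ∃ v, α v = a) (d : Ideal (𝓞 K)) (hd : d ≠ ⊥) :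
    ∃ (Q : Type) (_ : AddCommGroup Q) (_ : Finite Q) (f : (ι → ℤ) →+ Q), Function.Surjective f ∧
      (Nat.card Q : ℝ) = nr d ∧ ∀ v, f v = 0 ↔ α v ∈ J.1 * d := by
  have hJ0 : Ideal.absNorm J.1 ≠ 0 := Ideal.absNorm_ne_zero_of_nonZeroDivisors J
  have hle : (J.1 * d).toAddSubgroup ≤ J.1.toAddSubgroup :=
    Submodule.toAddSubgroup_mono (Ideal.mul_le_left : J.1 * d ≤ J.1)
  obtain ⟨Q, i1, f, hf, hQ, hf0⟩ := quot_hom J.1.toAddSubgroup (J.1 * d).toAddSubgroup α hα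
  have hcard : Nat.card Q = Ideal.absNorm d := by
    have h1 := AddSubgroup.relIndex_mul_index hle
    have h2 : (J.1 * d).toAddSubgroup.index = Ideal.absNorm J.1 * Ideal.absNorm d :=
      (Ideal.absNorm_eq_index (J.1 * d)).symm.trans (map_mul Ideal.absNorm J.1 d)
    have h3 : J.1.toAddSubgroup.index = Ideal.absNorm J.1 := (Ideal.absNorm_eq_index J.1).symm
    rw [h2, h3, mul_comm, ← hQ] at h1
    exact mul_left_cancel₀ hJ0 h1
  have hfin : Finite Q := Nat.finite_of_card_ne_zero (by
    rw [hcard]; exact mt Ideal.absNorm_eq_zero_iff.1 hd)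
  exact ⟨Q, i1, hfin, f, hf, by rw [hcard, nr], hf0⟩

lemma fiber_card (J : (Ideal (𝓞 K))⁰) {ι : Type} [Fintype ι] (α : (ι → ℤ) →+ 𝓞 K)
    (φ : (ι → ℝ) ≃L[ℝ] mixedSpace K)
    (hφ : ∀ v, mixedEmbedding K (α v : K) = φ (fun i => (v i : ℝ)))
    (hα : ∀ a, a ∈ J.1 ↔ ∃ v, α v = a) (P : (Ideal (𝓞 K))⁰) (hP : Submodule.IsPrincipal P.1) (hPJ : J.1 ∣ P.1) :
    Nat.card {v : ι → ℤ // φ (fun i => (v i : ℝ)) ∈ fundamentalCone K ∧ Ideal.span {α v} = P.1} =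
      Nat.card (Units.torsion K) := by
  have e2 : {a : integerSet K // (integerSetEquiv K a).1 = ⟨P, hP⟩} ≃ Units.torsion K := by
    refine ((integerSetEquiv K).subtypeEquiv (q := fun x => x.1 = ⟨P, hP⟩) fun a => Iff.rfl).trans ?_
    exact ⟨fun x => x.1.2, fun t => ⟨(⟨P, hP⟩, t), rfl⟩, fun x => Subtype.ext (Prod.ext x.2.symm rfl), fun t => rfl⟩
  rw [← Nat.card_congr e2]
  have hmem : ∀ v : ι → ℤ, φ (fun i => (v i : ℝ)) ∈ fundamentalCone K → mixedEmbedding K (α v : K) ∈ integerSet K :=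
    fun v hv => mem_integerSet.2 ⟨by rw [hφ]; exact hv, α v, rfl⟩
  refine Nat.card_congr (Equiv.ofBijective (fun v => ⟨⟨mixedEmbedding K (α v.1 : K), hmem v.1 v.2.1⟩, ?_⟩) ⟨?_, ?_⟩)
  · apply Subtype.ext
    apply Subtype.ext
    rw [integerSetEquiv_apply_fst, preimageOfMemIntegerSet_mixedEmbedding]
    exact v.2.2
  · intro v w hvw
    have h1 := congrArg (fun x => (x.1.1 : mixedSpace K)) hvw
    simp only [hφ] at h1
    have h2 := φ.injective h1
    apply Subtype.ext
    funext i
    exact_mod_cast congrFun h2 i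
  · rintro ⟨⟨a, ha⟩, ha2⟩
    obtain ⟨h1, x, rfl⟩ := mem_integerSet.1 ha
    have h3 : Ideal.span {x} = P.1 := by
      have := congrArg (fun y => (y.1.1 : Ideal (𝓞 K))) ha2
      simp only at this
      rw [integerSetEquiv_apply_fst, preimageOfMemIntegerSet_mixedEmbedding] at this
      exact this
    have h4 : x ∈ J.1 := by
      have : Ideal.span {x} ≤ J.1 := by rw [h3]; exact Ideal.le_of_dvd hPJ
      exact this (Ideal.mem_span_singleton_self x)
    obtain ⟨v, rfl⟩ := (hα x).1 h4
    exact ⟨⟨v, by rw [← hφ]; exact h1, h3⟩, rfl⟩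

lemma tendsto_loglog (n : ℕ) (hn : 0 < n) (a b : ℝ) :
    Tendsto (fun u : ℝ => Real.log (n * u - a) - Real.log (u + b)) atTop (𝓝 (Real.log n)) := by
  have hn' : (0 : ℝ) < n := by exact_mod_cast hn
  have h1 : Tendsto (fun u : ℝ => (n - a * u⁻¹) / (1 + b * u⁻¹)) atTop (𝓝 ((n - a * 0) / (1 + b * 0))) :=
    (tendsto_const_nhds.sub (tendsto_inv_atTop_zero.const_mul a)).div
      (tendsto_const_nhds.add (tendsto_inv_atTop_zero.const_mul b)) (by simp)
  have h2 := h1.log (by simp [hn'.ne'])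
  simp only [mul_zero, sub_zero, add_zero, div_one] at h2
  refine h2.congr' ?_
  filter_upwards [eventually_gt_atTop 0, eventually_gt_atTop (-b), eventually_gt_atTop (a / n)] with u h0 h3 h4
  rw [div_lt_iff₀ hn'] at h4
  rw [← Real.log_div (by linarith) (by linarith)]
  congr 1
  field_simp

end Part7

section Part8
open NumberField NumberField.mixedEmbedding NumberField.mixedEmbedding.fundamentalCone
open scoped nonZeroDivisors Pointwise

/-- The basic summand. -/
def gsum (t L : ℝ) (a : Ideal (𝓞 K)) : ℂ :=
  Complex.exp (Complex.I * ((t / √L) * ((omegaI K a : ℝ) - L) : ℝ))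

lemma norm_gsum (t L : ℝ) (a : Ideal (𝓞 K)) : ‖gsum K t L a‖ = 1 := norm_expI _

lemma norm_gauss (t : ℝ) : ‖Complex.exp (-(t : ℂ) ^ 2 / 2)‖ ≤ 1 := by
  rw [Complex.norm_exp, Real.exp_le_one_iff]
  have : (-(t : ℂ) ^ 2 / 2) = ((-t ^ 2 / 2 : ℝ) : ℂ) := by push_cast; ring
  rw [this, Complex.ofReal_re]
  nlinarith [sq_nonneg t]

open Classical in
lemma param_sum (J : (Ideal (𝓞 K))⁰) {ι : Type} [Fintype ι] (α : (ι → ℤ) →+ 𝓞 K)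
    (φ : (ι → ℝ) ≃L[ℝ] mixedSpace K)
    (hφ : ∀ v, mixedEmbedding K (α v : K) = φ (fun i => (v i : ℝ)))
    (hα : ∀ a, a ∈ J.1 ↔ ∃ v, α v = a) (Iv : (ι → ℤ) → Ideal (𝓞 K))
    (hIv : ∀ v, Ideal.span {α v} = J.1 * Iv v) (y : ℝ) (S : Finset (ι → ℤ))
    (hS : ∀ v, v ∈ S ↔ φ (fun i => (v i : ℝ)) ∈ fundamentalCone K ∧
      mixedEmbedding.norm (φ (fun i => (v i : ℝ))) ≤ y * nr J.1) :
    (∀ v ∈ S, Iv v ≠ ⊥ ∧ nr (Iv v) ≤ y) ∧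
    ∀ g : Ideal (𝓞 K) → ℂ, ∑ v ∈ S, g (Iv v) = (Nat.card (Units.torsion K) : ℂ) *
      ∑ a ∈ (idl K y).filter (fun a => Submodule.IsPrincipal (J.1 * a)), g a := by
  have hJ0 : J.1 ≠ ⊥ := nonZeroDivisors.ne_zero J.2
  have hnJ : 0 < nr J.1 := nr_pos hJ0
  have hnorm : ∀ v, mixedEmbedding.norm (φ (fun i => (v i : ℝ))) = nr J.1 * nr (Iv v) := by
    intro v
    rw [← hφ, mixedEmbedding.norm_eq_norm, ← nr_mul, ← hIv, nr, Ideal.absNorm_span_singleton,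
      Nat.cast_natAbs, ← Rat.cast_intCast, Int.cast_abs, Algebra.coe_norm_int]
  have hne : ∀ v, φ (fun i => (v i : ℝ)) ∈ fundamentalCone K → Iv v ≠ ⊥ := by
    intro v hv h0
    have h1 := norm_pos_of_mem hv
    rw [hnorm, h0] at h1
    simp [nr] at h1
  have h1 : ∀ v ∈ S, Iv v ≠ ⊥ ∧ nr (Iv v) ≤ y := by
    intro v hv
    obtain ⟨h2, h3⟩ := (hS v).1 hv
    refine ⟨hne v h2, ?_⟩
    rw [hnorm, mul_comm] at h3
    exact le_of_mul_le_mul_right h3 hnJ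
  refine ⟨h1, fun g => ?_⟩
  rw [← Finset.sum_fiberwise_of_maps_to (s := S) (t := (idl K y).filter (fun a => Submodule.IsPrincipal (J.1 * a)))
    (g := Iv), Finset.mul_sum]
  · refine Finset.sum_congr rfl fun a ha => ?_
    obtain ⟨ha1, ha2⟩ := Finset.mem_filter.1 ha
    obtain ⟨ha0, hay⟩ := mem_idl.1 ha1
    rw [Finset.sum_congr rfl (g := fun _ => g a) (fun v hv => by rw [(Finset.mem_filter.1 hv).2]),
      Finset.sum_const, nsmul_eq_mul]
    congr 2
    have hP0 : J.1 * a ≠ ⊥ := mul_ne_zero hJ0 ha0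
    rw [← fiber_card K J α φ hφ hα ⟨J.1 * a, mem_nonZeroDivisors_of_ne_zero hP0⟩ ha2 (dvd_mul_right _ _),
      ← Nat.card_eq_finsetCard]
    refine Nat.card_congr (Equiv.subtypeEquivRight fun v => ?_)
    rw [Finset.mem_filter, hS, hnorm, hIv]
    constructor
    · rintro ⟨⟨h2, -⟩, rfl⟩
      exact ⟨h2, rfl⟩
    · rintro ⟨h2, h3⟩
      have h4 : Iv v = a := mul_left_cancel₀ (hJ0 : J.1 ≠ 0) h3
      refine ⟨⟨h2, ?_⟩, h4⟩
      rw [h4, mul_comm]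
      gcongr
  · intro v hv
    obtain ⟨h2, h3⟩ := h1 v hv
    refine Finset.mem_filter.2 ⟨mem_idl.2 ⟨h2, h3⟩, ?_⟩
    rw [← hIv]
    exact ⟨α v, rfl⟩


open Classical in
lemma class_sum (J : (Ideal (𝓞 K))⁰) (C : ℝ) (hC : 0 ≤ C) (t ε : ℝ) (hε : 0 < ε) :
    ∀ᶠ y : ℝ in atTop, ∀ L : ℝ, |L - Real.log (Real.log y)| ≤ C →
      ‖∑ a ∈ (idl K y).filter (fun a => Submodule.IsPrincipal (J.1 * a)), gsum K t L a -
        ((idl K y).filter (fun a => Submodule.IsPrincipal (J.1 * a))).card * Complex.exp (-(t : ℂ) ^ 2 / 2)‖ ≤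
        ε * y := by
  obtain ⟨ι, _, α, φ, hcard, hφ, hα⟩ := exists_param K J
  obtain ⟨hDb, hDm, hDf, hDmono, hDmem⟩ := region K φ
  set D := φ ⁻¹' normLeOne K with hD
  set n := Module.finrank ℚ K with hn
  have hn0 : 0 < n := Module.finrank_pos
  have hn1 : (1 : ℝ) ≤ n := by exact_mod_cast hn0
  have hlogn : 0 ≤ Real.log n := Real.log_nonneg hn1
  have hJ0 : J.1 ≠ ⊥ := nonZeroDivisors.ne_zero J.2
  set NJ := nr J.1 with hNJ
  have hNJ1 : 1 ≤ NJ := one_le_nr hJ0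
  have hNJ0 : 0 < NJ := by linarith
  have hdiv : ∀ v, ∃ I, Ideal.span {α v} = J.1 * I := fun v =>
    Ideal.dvd_iff_le.2 ((Ideal.span_singleton_le_iff_mem _).2 ((hα _).2 ⟨v, rfl⟩))
  choose Iv hIv using hdiv
  set V := volume.real D with hV
  have hV0 : 0 ≤ V := measureReal_nonneg
  set ε1 := ε / (2 * (V + 1) * NJ) with hε1
  set ε2 := ε / (4 * NJ) with hε2
  have hε1p : 0 < ε1 := by positivity
  have hε2p : 0 < ε2 := by positivity
  set C' : ℝ := C + (Real.log n + 1) + 2 ^ n with hC'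
  obtain ⟨E, hE, L0, hclt⟩ := clt_uniform K C' (by positivity) (2 * n) t
  obtain ⟨L1, hL1⟩ := eventually_atTop.1 (hE.abs.eventually_le_const (by simpa using hε1p : |(0 : ℝ)| < ε1))
  obtain ⟨T, r, hr, s0, hs0, hmain⟩ := lattice_sum D hDb hDm hDf hDmono ε2 hε2p
  let s : ℝ → ℝ := fun y => (y * NJ) ^ ((n : ℝ)⁻¹)
  have hs : Tendsto s atTop atTop :=
    (tendsto_rpow_atTop (by positivity)).comp (tendsto_id.atTop_mul_const hNJ0)
  have hsn : ∀ y : ℝ, 0 < y → s y ^ n = y * NJ := fun y hy =>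
    Real.rpow_inv_natCast_pow (by positivity) hn0.ne'
  have e2 : ∀ᶠ y in atTop, ∀ c ∈ T, 1 < r c * s y := by
    rw [Finset.eventually_all]
    exact fun c hc => (hs.const_mul_atTop (hr c hc)).eventually_gt_atTop 1
  have e4 : ∀ᶠ y in atTop, ∀ c ∈ T, 1 ≤ r c ^ 2 * s y := by
    rw [Finset.eventually_all]
    exact fun c hc => (hs.const_mul_atTop (pow_pos (hr c hc) 2)).eventually_ge_atTop 1
  have e3 : ∀ᶠ y in atTop, ∀ c ∈ T, |Real.log (Real.log y) - Real.log (Real.log (r c * s y))| ≤ Real.log n + 1 := by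
    rw [Finset.eventually_all]
    intro c hc
    have h1 := (tendsto_loglog n hn0 (Real.log NJ) (Real.log (r c))).comp (Real.tendsto_log_atTop.comp hs)
    have h2 := h1.abs.eventually_le_const (by rw [abs_of_nonneg hlogn]; linarith : |Real.log n| < Real.log n + 1)
    filter_upwards [h2, eventually_gt_atTop 0, hs.eventually_gt_atTop 0] with y h3 hy hsy
    have h4 : Real.log y = n * Real.log (s y) - Real.log NJ := by
      rw [← Real.log_pow, hsn y hy, Real.log_mul hy.ne' hNJ0.ne']; ring
    have h5 : Real.log (r c * s y) = Real.log (s y) + Real.log (r c) := by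
      rw [Real.log_mul (hr c hc).ne' hsy.ne']; ring
    rw [h4, h5]
    exact h3
  have e5 : ∀ᶠ y : ℝ in atTop, max L0 L1 + C ≤ Real.log (Real.log y) :=
    (Real.tendsto_log_atTop.comp Real.tendsto_log_atTop).eventually_ge_atTop _
  obtain ⟨R, hR⟩ := hDb.subset_closedBall 0
  have hR' : D ⊆ Metric.closedBall 0 (max R 0) := hR.trans (Metric.closedBall_subset_closedBall (le_max_left _ _))
  filter_upwards [e2, e3, e4, e5, hs.eventually_ge_atTop s0, eventually_gt_atTop 0] with y e2 e3 e4 e5 e1 hy L hL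
  have hsy : 0 < s y := hs0.trans_le e1
  have hL' := abs_le.1 hL
  have hLm : max L0 L1 ≤ L := by linarith
  set S := (zbox (0 : ι → ℝ) (max R 0) (s y)).filter (fun v => ((s y)⁻¹ • (fun i => (v i : ℝ))) ∈ D) with hSdef
  have hS : ∀ v, v ∈ S ↔ ((s y)⁻¹ • (fun i => (v i : ℝ))) ∈ D := by
    intro v
    rw [hSdef, Finset.mem_filter, mem_zbox (le_max_right _ _) hsy]
    exact ⟨fun h => h.2, fun h => ⟨hR' h, h⟩⟩
  obtain ⟨hbox, hfin⟩ := hmain (s y) e1 S hS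
  have hS2 : ∀ v, v ∈ S ↔ φ (fun i => (v i : ℝ)) ∈ fundamentalCone K ∧
      mixedEmbedding.norm (φ (fun i => (v i : ℝ))) ≤ y * nr J.1 := by
    intro v
    rw [hS, hDmem _ hsy, hsn y hy]
  obtain ⟨hp1, hp2⟩ := param_sum K J α φ hφ hα Iv hIv y S hS2
  have hfin2 := hfin (fun v => gsum K t L (Iv v)) (Complex.exp (-(t : ℂ) ^ 2 / 2)) ε1 hε1p.le
    (fun v => (norm_gsum K _ _ _).le) (norm_gauss t) ?_
  · rw [hp2, hcard, hsn y hy] at hfin2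
    have hSc := hp2 (fun _ => 1)
    simp only [Finset.sum_const, nsmul_eq_mul, mul_one] at hSc
    rw [hSc, mul_assoc, ← mul_sub, norm_mul] at hfin2
    have hw : (1 : ℝ) ≤ ‖(Nat.card (Units.torsion K) : ℂ)‖ := by
      rw [Complex.norm_natCast]
      exact_mod_cast Nat.card_pos
    refine (le_mul_of_one_le_left (norm_nonneg _) hw).trans (hfin2.trans (le_of_eq ?_))
    rw [hε1, hε2]
    field_simp
    ring
  · intro c hc
    have hrc := hr c hc
    set ℓ := r c * s y with hℓ
    have hℓ1 : 1 < ℓ := e2 c hc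
    have hℓ0 : 0 < ℓ := by linarith
    have hsub := hbox c hc
    refine (hclt (ι → ℤ) (zbox c (r c) (s y)) Iv ℓ L (le_trans (le_max_left _ _) hLm) hℓ1 ?_ ?_ ?_).trans ?_
    · have h1 : L - Real.log (Real.log ℓ) = (L - Real.log (Real.log y)) + (Real.log (Real.log y) - Real.log (Real.log ℓ)) := by ring
      rw [h1]
      refine (abs_add_le _ _).trans ((add_le_add hL (e3 c hc)).trans ?_)
      rw [hC']
      have : (0 : ℝ) ≤ 2 ^ n := by positivity
      linarith
    · intro v hv
      obtain ⟨h1, h2⟩ := hp1 v (hsub hv)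
      refine ⟨h1, h2.trans ?_⟩
      calc y ≤ y * NJ := le_mul_of_one_le_right hy.le hNJ1
        _ = s y ^ n := (hsn y hy).symm
        _ ≤ (r c ^ 2 * s y) ^ n * s y ^ n := le_mul_of_one_le_left (by positivity) (one_le_pow₀ (e4 c hc))
        _ = ℓ ^ (2 * n) := by rw [hℓ, pow_mul, ← mul_pow]; ring
    · intro d hd hdℓ
      obtain ⟨Q, i1, i2, f, hf, hQ, hf0⟩ := dvd_box K J α hα d hd
      have hb := box_count f hf (fun i => ⌈s y * (c i - r c)⌉) (fun i => ⌊s y * (c i + r c)⌋ + 1) ℓ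
        (by rw [hQ]; exact hdℓ) ?_
      · rw [hQ, hcard] at hb
        have hdv : ∀ v, (d ∣ Iv v) ↔ f v = 0 := by
          intro v
          rw [hf0, ← Ideal.span_singleton_le_iff_mem, ← Ideal.dvd_iff_le, hIv]
          exact (mul_dvd_mul_iff_left (hJ0 : J.1 ≠ 0)).symm
        simp_rw [hdv]
        refine hb.trans ?_
        change _ ≤ C' / ℓ * ((zbox c (r c) (s y)).card : ℝ)
        have : (2 : ℝ) ^ n ≤ C' := by rw [hC']; linarith
        gcongr
        exact le_rfl
      · intro i
        have h1 := Int.ceil_lt_add_one (s y * (c i - r c))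
        have h2 := Int.lt_floor_add_one (s y * (c i + r c))
        push_cast
        have h3 : s y * (c i + r c) - s y * (c i - r c) = 2 * ℓ := by rw [hℓ]; ring
        linarith
    · gcongr
      exact (le_abs_self _).trans (hL1 L (le_trans (le_max_right _ _) hLm))

/-- Main result on ideals. -/
theorem ideal_sum (C : ℝ) (hC : 0 ≤ C) (t ε : ℝ) (hε : 0 < ε) :
    ∀ᶠ y : ℝ in atTop, ∀ L : ℝ, |L - Real.log (Real.log y)| ≤ C →
      ‖∑ a ∈ idl K y, gsum K t L a - (idl K y).card * Complex.exp (-(t : ℂ) ^ 2 / 2)‖ ≤ ε * y := by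
  classical
  have hJ : ∀ c : ClassGroup (𝓞 K), ∃ J : (Ideal (𝓞 K))⁰, ClassGroup.mk0 J = c⁻¹ := fun c =>
    ClassGroup.mk0_surjective c⁻¹
  choose J hJ using hJ
  set h : ℝ := ((Fintype.card (ClassGroup (𝓞 K)) : ℕ) : ℝ) with hh
  have hh0 : 0 < h := by rw [hh]; exact_mod_cast Fintype.card_pos
  have hev : ∀ᶠ y : ℝ in atTop, ∀ c ∈ (Finset.univ : Finset (ClassGroup (𝓞 K))), ∀ L : ℝ, |L - Real.log (Real.log y)| ≤ C →
      ‖∑ a ∈ (idl K y).filter (fun a => Submodule.IsPrincipal ((J c).1 * a)), gsum K t L a -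
        ((idl K y).filter (fun a => Submodule.IsPrincipal ((J c).1 * a))).card * Complex.exp (-(t : ℂ) ^ 2 / 2)‖ ≤
        (ε / h) * y := by
    rw [Finset.eventually_all]
    exact fun c _ => class_sum K (J c) C hC t (ε / h) (by positivity)
  filter_upwards [hev] with y hy L hL
  set z := Complex.exp (-(t : ℂ) ^ 2 / 2)
  have e1 : ∀ X : Finset (Ideal (𝓞 K)), ∑ a ∈ X, gsum K t L a - X.card * z = ∑ a ∈ X, (gsum K t L a - z) := by
    intro X; rw [Finset.sum_sub_distrib]; simp
  have hex : ∀ a : Ideal (𝓞 K), ∀ ha : a ≠ ⊥, ∀ c, Submodule.IsPrincipal ((J c).1 * a) ↔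
      ClassGroup.mk0 ⟨a, mem_nonZeroDivisors_of_ne_zero ha⟩ = c := by
    intro a ha c
    have h1 := ClassGroup.mk0_eq_one_iff (J c * ⟨a, mem_nonZeroDivisors_of_ne_zero ha⟩ : (Ideal (𝓞 K))⁰).2
    have h2 : Submodule.IsPrincipal ((J c).1 * a) ↔ ClassGroup.mk0 (J c * ⟨a, mem_nonZeroDivisors_of_ne_zero ha⟩ : (Ideal (𝓞 K))⁰) = 1 := h1.symm
    rw [h2, map_mul, hJ, inv_mul_eq_one, eq_comm]
  have hsum : ∑ a ∈ idl K y, (gsum K t L a - z) = ∑ c : ClassGroup (𝓞 K),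
      ∑ a ∈ (idl K y).filter (fun a => Submodule.IsPrincipal ((J c).1 * a)), (gsum K t L a - z) := by
    simp_rw [Finset.sum_filter]
    rw [Finset.sum_comm]
    refine Finset.sum_congr rfl fun a ha => ?_
    simp_rw [hex a (mem_idl.1 ha).1]
    simp
  rw [e1, hsum]
  calc _ ≤ ∑ c : ClassGroup (𝓞 K), (ε / h) * y := by
        refine (norm_sum_le _ _).trans (Finset.sum_le_sum fun c hc => ?_)
        rw [← e1]
        exact hy c hc L hL
    _ = ε * y := by
        rw [Finset.sum_const, nsmul_eq_mul, Finset.card_univ, ← hh]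
        field_simp

end Part8

section Part9
open NumberField UniqueFactorizationMonoid

variable {K}

open Classical in
/-- valuation of an ideal at `p` -/
def vv (p m : Ideal (𝓞 K)) : ℕ := (normalizedFactors m).count p

lemma vv_mul (p : Ideal (𝓞 K)) {a b : Ideal (𝓞 K)} (ha : a ≠ ⊥) (hb : b ≠ ⊥) :
    vv p (a * b) = vv p a + vv p b := by
  classical
  rw [vv, normalizedFactors_mul ha hb, Multiset.count_add]; rfl

lemma vv_pow (p a : Ideal (𝓞 K)) (n : ℕ) : vv p (a ^ n) = n * vv p a := by
  classical
  rw [vv, normalizedFactors_pow, Multiset.count_nsmul]; rfl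

lemma vv_ext {a b : Ideal (𝓞 K)} (ha : a ≠ ⊥) (hb : b ≠ ⊥) (h : ∀ p, vv p a = vv p b) : a = b := by
  classical
  rw [← Ideal.prod_normalizedFactors_eq_self ha, ← Ideal.prod_normalizedFactors_eq_self hb]
  congr 1
  exact Multiset.ext.2 h

lemma vv_ne_zero_iff {p m : Ideal (𝓞 K)} (hm : m ≠ ⊥) : vv p m ≠ 0 ↔ p.IsPrime ∧ p ∣ m := by
  classical
  rw [vv, Multiset.count_ne_zero, mem_normalizedFactors_iff hm]
  constructor
  · rintro ⟨h1, h2⟩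
    exact ⟨Ideal.isPrime_of_prime h1, h2⟩
  · rintro ⟨h1, h2⟩
    exact ⟨Ideal.prime_of_isPrime (ne_bot_of_dvd h2 hm) h1, h2⟩

lemma vv_mk (f : Ideal (𝓞 K) →₀ ℕ) (hf : ∀ p, f p ≠ 0 → p.IsPrime ∧ p ≠ ⊥) :
    ∃ a : Ideal (𝓞 K), a ≠ ⊥ ∧ ∀ p, vv p a = f p := by
  classical
  have h1 : ∀ p ∈ Finsupp.toMultiset f, Prime p := by
    intro p hp
    rw [Finsupp.mem_toMultiset, Finsupp.mem_support_iff] at hp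
    exact Ideal.prime_of_isPrime (hf p hp).2 (hf p hp).1
  refine ⟨(Finsupp.toMultiset f).prod, ?_, fun p => ?_⟩
  · exact Multiset.prod_ne_zero fun h0 => (h1 0 h0).ne_zero rfl
  · rw [vv, normalizedFactors_prod_of_prime h1, Finsupp.count_toMultiset]

lemma pow_dvd_iff_vv {p m : Ideal (𝓞 K)} (hp : p.IsPrime) (hp0 : p ≠ ⊥) (hm : m ≠ ⊥) (n : ℕ) :
    p ^ n ∣ m ↔ n ≤ vv p m := by
  classical
  have h1 := Ideal.prime_of_isPrime hp0 hp
  rw [pow_dvd_iff_le_emultiplicity, emultiplicity_eq_count_normalizedFactors h1.irreducible hm,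
    normalize_eq, Nat.cast_le]
  rfl

lemma isHFull_iff (h : ℕ) (m : Ideal (𝓞 K)) (hm : m ≠ ⊥) :
    IsHFull K h m ↔ ∀ p, vv p m = 0 ∨ h ≤ vv p m := by
  constructor
  · intro hf p
    by_cases h0 : vv p m = 0
    · exact Or.inl h0
    · obtain ⟨h1, h2⟩ := (vv_ne_zero_iff hm).1 h0
      exact Or.inr ((pow_dvd_iff_vv h1 (ne_bot_of_dvd h2 hm) hm h).1 (hf.2 p h1 h2))
  · intro hf
    refine ⟨hm, fun p h1 h2 => ?_⟩
    rw [pow_dvd_iff_vv h1 (ne_bot_of_dvd h2 hm) hm]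
    exact (hf p).resolve_left ((vv_ne_zero_iff hm).2 ⟨h1, h2⟩)

variable (K) in
/-- the `b` parts -/
def BB (h : ℕ) : Set (Ideal (𝓞 K)) := {b | b ≠ ⊥ ∧ ∀ p, vv p b = 0 ∨ (h < vv p b ∧ vv p b < 2 * h)}

lemma hfull_decomp (h : ℕ) (hh : 2 ≤ h) (m : Ideal (𝓞 K)) (hm : IsHFull K h m) :
    ∃ a b : Ideal (𝓞 K), a ≠ ⊥ ∧ b ∈ BB K h ∧ a ^ h * b = m := by
  classical
  have hm0 : m ≠ ⊥ := hm.1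
  have hv := (isHFull_iff h m hm0).1 hm
  let F : Ideal (𝓞 K) →₀ ℕ := Multiset.toFinsupp (normalizedFactors m)
  have hF : ∀ p, F p = vv p m := fun p => Multiset.toFinsupp_apply _ _
  let φa : ℕ → ℕ := fun e => if e % h = 0 then e / h else e / h - 1
  let φb : ℕ → ℕ := fun e => if e % h = 0 then 0 else h + e % h
  have key : ∀ f : Ideal (𝓞 K) →₀ ℕ, (∀ p, vv p m = 0 → f p = 0) → ∃ a : Ideal (𝓞 K), a ≠ ⊥ ∧ ∀ p, vv p a = f p := by
    intro f hf
    refine vv_mk f fun p hp => ?_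
    obtain ⟨h1, h2⟩ := (vv_ne_zero_iff hm0).1 (fun h0 => hp (hf p h0))
    exact ⟨h1, ne_bot_of_dvd h2 hm0⟩
  obtain ⟨a, ha0, ha⟩ := key (F.mapRange φa (by simp [φa])) (by intro p hp; simp [hF, hp, φa])
  obtain ⟨b, hb0, hb⟩ := key (F.mapRange φb (by simp [φb])) (by intro p hp; simp [hF, hp, φb])
  simp only [Finsupp.mapRange_apply, hF] at ha hb
  refine ⟨a, b, ha0, ⟨hb0, fun p => ?_⟩, ?_⟩
  · rw [hb p]
    simp only [φb]
    have := Nat.mod_lt (vv p m) (by omega : 0 < h)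
    split_ifs with h1
    · exact Or.inl rfl
    · right; omega
  · refine vv_ext (mul_ne_zero (pow_ne_zero _ ha0) hb0) hm0 fun p => ?_
    rw [vv_mul p (pow_ne_zero _ ha0) hb0, vv_pow, ha, hb]
    simp only [φa, φb]
    have hd := Nat.div_add_mod (vv p m) h
    split_ifs with h1
    · omega
    · have h2 : h ≤ vv p m := (hv p).resolve_left (fun h0 => h1 (by rw [h0]; simp))
      have h3 : 1 ≤ vv p m / h := (Nat.one_le_div_iff (by omega)).2 h2
      obtain ⟨q, hq⟩ := Nat.exists_eq_add_of_le h3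
      rw [hq] at hd ⊢
      rw [Nat.add_sub_cancel_left]
      nlinarith

lemma hfull_unique (h : ℕ) (hh : 2 ≤ h) {a a' b b' : Ideal (𝓞 K)} (ha : a ≠ ⊥) (ha' : a' ≠ ⊥)
    (hb : b ∈ BB K h) (hb' : b' ∈ BB K h) (heq : a ^ h * b = a' ^ h * b') : a = a' ∧ b = b' := by
  have hv : ∀ p, h * vv p a + vv p b = h * vv p a' + vv p b' := by
    intro p
    have := congrArg (vv p) heq
    rwa [vv_mul p (pow_ne_zero _ ha) hb.1, vv_mul p (pow_ne_zero _ ha') hb'.1, vv_pow, vv_pow] at this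
  have key : ∀ p, vv p a = vv p a' ∧ vv p b = vv p b' := by
    intro p
    have h1 := hv p
    have h2 := hb.2 p
    have h3 := hb'.2 p
    generalize vv p a = A at *
    generalize vv p a' = A' at *
    generalize vv p b = X at *
    generalize vv p b' = X' at *
    have hA : A = A' := by
      rcases lt_trichotomy A A' with hlt | he | hlt
      · exfalso
        obtain ⟨q, rfl⟩ := Nat.exists_eq_add_of_lt hlt
        have : h * (A + q + 1) = h * A + h * q + h := by ring
        rw [this] at h1
        rcases Nat.eq_zero_or_pos q with rfl | hq
        · omega
        · have : h ≤ h * q := Nat.le_mul_of_pos_right h hq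
          omega
      · exact he
      · exfalso
        obtain ⟨q, rfl⟩ := Nat.exists_eq_add_of_lt hlt
        have : h * (A' + q + 1) = h * A' + h * q + h := by ring
        rw [this] at h1
        rcases Nat.eq_zero_or_pos q with rfl | hq
        · omega
        · have : h ≤ h * q := Nat.le_mul_of_pos_right h hq
          omega
    subst hA
    exact ⟨rfl, by omega⟩
  exact ⟨vv_ext ha ha' fun p => (key p).1, vv_ext hb.1 hb'.1 fun p => (key p).2⟩

lemma hfull_mk (h : ℕ) {a b : Ideal (𝓞 K)} (ha : a ≠ ⊥)
    (hb : b ∈ BB K h) : IsHFull K h (a ^ h * b) := by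
  have h0 : a ^ h * b ≠ ⊥ := mul_ne_zero (pow_ne_zero _ ha) hb.1
  rw [isHFull_iff h _ h0]
  intro p
  rw [vv_mul p (pow_ne_zero _ ha) hb.1, vv_pow]
  rcases hb.2 p with h1 | h1
  · rw [h1]
    rcases Nat.eq_zero_or_pos (vv p a) with h2 | h2
    · left; simp [h2]
    · right; have := Nat.le_mul_of_pos_right h h2; omega
  · right; omega

variable (K) in
open Classical in
lemma sum_hfull (h : ℕ) (hh : 2 ≤ h) (x : ℝ) (hx : 0 < x) (f : Ideal (𝓞 K) → ℂ) :
    ∑ m ∈ (idl K x).filter (IsHFull K h), f m =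
      ∑ b ∈ (idl K x).filter (· ∈ BB K h), ∑ a ∈ idl K ((x / nr b) ^ ((h : ℝ)⁻¹)), f (a ^ h * b) := by
  rw [Finset.sum_sigma']
  symm
  have hcond : ∀ a b : Ideal (𝓞 K), a ≠ ⊥ → b ≠ ⊥ → (nr a ≤ (x / nr b) ^ ((h : ℝ)⁻¹) ↔ nr (a ^ h * b) ≤ x) := by
    intro a b ha hb
    have h1 := nr_pos hb
    have h2 := nr_pos ha
    have hh0 : (0 : ℝ) < h := by positivity
    rw [Real.le_rpow_inv_iff_of_pos h2.le (by positivity) hh0, Real.rpow_natCast, le_div_iff₀ h1,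
      nr_mul]
    simp [nr]
  refine Finset.sum_nbij (fun i => i.2 ^ h * i.1) ?_ ?_ ?_ ?_
  · rintro ⟨b, a⟩ hi
    simp only [Finset.mem_sigma, Finset.mem_filter, mem_idl] at hi ⊢
    obtain ⟨⟨⟨hb0, hbx⟩, hb⟩, ha0, ha⟩ := hi
    exact ⟨⟨mul_ne_zero (pow_ne_zero _ ha0) hb0, (hcond a b ha0 hb0).1 ha⟩, hfull_mk h ha0 hb⟩
  · rintro ⟨b, a⟩ hi ⟨b', a'⟩ hi' heq
    simp only [Finset.mem_coe, Finset.mem_sigma, Finset.mem_filter, mem_idl] at hi hi' heq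
    obtain ⟨h1, h2⟩ := hfull_unique h hh hi.2.1 hi'.2.1 hi.1.2 hi'.1.2 heq
    rw [h1, h2]
  · intro m hm
    simp only [Finset.mem_coe, Finset.mem_filter, mem_idl] at hm
    obtain ⟨a, b, ha, hb, rfl⟩ := hfull_decomp h hh m hm.2
    refine ⟨⟨b, a⟩, ?_, rfl⟩
    simp only [Finset.mem_coe, Finset.mem_sigma, Finset.mem_filter, mem_idl]
    exact ⟨⟨⟨hb.1, (nr_le_of_dvd (dvd_mul_left _ _) hm.1.1).trans hm.1.2⟩, hb⟩, ha, (hcond a b ha hb.1).2 hm.1.2⟩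
  · intro i _; rfl

end Part9

section Part10
open NumberField UniqueFactorizationMonoid

variable {K}

lemma vv_one (p : Ideal (𝓞 K)) : vv p 1 = 0 := by
  classical
  rw [vv, normalizedFactors_one]; simp

lemma vv_prod {ι : Type} (s : Finset ι) (c : ι → Ideal (𝓞 K)) (hc : ∀ i, c i ≠ ⊥)
    (p : Ideal (𝓞 K)) : vv p (∏ i ∈ s, c i) = ∑ i ∈ s, vv p (c i) := by
  classical
  induction s using Finset.induction_on with
  | empty => rw [Finset.prod_empty, Finset.sum_empty, vv_one]
  | insert i s hi ih =>
    rw [Finset.prod_insert hi, Finset.sum_insert hi, vv_mul p (hc i) ?_, ih]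
    exact Finset.prod_ne_zero_iff.2 fun i _ => hc i

lemma BB_decomp (h : ℕ) (b : Ideal (𝓞 K)) (hb : b ∈ BB K h) :
    ∃ c : Fin (h - 1) → Ideal (𝓞 K), (∀ j, c j ≠ ⊥) ∧ ∏ j, c j ^ (h + 1 + (j : ℕ)) = b := by
  classical
  obtain ⟨hb0, hb1⟩ := hb
  have key : ∀ j : Fin (h - 1), ∃ a : Ideal (𝓞 K), a ≠ ⊥ ∧ ∀ p, vv p a =
      if vv p b = h + 1 + (j : ℕ) then 1 else 0 := by
    intro j
    let f : Ideal (𝓞 K) →₀ ℕ := Finsupp.onFinset (normalizedFactors b).toFinset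
      (fun p => if vv p b = h + 1 + (j : ℕ) then 1 else 0) (by
        intro p hp
        have : vv p b ≠ 0 := by
          intro h0
          apply hp
          rw [if_neg]; omega
        rw [vv, Multiset.count_ne_zero] at this
        exact Multiset.mem_toFinset.2 this)
    refine vv_mk f ?_
    intro p hp
    have : vv p b ≠ 0 := by
      intro h0
      apply hp
      change (if vv p b = h + 1 + (j : ℕ) then 1 else 0) = 0
      rw [if_neg]; omega
    obtain ⟨h1, h2⟩ := (vv_ne_zero_iff hb0).1 this
    exact ⟨h1, ne_bot_of_dvd h2 hb0⟩
  choose c hc0 hc using key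
  refine ⟨c, hc0, ?_⟩
  refine vv_ext ?_ hb0 fun p => ?_
  · exact Finset.prod_ne_zero_iff.2 fun i _ => pow_ne_zero _ (hc0 i)
  · rw [vv_prod _ _ fun i => pow_ne_zero _ (hc0 i)]
    simp only [vv_pow, hc]
    rcases hb1 p with h0 | ⟨h1, h2⟩
    · rw [h0]
      refine Finset.sum_eq_zero fun j _ => ?_
      rw [if_neg (by omega)]; simp
    · rw [Finset.sum_eq_single (⟨vv p b - (h + 1), by omega⟩ : Fin (h - 1))]
      · simp only
        rw [if_pos (by omega)]; omega
      · intro j _ hj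
        rw [if_neg, mul_zero]
        intro h3
        apply hj
        ext
        simp only; omega
      · simp

variable (K) in
lemma BB_summable (h : ℕ) (hh : 2 ≤ h) :
    Summable fun b : BB K h => (nr b.1) ^ (-(h : ℝ)⁻¹) := by
  classical
  obtain ⟨C, hC, hsum⟩ := sum_nr_rpow_le K
  have hex : ∀ b : BB K h, ∃ c : Fin (h - 1) → Ideal (𝓞 K), (∀ j, c j ≠ ⊥) ∧
      ∏ j, c j ^ (h + 1 + (j : ℕ)) = b.1 := fun b => BB_decomp h b.1 b.2
  choose c hc0 hc using hex
  have hh0 : (0 : ℝ) < h := by positivity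
  let s : Fin (h - 1) → ℝ := fun j => ((h + 1 + (j : ℕ) : ℕ) : ℝ) / h
  have hs1 : ∀ j, 1 < s j := fun j => by
    simp only [s]; rw [lt_div_iff₀ hh0, one_mul]; push_cast; linarith [(Nat.cast_nonneg (j : ℕ) : (0:ℝ) ≤ _)]
  have hs2 : ∀ j, s j ≤ 2 := fun j => by
    simp only [s]; rw [div_le_iff₀ hh0]
    have : h + 1 + (j : ℕ) ≤ 2 * h := by have := j.2; omega
    exact_mod_cast this
  refine summable_of_sum_le (c := ∏ j, C / (s j - 1)) (fun b => by positivity) fun F => ?_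
  have hterm : ∀ b : BB K h, (nr b.1) ^ (-(h : ℝ)⁻¹) = ∏ j, (nr (c b j)) ^ (-(s j)) := by
    intro b
    conv_lhs => rw [← hc b]
    have : nr (∏ j, c b j ^ (h + 1 + (j : ℕ))) = ∏ j, nr (c b j) ^ (h + 1 + (j : ℕ)) := by
      simp [nr]
    rw [this, ← Real.finsetProd_rpow _ _ (fun i _ => by positivity)]
    refine Finset.prod_congr rfl fun j _ => ?_
    rw [← Real.rpow_natCast, ← Real.rpow_mul (by positivity)]
    congr 1
    simp only [s]; field_simp
  simp_rw [hterm]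
  let E : Fin (h - 1) → Finset (Ideal (𝓞 K)) := fun j => F.image fun b => c b j
  have hinj : Function.Injective c := by
    intro b b' hbb
    ext1
    rw [← hc b, ← hc b', hbb]
  calc ∑ b ∈ F, ∏ j, (nr (c b j)) ^ (-(s j))
      = ∑ d ∈ F.image c, ∏ j, (nr (d j)) ^ (-(s j)) := by
        rw [Finset.sum_image hinj.injOn]
    _ ≤ ∑ d ∈ Fintype.piFinset E, ∏ j, (nr (d j)) ^ (-(s j)) := by
        refine Finset.sum_le_sum_of_subset_of_nonneg ?_ fun d _ _ =>
          Finset.prod_nonneg fun j _ => by positivity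
        intro d hd
        obtain ⟨b, hb, rfl⟩ := Finset.mem_image.1 hd
        exact Fintype.mem_piFinset.2 fun j => Finset.mem_image_of_mem _ hb
    _ = ∏ j, ∑ a ∈ E j, (nr a) ^ (-(s j)) := (Finset.prod_univ_sum E (fun j a => (nr a) ^ (-(s j)))).symm
    _ ≤ ∏ j, C / (s j - 1) := by
        refine Finset.prod_le_prod (fun j _ => Finset.sum_nonneg fun a _ => by positivity) fun j _ => ?_
        refine hsum (s j) (hs1 j) (hs2 j) (E j) ?_
        intro I hI
        obtain ⟨b, hb, rfl⟩ := Finset.mem_image.1 hI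
        exact hc0 b j

open Classical in
lemma omega_perturb {a b : Ideal (𝓞 K)} (ha : a ≠ ⊥) (hb : b ≠ ⊥) (h : ℕ) (hh : h ≠ 0) :
    |(omegaI K (a ^ h * b) : ℝ) - omegaI K a| ≤ omegaI K b := by
  have hm : a ^ h * b ≠ ⊥ := mul_ne_zero (pow_ne_zero _ ha) hb
  have h1 : a ∣ a ^ h * b := (dvd_pow_self a hh).mul_right b
  have h2 : b ∣ a ^ h * b := dvd_mul_left _ _
  rw [omegaI_eq K hm le_rfl, omegaI_eq K ha (nr_le_of_dvd h1 hm), omegaI_eq K hb (nr_le_of_dvd h2 hm)]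
  set P := prm K (nr (a ^ h * b))
  have hsub : P.filter (fun p => p ∣ a) ⊆ P.filter (fun p => p ∣ a ^ h * b) :=
    Finset.monotone_filter_right _ fun p _ hp => hp.trans h1
  have hle : (P.filter (fun p => p ∣ a ^ h * b)) ⊆ P.filter (fun p => p ∣ a) ∪ P.filter (fun p => p ∣ b) := by
    intro p hp
    obtain ⟨hp1, hp2⟩ := Finset.mem_filter.1 hp
    have hpp := prm_prop p hp1
    have hprime := Ideal.prime_of_isPrime hpp.1 hpp.2
    rcases hprime.dvd_or_dvd hp2 with h3 | h3
    · exact Finset.mem_union_left _ (Finset.mem_filter.2 ⟨hp1, hprime.dvd_of_dvd_pow h3⟩)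
    · exact Finset.mem_union_right _ (Finset.mem_filter.2 ⟨hp1, h3⟩)
  have c1 := Finset.card_le_card hsub
  have c2 := (Finset.card_le_card hle).trans (Finset.card_union_le _ _)
  have c1' : ((P.filter (fun p => p ∣ a)).card : ℝ) ≤ (P.filter (fun p => p ∣ a ^ h * b)).card := by
    exact_mod_cast c1
  have c2' : ((P.filter (fun p => p ∣ a ^ h * b)).card : ℝ) ≤
      (P.filter (fun p => p ∣ a)).card + (P.filter (fun p => p ∣ b)).card := by exact_mod_cast c2
  rw [abs_le]; constructor <;> linarith

end Part10

section Part11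
open NumberField

lemma loglog_diff (B : ℝ) (hB : 0 < B) (h : ℕ) (hh : 2 ≤ h) :
    ∀ᶠ x : ℝ in atTop, |Real.log (Real.log x) - Real.log (Real.log ((x / B) ^ ((h : ℝ)⁻¹)))|
      ≤ |Real.log ((h : ℝ)⁻¹)| + 1 := by
  have hh0 : (0 : ℝ) < h := by positivity
  have h1 : Tendsto (fun x : ℝ => (h : ℝ)⁻¹ * (1 - Real.log B / Real.log x)) atTop (𝓝 ((h : ℝ)⁻¹ * (1 - 0))) :=
    (tendsto_const_nhds.sub (tendsto_const_nhds.div_atTop Real.tendsto_log_atTop)).const_mul _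
  rw [sub_zero, mul_one] at h1
  have hu : (h : ℝ)⁻¹ ≠ 0 := by positivity
  have h2 := ((Real.continuousAt_log hu).tendsto.comp h1).abs
  have h3 := h2.eventually (gt_mem_nhds (show |Real.log ((h : ℝ)⁻¹)| < |Real.log ((h : ℝ)⁻¹)| + 1 by linarith))
  filter_upwards [h3, eventually_gt_atTop (max B 1)] with x hx hxB
  have hx1 : 1 < x := (le_max_right _ _).trans_lt hxB
  have hxB' : B < x := (le_max_left _ _).trans_lt hxB
  have hl : 0 < Real.log x := Real.log_pos hx1
  have hl2 : 0 < Real.log x - Real.log B := by linarith [Real.log_lt_log hB hxB']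
  have e1 : Real.log ((x / B) ^ ((h : ℝ)⁻¹)) = (h : ℝ)⁻¹ * (Real.log x - Real.log B) := by
    rw [Real.log_rpow (by positivity), Real.log_div (by positivity) hB.ne']
  have e2 : (h : ℝ)⁻¹ * (1 - Real.log B / Real.log x) = Real.log ((x / B) ^ ((h : ℝ)⁻¹)) / Real.log x := by
    rw [e1]; field_simp
  have h4 : 0 < Real.log ((x / B) ^ ((h : ℝ)⁻¹)) := by rw [e1]; positivity
  simp only [Function.comp] at hx
  rw [e2, Real.log_div h4.ne' hl.ne'] at hx
  rw [abs_sub_comm]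
  exact hx.le

lemma tendsto_y (B : ℝ) (hB : 0 < B) (h : ℕ) (hh : 2 ≤ h) :
    Tendsto (fun x : ℝ => (x / B) ^ ((h : ℝ)⁻¹)) atTop atTop :=
  (tendsto_rpow_atTop (by positivity)).comp (tendsto_id.atTop_div_const hB)

lemma norm_gsum_sub (t L : ℝ) (a b : Ideal (𝓞 K)) :
    ‖gsum K t L a - gsum K t L b‖ ≤ |t| / √L * |(omegaI K a : ℝ) - omegaI K b| := by
  refine (norm_expI_sub_le _ _).trans ?_
  rw [← mul_sub, abs_mul, abs_div, abs_of_nonneg (Real.sqrt_nonneg L)]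
  apply le_of_eq
  congr 2
  ring

lemma per_b (h : ℕ) (hh : 2 ≤ h) (t ρ : ℝ)
    (hρ : Tendsto (fun x : ℝ => ((idl K x).card : ℝ) / x) atTop (𝓝 ρ)) (b : Ideal (𝓞 K)) (hb : b ≠ ⊥) :
    Tendsto (fun x : ℝ => ((x ^ (-(h : ℝ)⁻¹) : ℝ) : ℂ) *
      ∑ a ∈ idl K ((x / nr b) ^ ((h : ℝ)⁻¹)), gsum K t (Real.log (Real.log x)) (a ^ h * b)) atTop
      (𝓝 ((((nr b) ^ (-(h : ℝ)⁻¹) : ℝ) : ℂ) * ((ρ : ℂ) * Complex.exp (-(t : ℂ) ^ 2 / 2)))) := by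
  have hB := nr_pos hb
  set B : ℝ := nr b with hBdef
  clear_value B
  have hy := tendsto_y B hB h hh
  obtain ⟨c, C, hc, hC, hcard⟩ := card_idl_bounds K
  -- first error
  have E1 : Tendsto (fun x : ℝ => ((((x / B) ^ ((h : ℝ)⁻¹))⁻¹ : ℝ) : ℂ) *
      (∑ a ∈ idl K ((x / B) ^ ((h : ℝ)⁻¹)), gsum K t (Real.log (Real.log x)) (a ^ h * b)
       - ∑ a ∈ idl K ((x / B) ^ ((h : ℝ)⁻¹)), gsum K t (Real.log (Real.log x)) a)) atTop (𝓝 0) := by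
    have hz : Tendsto (fun x : ℝ => |t| / √(Real.log (Real.log x)) * (omegaI K b : ℝ) * C) atTop
        (𝓝 (0 * (omegaI K b : ℝ) * C)) := by
      refine Tendsto.mul_const _ (Tendsto.mul_const _ ?_)
      exact tendsto_const_nhds.div_atTop (Real.tendsto_sqrt_atTop.comp
        (Real.tendsto_log_atTop.comp Real.tendsto_log_atTop))
    rw [zero_mul, zero_mul] at hz
    refine squeeze_zero_norm' ?_ hz
    filter_upwards [hy.eventually_ge_atTop 1] with x hx
    set y : ℝ := (x / B) ^ ((h : ℝ)⁻¹) with hydef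
    clear_value y
    have hy0 : 0 < y := by linarith
    rw [norm_mul, Complex.norm_real, Real.norm_of_nonneg (inv_pos.2 hy0).le, ← Finset.sum_sub_distrib]
    have hs : ‖∑ a ∈ idl K y, (gsum K t (Real.log (Real.log x)) (a ^ h * b) - gsum K t (Real.log (Real.log x)) a)‖
        ≤ ∑ a ∈ idl K y, |t| / √(Real.log (Real.log x)) * (omegaI K b : ℝ) := by
      refine norm_sum_le_of_le _ fun a ha => ?_
      refine (norm_gsum_sub K t _ _ _).trans ?_
      exact mul_le_mul_of_nonneg_left (omega_perturb (mem_idl.1 ha).1 hb h (by omega)) (by positivity)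
    rw [Finset.sum_const, nsmul_eq_mul] at hs
    have hc2 := (hcard y hx).2
    calc y⁻¹ * _ ≤ y⁻¹ * (C * y * (|t| / √(Real.log (Real.log x)) * (omegaI K b : ℝ))) := by
          refine mul_le_mul_of_nonneg_left (hs.trans ?_) (inv_pos.2 hy0).le
          exact mul_le_mul_of_nonneg_right hc2 (by positivity)
      _ = _ := by field_simp
  have E2 : Tendsto (fun x : ℝ => ((((x / B) ^ ((h : ℝ)⁻¹))⁻¹ : ℝ) : ℂ) *
      (∑ a ∈ idl K ((x / B) ^ ((h : ℝ)⁻¹)), gsum K t (Real.log (Real.log x)) a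
       - ((idl K ((x / B) ^ ((h : ℝ)⁻¹))).card : ℂ) * Complex.exp (-(t : ℂ) ^ 2 / 2))) atTop (𝓝 0) := by
    rw [tendsto_zero_iff_norm_tendsto_zero, Metric.tendsto_nhds]
    intro ε hε
    have h1 := hy.eventually (ideal_sum K (|Real.log ((h : ℝ)⁻¹)| + 1) (by positivity) t (ε / 2) (by positivity))
    filter_upwards [hy.eventually_ge_atTop 1, h1, loglog_diff B hB h hh] with x hx h1 h2
    have h3 := h1 _ h2
    set y : ℝ := (x / B) ^ ((h : ℝ)⁻¹) with hydef
    clear_value y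
    have hy0 : 0 < y := by linarith
    rw [dist_zero_right, norm_norm, norm_mul, Complex.norm_real, Real.norm_of_nonneg (inv_pos.2 hy0).le]
    calc y⁻¹ * _ ≤ y⁻¹ * (ε / 2 * y) := mul_le_mul_of_nonneg_left h3 (inv_pos.2 hy0).le
      _ = ε / 2 := by field_simp
      _ < ε := by linarith
  have E3 : Tendsto (fun x : ℝ => ((((x / B) ^ ((h : ℝ)⁻¹))⁻¹ : ℝ) : ℂ) *
       (((idl K ((x / B) ^ ((h : ℝ)⁻¹))).card : ℂ) * Complex.exp (-(t : ℂ) ^ 2 / 2))) atTop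
       (𝓝 ((ρ : ℂ) * Complex.exp (-(t : ℂ) ^ 2 / 2))) := by
    have := ((Complex.continuous_ofReal.tendsto ρ).comp (hρ.comp hy)).mul_const (Complex.exp (-(t : ℂ) ^ 2 / 2))
    refine this.congr fun x => ?_
    simp only [Function.comp]
    push_cast
    ring
  have E := (((E1.add E2).add E3).const_mul (((B ^ (-(h : ℝ)⁻¹) : ℝ) : ℂ)))
  simp only [zero_add] at E
  refine E.congr' ?_
  filter_upwards [eventually_gt_atTop 0] with x hx
  have e : (x ^ (-(h : ℝ)⁻¹) : ℝ) = B ^ (-(h : ℝ)⁻¹) * ((x / B) ^ ((h : ℝ)⁻¹))⁻¹ := by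
    rw [Real.div_rpow hx.le hB.le, Real.rpow_neg hx.le, Real.rpow_neg hB.le, inv_div]
    have : 0 < B ^ ((h : ℝ)⁻¹) := by positivity
    field_simp
  rw [e, Complex.ofReal_mul]
  ring

lemma one_mem_BB (h : ℕ) : (1 : Ideal (𝓞 K)) ∈ BB K h := by
  refine ⟨by simp, fun p => Or.inl (vv_one p)⟩

open Classical in
/-- Convergence of the normalised exponential sums over `h`-full ideals. -/
lemma hfull_sum (h : ℕ) (hh : 2 ≤ h) : ∃ c : ℝ, 0 < c ∧ ∀ t : ℝ,
    Tendsto (fun x : ℝ => ((x ^ (-(h : ℝ)⁻¹) : ℝ) : ℂ) *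
      ∑ m ∈ (idl K x).filter (IsHFull K h), gsum K t (Real.log (Real.log x)) m) atTop
      (𝓝 ((c : ℂ) * Complex.exp (-(t : ℂ) ^ 2 / 2))) := by
  obtain ⟨ρ, hρ0, hρ⟩ := tendsto_card_idl K
  obtain ⟨c, C, hc, hC, hcard⟩ := card_idl_bounds K
  have hS := BB_summable K h hh
  refine ⟨(∑' b : BB K h, (nr b.1) ^ (-(h : ℝ)⁻¹)) * ρ, ?_, fun t => ?_⟩
  · refine mul_pos ?_ hρ0
    refine hS.tsum_pos (fun b => by positivity) ⟨1, one_mem_BB K h⟩ ?_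
    exact Real.rpow_pos_of_pos (nr_pos (one_mem_BB K h).1) _
  have key := tendsto_tsum_of_dominated_convergence (𝓕 := (atTop : Filter ℝ))
    (f := fun x (b : BB K h) => ((x ^ (-(h : ℝ)⁻¹) : ℝ) : ℂ) *
      ∑ a ∈ idl K ((x / nr b.1) ^ ((h : ℝ)⁻¹)), gsum K t (Real.log (Real.log x)) (a ^ h * b.1))
    (g := fun b : BB K h => (((nr b.1) ^ (-(h : ℝ)⁻¹) : ℝ) : ℂ) * ((ρ : ℂ) * Complex.exp (-(t : ℂ) ^ 2 / 2)))
    (bound := fun b : BB K h => C * (nr b.1) ^ (-(h : ℝ)⁻¹)) (hS.mul_left C)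
    (fun b => per_b K h hh t ρ hρ b.1 b.2.1) ?_
  · have e : (∑' b : BB K h, (((nr b.1) ^ (-(h : ℝ)⁻¹) : ℝ) : ℂ) * ((ρ : ℂ) * Complex.exp (-(t : ℂ) ^ 2 / 2))) =
        (((∑' b : BB K h, (nr b.1) ^ (-(h : ℝ)⁻¹)) * ρ : ℝ) : ℂ) * Complex.exp (-(t : ℂ) ^ 2 / 2) := by
      rw [tsum_mul_right, Complex.ofReal_mul, Complex.ofReal_tsum, mul_assoc]
    rw [← e]
    refine key.congr' ?_
    filter_upwards [eventually_gt_atTop 0] with x hx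
    rw [sum_hfull K h hh x hx, tsum_mul_left]
    congr 1
    let f : Ideal (𝓞 K) → ℂ := fun b =>
      ∑ a ∈ idl K ((x / nr b) ^ ((h : ℝ)⁻¹)), gsum K t (Real.log (Real.log x)) (a ^ h * b)
    change ∑' b : BB K h, f b.1 = ∑ b ∈ (idl K x).filter (· ∈ BB K h), f b
    rw [tsum_subtype (BB K h) f, tsum_eq_sum (s := (idl K x).filter (· ∈ BB K h))]
    · refine Finset.sum_congr rfl fun b hb => ?_
      exact Set.indicator_of_mem (Finset.mem_filter.1 hb).2 f
    · intro b hb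
      by_cases hbB : b ∈ BB K h
      · rw [Set.indicator_of_mem hbB]
        have hbx : x < nr b := by
          by_contra hcon
          exact hb (Finset.mem_filter.2 ⟨mem_idl.2 ⟨hbB.1, not_lt.1 hcon⟩, hbB⟩)
        have hB := nr_pos hbB.1
        have hlt : (x / nr b) ^ ((h : ℝ)⁻¹) < 1 :=
          Real.rpow_lt_one (by positivity) ((div_lt_one hB).2 hbx) (by positivity)
        have hemp : idl K ((x / nr b) ^ ((h : ℝ)⁻¹)) = ∅ := by
          refine Finset.eq_empty_of_forall_notMem fun a ha => ?_
          have := one_le_nr (mem_idl.1 ha).1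
          linarith [(mem_idl.1 ha).2]
        simp only [f]
        rw [hemp, Finset.sum_empty]
      · exact Set.indicator_of_notMem hbB f
  · filter_upwards [eventually_gt_atTop 0] with x hx b
    have hB := nr_pos b.2.1
    set B : ℝ := nr b.1
    clear_value B
    have hle : ‖∑ a ∈ idl K ((x / B) ^ ((h : ℝ)⁻¹)), gsum K t (Real.log (Real.log x)) (a ^ h * b.1)‖
        ≤ (idl K ((x / B) ^ ((h : ℝ)⁻¹))).card := by
      refine (norm_sum_le _ _).trans ?_
      simp [norm_gsum]
    have hcard2 : ((idl K ((x / B) ^ ((h : ℝ)⁻¹))).card : ℝ) ≤ C * (x / B) ^ ((h : ℝ)⁻¹) := by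
      rcases le_or_gt 1 ((x / B) ^ ((h : ℝ)⁻¹)) with h1 | h1
      · exact (hcard _ h1).2
      · rw [Finset.card_eq_zero.2]
        · push_cast; positivity
        · refine Finset.eq_empty_of_forall_notMem fun a ha => ?_
          have := one_le_nr (mem_idl.1 ha).1
          linarith [(mem_idl.1 ha).2]
    rw [norm_mul, Complex.norm_real, Real.norm_of_nonneg (by positivity)]
    calc x ^ (-(h : ℝ)⁻¹) * _ ≤ x ^ (-(h : ℝ)⁻¹) * (C * (x / B) ^ ((h : ℝ)⁻¹)) :=
          mul_le_mul_of_nonneg_left (hle.trans hcard2) (by positivity)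
      _ = C * B ^ (-(h : ℝ)⁻¹) := by
        rw [Real.div_rpow hx.le hB.le, Real.rpow_neg hx.le, Real.rpow_neg hB.le]
        have : 0 < x ^ ((h : ℝ)⁻¹) := by positivity
        field_simp

end Part11

section Part12
open NumberField ProbabilityTheory

lemma gaussPhi_eq (γ : ℝ) : gaussPhi γ = (gaussianReal 0 1).real (Set.Iic γ) := by
  have hnn : 0 ≤ ∫ x in Set.Iic γ, gaussianPDFReal 0 1 x :=
    setIntegral_nonneg measurableSet_Iic fun x _ => gaussianPDFReal_nonneg _ _ _
  rw [Measure.real, gaussianReal_apply_eq_integral 0 one_ne_zero, ENNReal.toReal_ofReal hnn, gaussPhi,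
    ← integral_const_mul]
  refine integral_congr_ae (ae_of_all _ fun u => ?_)
  simp [gaussianPDFReal]

lemma integrable_gauss : Integrable (fun u : ℝ => Real.exp (-u ^ 2 / 2)) := by
  have := integrable_exp_neg_mul_sq (b := 1 / 2) (by norm_num)
  refine this.congr (ae_of_all _ fun u => ?_)
  simp only; congr 1; ring

lemma continuous_gaussPhi : Continuous gaussPhi := by
  have h : ∀ γ, gaussPhi γ = gaussPhi 0 + (Real.sqrt (2 * Real.pi))⁻¹ * ∫ u in (0:ℝ)..γ, Real.exp (-u ^ 2 / 2) := by
    intro γ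
    rw [← intervalIntegral.integral_Iic_sub_Iic integrable_gauss.integrableOn integrable_gauss.integrableOn]
    simp only [gaussPhi]; ring
  rw [funext h]
  refine continuous_const.add (continuous_const.mul ?_)
  exact intervalIntegral.continuous_primitive (fun a b => integrable_gauss.intervalIntegrable) 0

/-- uniform law of the values of `f` on `S` -/
def emp {ι : Type} (S : Finset ι) (f : ι → ℝ) : Measure ℝ :=
  ((S.card : ENNReal))⁻¹ • ∑ m ∈ S, Measure.dirac (f m)

lemma emp_prob {ι : Type} (S : Finset ι) (hS : S.Nonempty) (f : ι → ℝ) : IsProbabilityMeasure (emp S f) := by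
  constructor
  rw [emp, Measure.smul_apply, Measure.finsetSum_apply]
  simp only [measure_univ, Finset.sum_const, nsmul_eq_mul, mul_one, smul_eq_mul]
  exact ENNReal.inv_mul_cancel (by simpa using hS.ne_empty) (by simp)

lemma emp_real {ι : Type} (S : Finset ι) (f : ι → ℝ) (γ : ℝ) [DecidablePred fun m => f m ≤ γ] :
    (emp S f).real (Set.Iic γ) = ((S.filter fun m => f m ≤ γ).card : ℝ) / S.card := by
  rw [Measure.real, emp, Measure.smul_apply, Measure.finsetSum_apply]
  have : ∑ m ∈ S, (Measure.dirac (f m)) (Set.Iic γ) = ((S.filter fun m => f m ≤ γ).card : ENNReal) := by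
    rw [Finset.card_filter]
    push_cast
    refine Finset.sum_congr rfl fun m _ => ?_
    rw [Measure.dirac_apply' _ measurableSet_Iic]
    simp [Set.indicator_apply]
  rw [this]
  simp [div_eq_inv_mul]

lemma emp_charFun {ι : Type} (S : Finset ι) (f : ι → ℝ) (t : ℝ) :
    charFun (emp S f) t = (S.card : ℂ)⁻¹ * ∑ m ∈ S, Complex.exp (Complex.I * ((t * f m : ℝ) : ℂ)) := by
  rw [charFun_apply_real, emp, integral_smul_measure, integral_finsetSum_measure]
  · simp only [integral_dirac]
    simp only [ENNReal.toReal_inv, ENNReal.toReal_natCast, Complex.real_smul]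
    push_cast
    congr 1
    refine Finset.sum_congr rfl fun m _ => ?_
    congr 1; ring
  · intro m _
    exact integrable_dirac (by simp)

open Classical in
lemma finite_levy {ι : Type} (S : ℕ → Finset ι) (f : ℕ → ι → ℝ) (hS : ∀ n, (S n).Nonempty)
    (H : ∀ t : ℝ, Tendsto (fun n => ((S n).card : ℂ)⁻¹ * ∑ m ∈ S n,
      Complex.exp (Complex.I * ((t * f n m : ℝ) : ℂ))) atTop (𝓝 (Complex.exp (-(t : ℂ) ^ 2 / 2)))) (γ : ℝ) :
    Tendsto (fun n => (((S n).filter fun m => f n m ≤ γ).card : ℝ) / (S n).card) atTop (𝓝 (gaussPhi γ)) := by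
  let μ : ℕ → ProbabilityMeasure ℝ := fun n => ⟨emp (S n) (f n), emp_prob _ (hS n) _⟩
  let ν : ProbabilityMeasure ℝ := ⟨gaussianReal 0 1, inferInstance⟩
  have h1 : Tendsto μ atTop (𝓝 ν) := by
    refine ProbabilityMeasure.tendsto_iff_tendsto_charFun.2 fun t => ?_
    have e : charFun (ν : Measure ℝ) t = Complex.exp (-(t : ℂ) ^ 2 / 2) := by
      change charFun (gaussianReal 0 1) t = _
      rw [charFun_gaussianReal]; simp [neg_div]
    rw [e]
    refine (H t).congr fun n => ?_
    exact (emp_charFun (S n) (f n) t).symm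
  have h2 := ProbabilityMeasure.tendsto_measure_of_null_frontier_of_tendsto' h1 (E := Set.Iic γ) (by
    rw [frontier_Iic]
    change gaussianReal 0 1 {γ} = 0
    have := nullSingletonClass_gaussianReal (μ := 0) (v := 1) one_ne_zero
    exact measure_singleton γ)
  have h3 := (ENNReal.tendsto_toReal (measure_ne_top _ _)).comp h2
  rw [gaussPhi_eq]
  refine h3.congr fun n => ?_
  exact emp_real (S n) (f n) γ

end Part12

section Part13
open NumberField

open Classical in
/-- the `h`-full ideals of norm at most `x` -/
def hf (h : ℕ) (x : ℝ) : Finset (Ideal (𝓞 K)) := (idl K x).filter (IsHFull K h)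

variable {K} in
lemma mem_hf {h : ℕ} {x : ℝ} {m : Ideal (𝓞 K)} : m ∈ hf K h x ↔ IsHFull K h m ∧ nr m ≤ x := by
  classical
  rw [hf, Finset.mem_filter, mem_idl]
  exact ⟨fun h => ⟨h.2, h.1.2⟩, fun h => ⟨⟨h.1.1, h.2⟩, h.1⟩⟩

lemma hf_nonempty (h : ℕ) (x : ℝ) (hx : 1 ≤ x) : (hf K h x).Nonempty := by
  refine ⟨1, mem_hf.2 ⟨⟨one_ne_zero, fun p hp h1 => ?_⟩, by simpa [nr] using hx⟩⟩
  exact absurd (isUnit_of_dvd_one h1) (fun hu => hp.ne_top (by simpa using hu))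

lemma hf_card (h : ℕ) (hh : 2 ≤ h) : ∃ c : ℝ, 0 < c ∧
    Tendsto (fun x : ℝ => x ^ (-(h : ℝ)⁻¹) * ((hf K h x).card : ℝ)) atTop (𝓝 c) ∧ ∀ t : ℝ,
    Tendsto (fun x : ℝ => ((hf K h x).card : ℂ)⁻¹ *
      ∑ m ∈ hf K h x, gsum K t (Real.log (Real.log x)) m) atTop
      (𝓝 (Complex.exp (-(t : ℂ) ^ 2 / 2))) := by
  classical
  obtain ⟨c, hc, H⟩ := hfull_sum K h hh
  have h0 : Tendsto (fun x : ℝ => ((x ^ (-(h : ℝ)⁻¹) : ℝ) : ℂ) * ((hf K h x).card : ℂ)) atTop (𝓝 (c : ℂ)) := by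
    have := H 0
    simp only [gsum, zero_div, zero_mul, Complex.ofReal_zero, mul_zero, Complex.exp_zero, Finset.sum_const,
      nsmul_eq_mul, mul_one, ne_eq, OfNat.ofNat_ne_zero, not_false_eq_true, zero_pow, neg_zero] at this
    exact this
  refine ⟨c, hc, ?_, fun t => ?_⟩
  · have h1 := (Complex.continuous_re.tendsto _).comp h0
    rw [Complex.ofReal_re] at h1
    refine h1.congr fun x => ?_
    simp only [Function.comp]
    rw [Complex.re_ofReal_mul, Complex.natCast_re]
  · have hc' : (c : ℂ) ≠ 0 := by exact_mod_cast hc.ne'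
    have h1 := (H t).div h0 hc'
    rw [mul_div_cancel_left₀ _ hc'] at h1
    refine h1.congr' ?_
    filter_upwards [eventually_gt_atTop 0] with x hx
    have hx' : ((x ^ (-(h : ℝ)⁻¹) : ℝ) : ℂ) ≠ 0 := by
      have : 0 < x ^ (-(h : ℝ)⁻¹) := by positivity
      exact_mod_cast this.ne'
    rw [Pi.div_apply, mul_div_mul_left _ _ hx', div_eq_inv_mul]
    rfl

open Classical in
lemma hf_dist (h : ℕ) (hh : 2 ≤ h) (γ : ℝ) :
    Tendsto (fun x : ℝ => (((hf K h x).filter fun m => ((omegaI K m : ℝ) - Real.log (Real.log x)) /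
      √(Real.log (Real.log x)) ≤ γ).card : ℝ) / (hf K h x).card) atTop (𝓝 (gaussPhi γ)) := by
  obtain ⟨c, hc, -, H⟩ := hf_card K h hh
  refine tendsto_of_seq_tendsto fun u hu => ?_
  -- replace `u` by `max u 1`
  have hu' : Tendsto (fun n => max (u n) 1) atTop atTop := tendsto_atTop_mono (fun n => le_max_left _ _) hu
  have key := finite_levy (fun n => hf K h (max (u n) 1))
    (fun n m => ((omegaI K m : ℝ) - Real.log (Real.log (max (u n) 1))) / √(Real.log (Real.log (max (u n) 1))))
    (fun n => hf_nonempty K h _ (le_max_right _ _)) (fun t => by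
      refine ((H t).comp hu').congr fun n => ?_
      simp only [Function.comp]
      congr 1
      refine Finset.sum_congr rfl fun m _ => ?_
      rw [gsum]
      congr 3
      ring) γ
  refine key.congr' ?_
  filter_upwards [hu.eventually_ge_atTop 1] with n hn
  rw [max_eq_left hn]
  rfl

lemma hf_small (h : ℕ) (hh : 2 ≤ h) :
    Tendsto (fun x : ℝ => ((hf K h (√x)).card : ℝ) / (hf K h x).card) atTop (𝓝 0) := by
  obtain ⟨c, hc, H, -⟩ := hf_card K h hh
  have h1 := H.comp Real.tendsto_sqrt_atTop
  have h2 := (h1.div H hc.ne').mul ((tendsto_rpow_neg_atTop (y := (h : ℝ)⁻¹) (by positivity)).comp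
    Real.tendsto_sqrt_atTop)
  rw [mul_zero] at h2
  refine h2.congr' ?_
  filter_upwards [eventually_gt_atTop 0] with x hx
  simp only [Function.comp, Pi.div_apply]
  have hs : 0 < √x := Real.sqrt_pos.2 hx
  have e : x ^ (-(h : ℝ)⁻¹) = (√x) ^ (-(h : ℝ)⁻¹) * (√x) ^ (-(h : ℝ)⁻¹) := by
    rw [← Real.mul_rpow hs.le hs.le, Real.mul_self_sqrt hx.le]
  have hp : 0 < (√x) ^ (-(h : ℝ)⁻¹) := by positivity
  rw [e]
  generalize (√x) ^ (-(h : ℝ)⁻¹) = q at *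
  by_cases hz : ((hf K h x).card : ℝ) = 0
  · rw [hz]; simp
  · field_simp

/-- Elementary comparison of the two normalisations. -/
lemma sandwich_aux {L l γ δ w : ℝ} (hl : 0 < l) (h1 : l ≤ L) (h2 : L - 1 ≤ l) (h3 : 1 ≤ √L)
    (h4 : 1 + |γ| ≤ δ * √L) :
    ((w - L) / √L ≤ γ - δ → (w - l) / √l ≤ γ) ∧ ((w - l) / √l ≤ γ → (w - L) / √L ≤ γ + δ) := by
  have hsl : 0 < √l := Real.sqrt_pos.2 hl
  have hsL : 0 < √L := by linarith
  have hle : √l ≤ √L := Real.sqrt_le_sqrt h1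
  have e1 : √l * √l = l := Real.mul_self_sqrt hl.le
  have e2 : √L * √L = L := Real.mul_self_sqrt (by linarith)
  have hd : √L - √l ≤ 1 := by nlinarith
  have hg : |γ * (√L - √l)| ≤ |γ| := by
    rw [abs_mul, abs_of_nonneg (by linarith : 0 ≤ √L - √l)]
    exact mul_le_of_le_one_right (abs_nonneg _) hd
  rw [abs_le] at hg
  rw [div_le_iff₀ hsL, div_le_iff₀ hsl, div_le_iff₀ hsL]
  constructor <;> intro hw <;> nlinarith [hg.1, hg.2]

open Classical in
/-- the counted set -/
def hfA (h : ℕ) (γ x : ℝ) : Finset (Ideal (𝓞 K)) := (hf K h x).filter fun m => 3 ≤ Ideal.absNorm m ∧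
  ((omegaI K m : ℝ) - Real.log (Real.log (Ideal.absNorm m))) /
            Real.sqrt (Real.log (Real.log (Ideal.absNorm m))) ≤ γ

open Classical in
lemma hf_sandwich (h : ℕ) (γ δ : ℝ) (hδ : 0 < δ) : ∀ᶠ x : ℝ in atTop,
    (((hf K h x).filter fun m => ((omegaI K m : ℝ) - Real.log (Real.log x)) /
      √(Real.log (Real.log x)) ≤ γ - δ).card : ℝ) ≤ (hfA K h γ x).card + (hf K h (√x)).card ∧
    ((hfA K h γ x).card : ℝ) ≤ (((hf K h x).filter fun m => ((omegaI K m : ℝ) - Real.log (Real.log x)) /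
      √(Real.log (Real.log x)) ≤ γ + δ).card : ℝ) + (hf K h (√x)).card := by
  have hT : Tendsto (fun x : ℝ => √(Real.log (Real.log x))) atTop atTop := Real.tendsto_sqrt_atTop.comp
        (Real.tendsto_log_atTop.comp Real.tendsto_log_atTop)
  filter_upwards [eventually_ge_atTop 9, hT.eventually_ge_atTop 1, hT.eventually_ge_atTop ((1 + |γ|) / δ)]
    with x hx h3 h4
  rw [div_le_iff₀' hδ] at h4
  have hs3 : 3 ≤ √x := Real.le_sqrt_of_sq_le (by norm_num; exact hx)
  have key : ∀ m ∈ hf K h x, m ∉ hf K h (√x) → 3 ≤ Ideal.absNorm m ∧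
      ((((omegaI K m : ℝ) - Real.log (Real.log x)) / √(Real.log (Real.log x)) ≤ γ - δ →
        ((omegaI K m : ℝ) - Real.log (Real.log (Ideal.absNorm m))) /
            Real.sqrt (Real.log (Real.log (Ideal.absNorm m))) ≤ γ) ∧
       (((omegaI K m : ℝ) - Real.log (Real.log (Ideal.absNorm m))) /
            Real.sqrt (Real.log (Real.log (Ideal.absNorm m))) ≤ γ →
        ((omegaI K m : ℝ) - Real.log (Real.log x)) / √(Real.log (Real.log x)) ≤ γ + δ)) := by
    intro m hm hm'
    obtain ⟨hm1, hm2⟩ := mem_hf.1 hm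
    have hm3 : √x < nr m := by
      by_contra hcon
      exact hm' (mem_hf.2 ⟨hm1, not_lt.1 hcon⟩)
    have hm4 : (3 : ℝ) ≤ nr m := hs3.trans hm3.le
    refine ⟨by exact_mod_cast hm4, ?_⟩
    have he : Real.exp 1 < 3 := by linarith [Real.exp_one_lt_d9]
    have hl1 : 1 < Real.log (nr m) := by
      rw [Real.lt_log_iff_exp_lt (by linarith)]; linarith
    have hlx : Real.log (√x) = Real.log x / 2 := Real.log_sqrt (by linarith)
    have hl2 : Real.log x / 2 ≤ Real.log (nr m) := by
      rw [← hlx]; exact Real.log_le_log (by linarith) hm3.le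
    have hl3 : Real.log (nr m) ≤ Real.log x := Real.log_le_log (by linarith) hm2
    refine sandwich_aux (Real.log_pos hl1) (Real.log_le_log (by linarith) hl3) ?_ h3 h4
    have := Real.log_le_log (by linarith) hl2
    rw [Real.log_div (by linarith) (by norm_num)] at this
    linarith [Real.log_two_lt_d9]
  constructor
  · have hsub : ((hf K h x).filter fun m => ((omegaI K m : ℝ) - Real.log (Real.log x)) /
      √(Real.log (Real.log x)) ≤ γ - δ) ⊆ hfA K h γ x ∪ hf K h (√x) := by
      intro m hm
      obtain ⟨hm1, hm2⟩ := Finset.mem_filter.1 hm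
      rw [Finset.mem_union]
      by_cases hm' : m ∈ hf K h (√x)
      · exact Or.inr hm'
      · obtain ⟨k1, k2, k3⟩ := key m hm1 hm'
        exact Or.inl (Finset.mem_filter.2 ⟨hm1, k1, k2 hm2⟩)
    exact_mod_cast (Finset.card_le_card hsub).trans (Finset.card_union_le _ _)
  · have hsub : hfA K h γ x ⊆ ((hf K h x).filter fun m => ((omegaI K m : ℝ) - Real.log (Real.log x)) /
      √(Real.log (Real.log x)) ≤ γ + δ) ∪ hf K h (√x) := by
      intro m hm
      obtain ⟨hm1, hm2, hm3⟩ := Finset.mem_filter.1 hm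
      rw [Finset.mem_union]
      by_cases hm' : m ∈ hf K h (√x)
      · exact Or.inr hm'
      · obtain ⟨k1, k2, k3⟩ := key m hm1 hm'
        exact Or.inl (Finset.mem_filter.2 ⟨hm1, k3 hm3⟩)
    exact_mod_cast (Finset.card_le_card hsub).trans (Finset.card_union_le _ _)

lemma hfA_tendsto (h : ℕ) (hh : 2 ≤ h) (γ : ℝ) :
    Tendsto (fun x : ℝ => ((hfA K h γ x).card : ℝ) / (hf K h x).card) atTop (𝓝 (gaussPhi γ)) := by
  classical
  rw [tendsto_order]
  constructor
  · intro a ha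
    have hc : Tendsto (fun δ : ℝ => gaussPhi (γ - δ)) (𝓝[>] 0) (𝓝 (gaussPhi (γ - 0))) :=
      ((continuous_gaussPhi.comp (continuous_const.sub continuous_id)).tendsto 0).mono_left nhdsWithin_le_nhds
    rw [sub_zero] at hc
    obtain ⟨δ, hδ1, hδ0⟩ := ((hc.eventually (lt_mem_nhds ha)).and self_mem_nhdsWithin).exists
    have h1 := (hf_dist K h hh (γ - δ)).sub (hf_small K h hh)
    rw [sub_zero] at h1
    filter_upwards [h1.eventually (lt_mem_nhds hδ1), hf_sandwich K h γ δ hδ0] with x h2 h3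
    refine h2.trans_le ?_
    rw [← sub_div]
    exact div_le_div_of_nonneg_right (by linarith [h3.1]) (by positivity)
  · intro a ha
    have hc : Tendsto (fun δ : ℝ => gaussPhi (γ + δ)) (𝓝[>] 0) (𝓝 (gaussPhi (γ + 0))) :=
      ((continuous_gaussPhi.comp (continuous_const.add continuous_id)).tendsto 0).mono_left nhdsWithin_le_nhds
    rw [add_zero] at hc
    obtain ⟨δ, hδ1, hδ0⟩ := ((hc.eventually (gt_mem_nhds ha)).and self_mem_nhdsWithin).exists
    have h1 := (hf_dist K h hh (γ + δ)).add (hf_small K h hh)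
    rw [add_zero] at h1
    filter_upwards [h1.eventually (gt_mem_nhds hδ1), hf_sandwich K h γ δ hδ0] with x h2 h3
    refine lt_of_le_of_lt ?_ h2
    rw [← add_div]
    exact div_le_div_of_nonneg_right h3.2 (by positivity)

end Part13

/-- **The Erdős–Kac theorem for `h`-full ideals of a number field.** -/
theorem erdosKac_hFull_ideals (h : ℕ) (hh : 2 ≤ h) (γ : ℝ) :
    Tendsto (fun x : ℝ =>
      (Nat.card {m : Ideal (NumberField.RingOfIntegers K) //
          IsHFull K h m ∧ (Ideal.absNorm m : ℝ) ≤ x ∧ 3 ≤ Ideal.absNorm m ∧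
          ((omegaI K m : ℝ) - Real.log (Real.log (Ideal.absNorm m))) /
            Real.sqrt (Real.log (Real.log (Ideal.absNorm m))) ≤ γ} : ℝ) /
        (Nat.card {m : Ideal (NumberField.RingOfIntegers K) //
          IsHFull K h m ∧ (Ideal.absNorm m : ℝ) ≤ x} : ℝ))
      atTop (𝓝 (gaussPhi γ)) := by
  classical
  refine (hfA_tendsto K h hh γ).congr fun x => ?_
  rw [Nat.subtype_card (hf K h x) (fun m => mem_hf), Nat.subtype_card (hfA K h γ x)]
  intro m
  rw [hfA, Finset.mem_filter, mem_hf]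
  tauto


end
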